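/- arXiv:1911.09921 — 2 statements merged into one kernel-verified Lean document; each statement's English description precedes it below -/
import Mathlib

section
/- Let D be an unbounded domain in ℂⁿ admitting a psh peak function φ for p = ∞. Then for any neighborhood U of ∞ there exist a neighborhood V ⊂ U of ∞ and a constant m > 0 such that for all z ∈ D ∩ V one has σ_{D∩U}(z) ≥ e^{mφ(z)} σ_D(z). -/
open Set Metric Filter Topology
open scoped Classical

noncomputable section

/-- `ℂⁿ` with the Euclidean norm. -/
abbrev Cn (n : ℕ) := EuclideanSpace ℂ (Fin n)

/-- A function `u : ℂⁿ → [-∞,∞)` (with values in `EReal`) is plurisubharmonic on `D` if it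
is upper semicontinuous on `D` and satisfies the sub-mean-value inequality on every closed
disc in a complex line contained in `D` (stated via continuous majorants on the boundary
circle, so as to handle the value `-∞`). -/
def PSHOn {n : ℕ} (u : Cn n → EReal) (D : Set (Cn n)) : Prop :=
  UpperSemicontinuousOn u D ∧
  ∀ a ∈ D, ∀ b : Cn n, ∀ r : ℝ, 0 < r →
    (∀ t : ℂ, ‖t‖ ≤ r → a + t • b ∈ D) →
    ∀ g : ℝ → ℝ, Continuous g →
      (∀ θ : ℝ, u (a + ((r : ℂ) * Complex.exp (θ * Complex.I)) • b) ≤ (g θ : EReal)) →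
      u a ≤ (((1 / (2 * Real.pi)) * ∫ θ in (0:ℝ)..(2 * Real.pi), g θ : ℝ) : EReal)

/-- `φ` is a psh peak function for the unbounded domain `D` at `p = ∞`:
`φ` is psh on `D`, `φ(z) → 0` as `|z| → ∞` in `D`, and `sup_{D∖U} φ < 0` for every
neighborhood `U` of `∞` (i.e. every set of the cobounded filter). -/
def IsPshPeakFnAtInfty {n : ℕ} (D : Set (Cn n)) (φ : Cn n → EReal) : Prop :=
  PSHOn φ D ∧ Tendsto φ (Bornology.cobounded (Cn n) ⊓ 𝓟 D) (𝓝 (0 : EReal)) ∧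
  ∀ U ∈ Bornology.cobounded (Cn n), ∃ c : ℝ, c < 0 ∧ ∀ z ∈ D \ U, φ z ≤ (c : EReal)

/-- The real exponential extended to `EReal`, with `exp(-∞) = 0` (the value at `⊤`,
irrelevant here, is also set to `0`). -/
def erexp (x : EReal) : ℝ := if x = ⊥ then 0 else if x = ⊤ then 0 else Real.exp x.toReal

/-- The squeezing function of `D`: the supremum of all `r > 0` such that some holomorphic
embedding `f : D → 𝔹ₙ` with `f z = 0` satisfies `r𝔹ₙ ⊆ f(D)` (equal to `0` if no such
embedding exists, by the convention `sSup ∅ = 0` in `ℝ`). -/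
def squeezing {n : ℕ} (D : Set (Cn n)) (z : Cn n) : ℝ :=
  sSup {r : ℝ | 0 < r ∧ ∃ f : Cn n → Cn n, DifferentiableOn ℂ f D ∧ InjOn f D ∧
    MapsTo f D (ball (0 : Cn n) 1) ∧ f z = 0 ∧ ball (0 : Cn n) r ⊆ f '' D}

/-!
Truncate `φ` to a real-valued plurisubharmonic function `ψ`. Let `f` embed `D` into the ball with
`f z = 0` and `r𝔹ₙ ⊆ f(D)`, where `z` is far out, and let `w ∈ D` lie in a fixed bounded set. By
Osgood's theorem `f⁻¹` is holomorphic, so if `|f w| < r`, a disc through `0` and `f w` in `r𝔹ₙ`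
pulls back to a holomorphic disc `g` in `D` with `g 0 = z` and `g a = w`. With `b` the Blaschke
factor vanishing at `a`, the maximum principle for `2Mψ(g) - log |b|`, replaced near its pole by
`Mψ(g) + log |g - w| - log |b| - L`, bounds it by `0` at the origin. This says
`exp(2Mψ(z)) r ≤ |f w|`: every point removed from `f(D)` by restricting to `U` is at least that
far from the origin.

Subharmonicity on discs is used in the viscosity sense. It is derived from the mean value
inequality on complex lines by doubling of variables, without any integration theory for `ψ ∘ g`.
-/

section HolomorphicMaps

open Complex

variable {E F : Type*} [NormedAddCommGroup E] [NormedSpace ℂ E]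
  [NormedAddCommGroup F] [NormedSpace ℂ F]

theorem hasDerivAt_add_smul_const (x v : E) (t : ℂ) :
    HasDerivAt (fun s : ℂ => x + s • v) v t := by
  simpa using ((hasDerivAt_id t).smul_const v).const_add x

theorem hasDerivAt_comp_line {f : E → F} {x v : E} {t : ℂ}
    (hf : DifferentiableAt ℂ f (x + t • v)) :
    HasDerivAt (fun s : ℂ => f (x + s • v)) (fderiv ℂ f (x + t • v) v) t :=
  hf.hasFDerivAt.comp_hasDerivAt t (hasDerivAt_add_smul_const x v t)

theorem exists_ball_norm_fderiv_le {f : E → F} {Ω : Set E} (hΩ : IsOpen Ω)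
    (hf : DifferentiableOn ℂ f Ω) {x : E} (hx : x ∈ Ω) :
    ∃ r > 0, ball x r ⊆ Ω ∧ ∃ C, ∀ y ∈ ball x r, ‖fderiv ℂ f y‖ ≤ C := by
  have hnear : Ω ∩ f ⁻¹' ball (f x) 1 ∈ 𝓝 x :=
    inter_mem (hΩ.mem_nhds hx)
      ((hf.differentiableAt (hΩ.mem_nhds hx)).continuousAt (ball_mem_nhds _ one_pos))
  obtain ⟨r, hr, hsub⟩ := Metric.mem_nhds_iff.1 hnear
  refine ⟨r / 2, half_pos hr, (ball_subset_ball (by linarith)).trans fun y hy => (hsub hy).1,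
    2 / (r / 2), fun y hy => ?_⟩
  have hy' : ball y (r / 2) ⊆ ball x r := ball_subset_ball' (by linarith [mem_ball.1 hy])
  refine norm_fderiv_le_div_of_mapsTo_ball (hf.mono fun z hz => (hsub (hy' hz)).1)
    (fun z hz => ?_) (half_pos hr)
  have hfz : dist (f z) (f x) < 1 := (hsub (hy' hz)).2
  have hfy : dist (f y) (f x) < 1 := (hsub (hy' (mem_ball_self (half_pos hr)))).2
  exact mem_closedBall.2 (by linarith [dist_triangle_right (f z) (f y) (f x)])

theorem fderiv_apply_eq_circleIntegral [CompleteSpace F] {f : E → F} {Ω : Set E} (hΩ : IsOpen Ω)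
    (hf : DifferentiableOn ℂ f Ω) {x v : E} {τ : ℝ} (hτ : 0 < τ)
    (hmem : ∀ t ∈ closedBall (0 : ℂ) τ, x + t • v ∈ Ω) :
    fderiv ℂ f x v =
      (2 * Real.pi * I : ℂ)⁻¹ • ∮ t in C(0, τ), ((t - 0) ^ 2)⁻¹ • f (x + t • v) := by
  have hline : Continuous fun t : ℂ => x + t • v := by fun_prop
  have hdiff : DifferentiableOn ℂ (fun t : ℂ => f (x + t • v)) ((fun t : ℂ => x + t • v) ⁻¹' Ω) :=
    fun t ht => (hasDerivAt_comp_line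
      (hf.differentiableAt (hΩ.mem_nhds ht))).differentiableAt.differentiableWithinAt
  rw [two_pi_I_inv_smul_circleIntegral_sub_sq_inv_smul_of_differentiable (hΩ.preimage hline)
    hmem hdiff (mem_ball_self hτ)]
  have h0 : x + (0 : ℂ) • v ∈ Ω := hmem 0 (mem_closedBall_self hτ.le)
  simpa using (hasDerivAt_comp_line (hf.differentiableAt (hΩ.mem_nhds h0))).deriv.symm

theorem differentiableAt_circleIntegral_smul_comp [FiniteDimensional ℂ E] [FiniteDimensional ℂ F]
    {f : E → F} {Ω : Set E} (hΩ : IsOpen Ω) (hf : DifferentiableOn ℂ f Ω) {x v : E} {r τ C : ℝ}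
    (hr : 0 < r) (hτ : 0 < τ)
    (hmem : ∀ y ∈ ball x r, ∀ t ∈ closedBall (0 : ℂ) τ, y + t • v ∈ Ω)
    (hC : ∀ y ∈ ball x r, ∀ t ∈ closedBall (0 : ℂ) τ, ‖fderiv ℂ f (y + t • v)‖ ≤ C)
    {k : ℂ → ℂ} (hk : ContinuousOn k (sphere 0 τ)) :
    DifferentiableAt ℂ (fun y => ∮ t in C(0, τ), k t • f (y + t • v)) x := by
  have hcircle : ∀ θ, circleMap 0 τ θ ∈ closedBall (0 : ℂ) τ :=
    circleMap_mem_closedBall 0 hτ.le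
  have hker : Continuous fun θ => deriv (circleMap 0 τ) θ * k (circleMap 0 τ θ) := by
    simp only [deriv_circleMap]
    exact ((continuous_circleMap 0 τ).mul continuous_const).mul
      (hk.comp_continuous (continuous_circleMap 0 τ) (circleMap_mem_sphere 0 hτ.le))
  have hder : ∀ θ, ∀ y ∈ ball x r, HasFDerivAt (fun y => f (y + circleMap 0 τ θ • v))
      (fderiv ℂ f (y + circleMap 0 τ θ • v)) y := fun θ y hy =>
    (hasFDerivAt_comp_add_right _).2
      (hf.differentiableAt (hΩ.mem_nhds (hmem y hy _ (hcircle θ)))).hasFDerivAt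
  have hcont : ∀ y ∈ ball x r, Continuous fun θ => (deriv (circleMap 0 τ) θ *
      k (circleMap 0 τ θ)) • f (y + circleMap 0 τ θ • v) := fun y hy =>
    hker.smul (hf.continuousOn.comp_continuous (by fun_prop) fun θ => hmem y hy _ (hcircle θ))
  simp only [circleIntegral, smul_smul]
  refine (intervalIntegral.hasFDerivAt_integral_of_dominated_of_fderiv_le
    (F' := fun y θ => (deriv (circleMap 0 τ) θ * k (circleMap 0 τ θ)) •
      fderiv ℂ f (y + circleMap 0 τ θ • v))
    (bound := fun θ => ‖deriv (circleMap 0 τ) θ * k (circleMap 0 τ θ)‖ * C)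
    (ball_mem_nhds x hr) ?_ ?_ ?_ ?_ ?_ ?_).differentiableAt
  · filter_upwards [ball_mem_nhds x hr] with y hy using (hcont y hy).aestronglyMeasurable
  · exact (hcont x (mem_ball_self hr)).intervalIntegrable _ _
  · have : ProperSpace E := FiniteDimensional.proper ℂ E
    have : CompleteSpace F := FiniteDimensional.complete ℂ F
    let _ : MeasurableSpace E := borel E
    have : BorelSpace E := ⟨rfl⟩
    have hline : Continuous fun θ => x + circleMap 0 τ θ • v := by fun_prop
    exact (hker.measurable.smul
      ((measurable_fderiv ℂ f).comp hline.measurable)).aestronglyMeasurable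
  · refine .of_forall fun θ _ y hy => ?_
    rw [norm_smul]
    gcongr
    exact hC y hy _ (hcircle θ)
  · exact (hker.norm.mul continuous_const).intervalIntegrable _ _
  · exact .of_forall fun θ _ y hy => (hder θ y hy).const_smul _

variable [FiniteDimensional ℂ E] [FiniteDimensional ℂ F]

theorem differentiableOn_fderiv_apply {f : E → F} {Ω : Set E} (hΩ : IsOpen Ω)
    (hf : DifferentiableOn ℂ f Ω) (v : E) : DifferentiableOn ℂ (fun x => fderiv ℂ f x v) Ω := by
  intro x hx
  have : CompleteSpace F := FiniteDimensional.complete ℂ F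
  obtain ⟨r, hr, hsub, C, hC⟩ := exists_ball_norm_fderiv_le hΩ hf hx
  set τ : ℝ := r / 2 / (‖v‖ + 1) with hτ
  have hτ0 : 0 < τ := by positivity
  have hτv : τ * ‖v‖ ≤ r / 2 := by
    rw [hτ, div_mul_eq_mul_div, div_le_iff₀ (by positivity)]
    nlinarith [norm_nonneg v]
  have hmem : ∀ y ∈ ball x (r / 2), ∀ t ∈ closedBall (0 : ℂ) τ, y + t • v ∈ ball x r := by
    intro y hy t ht
    have htv : ‖t • v‖ ≤ r / 2 := by
      rw [norm_smul]
      exact (mul_le_mul_of_nonneg_right (mem_closedBall_zero_iff.1 ht) (norm_nonneg v)).trans hτv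
    rw [mem_ball_iff_norm] at hy ⊢
    calc ‖y + t • v - x‖ = ‖(y - x) + t • v‖ := by congr 1; abel
      _ ≤ ‖y - x‖ + ‖t • v‖ := norm_add_le _ _
      _ < r := by linarith
  have hint := (differentiableAt_circleIntegral_smul_comp hΩ hf (half_pos hr) hτ0
    (fun y hy t ht => hsub (hmem y hy t ht)) (fun y hy t ht => hC _ (hmem y hy t ht))
    (k := fun t => ((t - 0) ^ 2)⁻¹) (ContinuousOn.inv₀ (by fun_prop) fun t ht =>
      pow_ne_zero 2 (sub_ne_zero.2 (ne_of_mem_sphere ht hτ0.ne')))).const_smul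
      (2 * Real.pi * I : ℂ)⁻¹
  refine (hint.congr_of_eventuallyEq ?_).differentiableWithinAt
  filter_upwards [ball_mem_nhds x (half_pos hr)] with y hy
  exact fderiv_apply_eq_circleIntegral hΩ hf hτ0 fun t ht => hsub (hmem y hy t ht)

theorem contDiffAt_one_of_differentiableOn {f : E → F} {Ω : Set E} (hΩ : IsOpen Ω)
    (hf : DifferentiableOn ℂ f Ω) {x : E} (hx : x ∈ Ω) : ContDiffAt ℂ 1 f x :=
  contDiffAt_one_iff.2 ⟨fderiv ℂ f, Ω, hΩ.mem_nhds hx,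
    continuousOn_clm_apply.2 fun v => (differentiableOn_fderiv_apply hΩ hf v).continuousOn,
    fun _ hy => (hf.differentiableAt (hΩ.mem_nhds hy)).hasFDerivAt⟩

theorem hasStrictFDerivAt_of_differentiableOn {f : E → F} {Ω : Set E} (hΩ : IsOpen Ω)
    (hf : DifferentiableOn ℂ f Ω) {x : E} (hx : x ∈ Ω) : HasStrictFDerivAt f (fderiv ℂ f x) x :=
  (contDiffAt_one_of_differentiableOn hΩ hf hx).hasStrictFDerivAt one_ne_zero

end HolomorphicMaps

section InjectiveHolomorphicMaps

variable {E F : Type*} [NormedAddCommGroup E] [NormedSpace ℂ E]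
  [NormedAddCommGroup F] [NormedSpace ℂ F]

theorem not_eventually_eq_of_injOn [Nontrivial E] {X : Type*} {f : E → X} {Ω : Set E} {p : E}
    (hΩ : Ω ∈ 𝓝 p) (hinj : InjOn f Ω) : ¬ ∀ᶠ x in 𝓝 p, f x = f p := by
  intro hconst
  have : NeBot (𝓝[≠] p) := Module.punctured_nhds_neBot ℂ E p
  have hpunct : ∀ᶠ _ in 𝓝[≠] p, False := by
    filter_upwards [hconst.filter_mono nhdsWithin_le_nhds, mem_nhdsWithin_of_mem_nhds hΩ,
      self_mem_nhdsWithin] with x hx hxΩ hne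
    exact hne (hinj hxΩ (mem_of_mem_nhds hΩ) hx)
  exact hpunct.exists.elim fun _ h => h

theorem not_eventually_fderiv_eq_zero_of_injOn [Nontrivial E] {f : E → F} {Ω : Set E} {p : E}
    (hΩ : Ω ∈ 𝓝 p) (hf : DifferentiableOn ℂ f Ω) (hinj : InjOn f Ω) :
    ¬ ∀ᶠ x in 𝓝 p, fderiv ℂ f x = 0 := by
  intro hzero
  obtain ⟨r, hr, hsub⟩ := Metric.mem_nhds_iff.1 (inter_mem hΩ hzero)
  refine not_eventually_eq_of_injOn hΩ hinj ?_
  filter_upwards [ball_mem_nhds p hr] with x hx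
  exact isOpen_ball.is_const_of_fderiv_eq_zero (convex_ball p r).isPreconnected
    (hf.mono fun y hy => (hsub hy).1) (fun y hy => (hsub hy).2) hx (mem_ball_self hr)

section OneVariable

variable {u : ℂ → ℂ} {W : Set ℂ} {z : ℂ}

theorem nhds_le_map_nhds_of_injOn (hW : IsOpen W) (hu : DifferentiableOn ℂ u W)
    (hinj : InjOn u W) (hz : z ∈ W) : 𝓝 (u z) ≤ map u (𝓝 z) :=
  (hu.analyticAt (hW.mem_nhds hz)).eventually_constant_or_nhds_le_map_nhds.resolve_left
    (not_eventually_eq_of_injOn (hW.mem_nhds hz) hinj)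

theorem continuousAt_invFunOn_of_injOn (hW : IsOpen W) (hu : DifferentiableOn ℂ u W)
    (hinj : InjOn u W) (hz : z ∈ W) : ContinuousAt (Function.invFunOn u W) (u z) := by
  have hid : Function.invFunOn u W ∘ u =ᶠ[𝓝 z] id := by
    filter_upwards [hW.mem_nhds hz] with y hy using hinj.leftInvOn_invFunOn hy
  calc map (Function.invFunOn u W) (𝓝 (u z))
      ≤ map (Function.invFunOn u W) (map u (𝓝 z)) :=
        map_mono (nhds_le_map_nhds_of_injOn hW hu hinj hz)
    _ = 𝓝 z := by rw [Filter.map_map, map_congr hid, map_id]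
    _ = 𝓝 (Function.invFunOn u W (u z)) := by rw [hinj.leftInvOn_invFunOn hz]

theorem differentiableAt_invFunOn_of_deriv_ne_zero (hW : IsOpen W)
    (hu : DifferentiableOn ℂ u W) (hinj : InjOn u W) (hz : z ∈ W) (hdu : deriv u z ≠ 0) :
    DifferentiableAt ℂ (Function.invFunOn u W) (u z) := by
  have hright : ∀ᶠ y in 𝓝 (u z), u (Function.invFunOn u W y) = y := by
    refine nhds_le_map_nhds_of_injOn hW hu hinj hz (mem_map.2 ?_)
    filter_upwards [hW.mem_nhds hz] with y hy
    exact congrArg u (hinj.leftInvOn_invFunOn hy)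
  refine (HasDerivAt.of_local_left_inverse (f := u) (f' := deriv u z)
    (continuousAt_invFunOn_of_injOn hW hu hinj hz) ?_ hdu hright).differentiableAt
  rw [hinj.leftInvOn_invFunOn hz]
  exact (hu.differentiableAt (hW.mem_nhds hz)).hasDerivAt

theorem eventually_deriv_ne_zero_of_injOn (hW : IsOpen W) (hu : DifferentiableOn ℂ u W)
    (hinj : InjOn u W) (hz : z ∈ W) : ∀ᶠ s in 𝓝[≠] z, deriv u s ≠ 0 := by
  refine (hu.analyticAt (hW.mem_nhds hz)).deriv.eventually_eq_zero_or_eventually_ne_zero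
    |>.resolve_left fun hzero => ?_
  refine not_eventually_fderiv_eq_zero_of_injOn (hW.mem_nhds hz) hu hinj ?_
  filter_upwards [hzero] with s hs
  ext
  simpa using hs

-- The inverse is continuous at `u z` and holomorphic off `u z`, so the singularity is removable.
theorem deriv_ne_zero_of_injOn (hW : IsOpen W) (hu : DifferentiableOn ℂ u W)
    (hinj : InjOn u W) (hz : z ∈ W) : deriv u z ≠ 0 := by
  have hleft : ∀ s ∈ W, Function.invFunOn u W (u s) = s := fun s hs => hinj.leftInvOn_invFunOn hs
  have hpunct : ∀ᶠ y in 𝓝[≠] (u z), DifferentiableAt ℂ (Function.invFunOn u W) y := by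
    have hev := eventually_nhdsWithin_iff.1 (eventually_deriv_ne_zero_of_injOn hW hu hinj hz)
    refine eventually_nhdsWithin_iff.2
      (nhds_le_map_nhds_of_injOn hW hu hinj hz (mem_map.2 ?_))
    filter_upwards [hev, hW.mem_nhds hz] with s hs hsW hne
    exact differentiableAt_invFunOn_of_deriv_ne_zero hW hu hinj hsW
      (hs fun hsz => hne (congrArg u hsz))
  have hinv : DifferentiableAt ℂ (Function.invFunOn u W) (u z) :=
    (Complex.analyticAt_of_differentiable_on_punctured_nhds_of_continuousAt hpunct
      (continuousAt_invFunOn_of_injOn hW hu hinj hz)).differentiableAt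
  have hcomp : HasDerivAt (fun s => Function.invFunOn u W (u s))
      (deriv (Function.invFunOn u W) (u z) * deriv u z) z :=
    hinv.hasDerivAt.comp z (hu.differentiableAt (hW.mem_nhds hz)).hasDerivAt
  have hid : HasDerivAt (fun s => Function.invFunOn u W (u s)) 1 z :=
    (hasDerivAt_id z).congr_of_eventuallyEq
      (by filter_upwards [hW.mem_nhds hz] with s hs using hleft s hs)
  exact right_ne_zero_of_mul (hcomp.unique hid ▸ one_ne_zero)

end OneVariable

end InjectiveHolomorphicMaps

section JacobianDeterminant

variable {E F : Type*} [NormedAddCommGroup E] [NormedSpace ℂ E]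
  [NormedAddCommGroup F] [NormedSpace ℂ F] {ι : Type*} [Fintype ι]

/-- The complex Jacobian determinant of `f : E → F` with respect to a pair of bases; it detects
the points at which the derivative of `f` fails to be invertible. -/
def jacobianDet (bE : Module.Basis ι ℂ E) (bF : Module.Basis ι ℂ F) (f : E → F) (x : E) : ℂ :=
  (LinearMap.toMatrix bE bF (fderiv ℂ f x : E →ₗ[ℂ] F)).det

variable (bE : Module.Basis ι ℂ E) (bF : Module.Basis ι ℂ F) {f : E → F}

theorem differentiableOn_jacobianDet {Ω : Set E} (hΩ : IsOpen Ω) (hf : DifferentiableOn ℂ f Ω) :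
    DifferentiableOn ℂ (jacobianDet bE bF f) Ω := by
  have : FiniteDimensional ℂ E := .of_basis bE
  have : FiniteDimensional ℂ F := .of_basis bF
  have hentry : ∀ i j, DifferentiableOn ℂ (fun x =>
      LinearMap.toMatrix bE bF (fderiv ℂ f x : E →ₗ[ℂ] F) i j) Ω := fun i j => by
    simp only [LinearMap.toMatrix_apply]
    exact (bF.coord i).toContinuousLinearMap.differentiable.comp_differentiableOn
      (differentiableOn_fderiv_apply hΩ hf (bE j))
  unfold jacobianDet
  simp only [Matrix.det_apply']
  exact .fun_sum fun σ _ => .const_mul (fun x hx => (HasFDerivWithinAt.finsetProd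
    fun i _ => (hentry (σ i) i x hx).hasFDerivWithinAt).differentiableWithinAt) _

theorem jacobianDet_ne_zero_iff {x : E} :
    jacobianDet bE bF f x ≠ 0 ↔ Function.Injective (fderiv ℂ f x) := by
  have : FiniteDimensional ℂ E := .of_basis bE
  have : FiniteDimensional ℂ F := .of_basis bF
  have hfin : Module.finrank ℂ E = Module.finrank ℂ F := by
    rw [Module.finrank_eq_card_basis bE, Module.finrank_eq_card_basis bF]
  exact ⟨fun h => (LinearEquiv.ofIsUnitDet (v := bE) (v' := bF) h.isUnit).injective, fun h =>
    ((LinearEquiv.ofInjectiveOfFinrankEq (fderiv ℂ f x : E →ₗ[ℂ] F) h hfin).isUnit_det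
      bE bF).ne_zero⟩

end JacobianDeterminant

section HyperplaneSlices

theorem exists_straightening {𝕜 E : Type*} [RCLike 𝕜] [NormedAddCommGroup E] [NormedSpace 𝕜 E]
    [CompleteSpace E] {g : E → 𝕜} {p : E} (hg : ContDiffAt 𝕜 1 g p) (hdg : fderiv 𝕜 g p ≠ 0) :
    ∃ Ψ : E → E, ContDiffAt 𝕜 1 Ψ p ∧ Ψ p = p ∧ HasFDerivAt Ψ (.id 𝕜 E) p ∧
      ∃ W ∈ 𝓝 p, InjOn Ψ W ∧ ∀ y ∈ W, g (Ψ y) = g p + fderiv 𝕜 g p (y - p) := by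
  set g' := fderiv 𝕜 g p
  obtain ⟨u₀, hu₀⟩ : ∃ u₀, g' u₀ ≠ 0 := by
    by_contra! h
    exact hdg (ContinuousLinearMap.ext h)
  set u : E := (g' u₀)⁻¹ • u₀
  have hu : g' u = 1 := by simp [u, hu₀]
  set Φ : E → E := fun x => x + (g x - g p - g' (x - p)) • u with hΦ
  have hΦp : Φ p = p := by simp [hΦ]
  have hΦcd : ContDiffAt 𝕜 1 Φ p := by fun_prop
  have hΦd : HasFDerivAt Φ (ContinuousLinearEquiv.refl 𝕜 E : E →L[𝕜] E) p := by
    have hgd : HasFDerivAt g g' p := (hg.differentiableAt one_ne_zero).hasFDerivAt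
    have hlin : HasFDerivAt (fun x => g' (x - p)) g' p :=
      g'.hasFDerivAt.comp p ((hasFDerivAt_id p).sub_const p)
    refine ((hasFDerivAt_id p).add
      (((hgd.sub_const (g p)).sub hlin).smul_const u)).congr_fderiv ?_
    ext
    simp
  have hstrict := hΦcd.hasStrictFDerivAt' hΦd one_ne_zero
  set Ψ := hstrict.localInverse Φ _ p
  have hΨcd : ContDiffAt 𝕜 1 Ψ (Φ p) := hΦcd.to_localInverse hΦd one_ne_zero
  have hΨΦ : Ψ (Φ p) = p := hstrict.localInverse_apply_image
  have hΨd : HasFDerivAt Ψ (.id 𝕜 E) (Φ p) := hstrict.to_localInverse.hasFDerivAt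
  have hright : ∀ᶠ y in 𝓝 (Φ p), Φ (Ψ y) = y := hstrict.eventually_right_inverse
  rw [hΦp] at hΨcd hΨΦ hΨd hright
  refine ⟨Ψ, hΨcd, hΨΦ, hΨd, _, hright, ?_, ?_⟩
  · intro y hy z hz hyz
    rw [← show Φ _ = y from hy, hyz, show Φ _ = z from hz]
  · intro y hy
    have h := congrArg g' (show Φ _ = y from hy)
    simp only [hΦ, map_add, map_smul, hu, smul_eq_mul, mul_one, map_sub] at h ⊢
    linear_combination h

variable {E : Type*} [NormedAddCommGroup E] [NormedSpace ℂ E] [FiniteDimensional ℂ E]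

theorem exists_straightening_of_differentiableOn {g : E → ℂ} {Ω : Set E} (hΩ : IsOpen Ω)
    (hg : DifferentiableOn ℂ g Ω) {p : E} (hp : p ∈ Ω) (hdg : fderiv ℂ g p ≠ 0) :
    ∃ (Ψ : E → E) (W : Set E), IsOpen W ∧ p ∈ W ∧ DifferentiableOn ℂ Ψ W ∧ MapsTo Ψ W Ω ∧
      InjOn Ψ W ∧ Ψ p = p ∧ fderiv ℂ Ψ p = .id ℂ E ∧
      ∀ y ∈ W, g (Ψ y) = g p + fderiv ℂ g p (y - p) := by
  have : CompleteSpace E := FiniteDimensional.complete ℂ E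
  obtain ⟨Ψ, hΨ, hΨp, hΨd, W₀, hW₀, hΨinj, hΨg⟩ :=
    exists_straightening (contDiffAt_one_of_differentiableOn hΩ hg hp) hdg
  have hΨΩ : ∀ᶠ y in 𝓝 p, Ψ y ∈ Ω := hΨ.continuousAt.eventually_mem
    (by rw [hΨp]; exact hΩ.mem_nhds hp)
  have hΨdiff : ∀ᶠ y in 𝓝 p, DifferentiableAt ℂ Ψ y :=
    (hΨ.eventually (by simp)).mono fun y hy => hy.differentiableAt one_ne_zero
  obtain ⟨W, hW, hWo, hpW⟩ := _root_.eventually_nhds_iff.1 ((hΨΩ.and hΨdiff).and hW₀)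
  exact ⟨Ψ, W, hWo, hpW, fun y hy => (hW y hy).1.2.differentiableWithinAt,
    fun y hy => (hW y hy).1.1, hΨinj.mono fun y hy => (hW y hy).2, hΨp, hΨd.fderiv,
    fun y hy => hΨg y (hW y hy).2⟩

variable {F : Type*} [NormedAddCommGroup F] [NormedSpace ℂ F]

-- Straightening the component `ℓ ∘ f` turns `f` into a map that sends the affine hyperplane
-- `p + ker (ℓ ∘ df)` into a translate of `ker ℓ`.
theorem exists_injOn_ker_slice {f : E → F} {Ω : Set E} (hΩ : IsOpen Ω)
    (hf : DifferentiableOn ℂ f Ω) (hinj : InjOn f Ω) {p : E} (hp : p ∈ Ω) (ℓ : F →L[ℂ] ℂ)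
    (hℓ : ℓ.comp (fderiv ℂ f p) ≠ 0) :
    ∃ (k : (ℓ.comp (fderiv ℂ f p)).ker → ℓ.ker) (W : Set (ℓ.comp (fderiv ℂ f p)).ker),
      IsOpen W ∧ 0 ∈ W ∧ DifferentiableOn ℂ k W ∧ InjOn k W ∧
        ∀ v : (ℓ.comp (fderiv ℂ f p)).ker, fderiv ℂ f p v = 0 → fderiv ℂ k 0 v = 0 := by
  have hfd : ∀ x ∈ Ω, DifferentiableAt ℂ f x := fun x hx => hf.differentiableAt (hΩ.mem_nhds hx)
  set g' : E →L[ℂ] ℂ := ℓ.comp (fderiv ℂ f p)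
  have hdg : fderiv ℂ (fun x => ℓ (f x)) p = g' :=
    (ℓ.hasFDerivAt.comp p (hfd p hp).hasFDerivAt).fderiv
  obtain ⟨Ψ, W, hW, hpW, hΨ, hΨΩ, hΨinj, hΨp, hΨd, hΨg⟩ :=
    exists_straightening_of_differentiableOn hΩ (g := fun x => ℓ (f x))
      (ℓ.differentiable.comp_differentiableOn hf) hp (hdg ▸ hℓ)
  rw [hdg] at hΨg
  obtain ⟨P, hP⟩ := ℓ.ker_closedComplemented_of_finiteDimensional_range
  set i : g'.ker → E := fun y => p + y with hi
  have hi0 : i 0 = p := by simp [hi]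
  have hid : ∀ y, HasFDerivAt i g'.ker.subtypeL y := fun y =>
    g'.ker.subtypeL.hasFDerivAt.const_add p
  have hval : ∀ y ∈ i ⁻¹' W, (P (f (Ψ (i y)) - f p) : F) = f (Ψ (i y)) - f p := fun y hy => by
    have hmem : f (Ψ (i y)) - f p ∈ ℓ.ker := by
      have hy0 : g' y = 0 := y.2
      have h := hΨg _ hy
      rw [show i y - p = y from add_sub_cancel_left p _, hy0, add_zero] at h
      exact (map_sub ℓ _ _).trans (sub_eq_zero.2 h)
    exact congrArg Subtype.val (hP ⟨_, hmem⟩)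
  have hkd : ∀ y ∈ i ⁻¹' W, HasFDerivAt (fun y => P (f (Ψ (i y)) - f p)) (P.comp
      ((fderiv ℂ f (Ψ (i y))).comp ((fderiv ℂ Ψ (i y)).comp g'.ker.subtypeL))) y := fun y hy =>
    P.hasFDerivAt.comp y (((hfd _ (hΨΩ hy)).hasFDerivAt.comp y
      ((hΨ.differentiableAt (hW.mem_nhds hy)).hasFDerivAt.comp y (hid y))).sub_const _)
  have h0 : (0 : g'.ker) ∈ i ⁻¹' W := by rwa [mem_preimage, hi0]
  refine ⟨fun y => P (f (Ψ (i y)) - f p), i ⁻¹' W, hW.preimage (by fun_prop), h0,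
    fun y hy => (hkd y hy).differentiableAt.differentiableWithinAt, fun y hy z hz hyz => ?_,
    fun v hv => ?_⟩
  · have hfyz : f (Ψ (i y)) = f (Ψ (i z)) := by
      have h := congrArg Subtype.val hyz
      rw [hval y hy, hval z hz] at h
      exact sub_left_injective h
    exact Subtype.ext (add_left_cancel (hΨinj hy hz (hinj (hΨΩ hy) (hΨΩ hz) hfyz)))
  · rw [(hkd 0 h0).fderiv, hi0, hΨp, hΨd]
    simp [hv]

end HyperplaneSlices

section ZeroSets

variable {E F : Type*} [NormedAddCommGroup E] [NormedSpace ℂ E]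
  [NormedAddCommGroup F] [NormedSpace ℂ F]

theorem analyticAt_comp_line [CompleteSpace F] {J : E → F} {Ω : Set E} (hΩ : IsOpen Ω)
    (hJ : DifferentiableOn ℂ J Ω) {x e : E} {t : ℂ} (hx : x + t • e ∈ Ω) :
    AnalyticAt ℂ (fun s : ℂ => J (x + s • e)) t := by
  rw [Complex.analyticAt_iff_eventually_differentiableAt]
  have hcont : ContinuousAt (fun s : ℂ => x + s • e) t := by fun_prop
  filter_upwards [hcont.preimage_mem_nhds (hΩ.mem_nhds hx)] with s hs
  exact (hasDerivAt_comp_line (hJ.differentiableAt (hΩ.mem_nhds hs))).differentiableAt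

theorem exists_line_not_eventually_eq_zero [CompleteSpace F] {J : E → F} {Ω : Set E} {p : E}
    (hΩ : Ω ∈ 𝓝 p) (hJ : DifferentiableOn ℂ J Ω) (hne : ¬ ∀ᶠ x in 𝓝 p, J x = 0) :
    ∃ e : E, ¬ ∀ᶠ s in 𝓝 (0 : ℂ), J (p + s • e) = 0 := by
  obtain ⟨r, hr, hrΩ⟩ := Metric.mem_nhds_iff.1 hΩ
  obtain ⟨x, hx, hxr⟩ := ((Filter.not_eventually.1 hne).and_eventually (ball_mem_nhds p hr)).exists
  refine ⟨x - p, fun h => hx ?_⟩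
  set S : Set ℂ := (fun s : ℂ => p + s • (x - p)) ⁻¹' ball p r
  have hconv : Convex ℝ S := by
    have hS : S = ((LinearMap.toSpanSingleton ℂ E (x - p)).restrictScalars ℝ) ⁻¹' ball 0 r := by
      ext s
      simp [S]
    exact hS ▸ (convex_ball 0 r).linear_preimage _
  have hzero := AnalyticOnNhd.eqOn_zero_of_preconnected_of_eventuallyEq_zero
    (fun s hs => analyticAt_comp_line isOpen_ball (hJ.mono hrΩ) hs) hconv.isPreconnected
    (show (0 : ℂ) ∈ S by simpa [S] using hr) h
  simpa using hzero (show (1 : ℂ) ∈ S by simpa [S] using hxr)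

/-- The `j`-th iterated derivative of `J` in the fixed direction `e`, as a function on the whole
space. Iterating `fderiv` along `e` rather than using `iteratedFDeriv` makes the recursion
definitional. -/
def iterDirDeriv (e : E) (j : ℕ) (J : E → F) : E → F :=
  (fun u x => fderiv ℂ u x e)^[j] J

theorem iterDirDeriv_succ (e : E) (j : ℕ) (J : E → F) :
    iterDirDeriv e (j + 1) J = fun x => fderiv ℂ (iterDirDeriv e j J) x e :=
  Function.iterate_succ_apply' _ _ _

variable [FiniteDimensional ℂ E] [FiniteDimensional ℂ F]

theorem differentiableOn_iterDirDeriv {J : E → F} {Ω : Set E} (hΩ : IsOpen Ω)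
    (hJ : DifferentiableOn ℂ J Ω) (e : E) (j : ℕ) :
    DifferentiableOn ℂ (iterDirDeriv e j J) Ω := by
  induction j with
  | zero => exact hJ
  | succ j ih =>
    rw [iterDirDeriv_succ]
    exact differentiableOn_fderiv_apply hΩ ih e

theorem iteratedDeriv_comp_line {J : E → F} {Ω : Set E} (hΩ : IsOpen Ω)
    (hJ : DifferentiableOn ℂ J Ω) {x e : E} (j : ℕ) {t : ℂ} (ht : x + t • e ∈ Ω) :
    iteratedDeriv j (fun s : ℂ => J (x + s • e)) t = iterDirDeriv e j J (x + t • e) := by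
  induction j generalizing t with
  | zero => rw [iteratedDeriv_zero]; rfl
  | succ j ih =>
    have hcont : ContinuousAt (fun s : ℂ => x + s • e) t := by fun_prop
    have heq : iteratedDeriv j (fun s : ℂ => J (x + s • e)) =ᶠ[𝓝 t]
        fun s => iterDirDeriv e j J (x + s • e) :=
      (hcont.eventually_mem (hΩ.mem_nhds ht)).mono fun s hs => ih hs
    rw [iteratedDeriv_succ, iterDirDeriv_succ, heq.deriv_eq]
    exact (hasDerivAt_comp_line ((differentiableOn_iterDirDeriv hΩ hJ e j).differentiableAt
      (hΩ.mem_nhds ht))).deriv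

theorem eventually_comp_line_eq_zero_iff {J : E → F} {Ω : Set E} (hΩ : IsOpen Ω)
    (hJ : DifferentiableOn ℂ J Ω) {x e : E} (hx : x ∈ Ω) :
    (∀ᶠ s in 𝓝 (0 : ℂ), J (x + s • e) = 0) ↔ ∀ j, iterDirDeriv e j J x = 0 := by
  have : CompleteSpace F := FiniteDimensional.complete ℂ F
  have hx0 : x + (0 : ℂ) • e ∈ Ω := by simpa using hx
  have hderiv : ∀ j, iteratedDeriv j (fun s : ℂ => J (x + s • e)) 0 = iterDirDeriv e j J x :=
    fun j => by simpa using iteratedDeriv_comp_line hΩ hJ j hx0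
  rw [← analyticOrderAt_eq_top, ENat.eq_top_iff_forall_ge]
  simp only [natCast_le_analyticOrderAt_iff_iteratedDeriv_eq_zero (analyticAt_comp_line hΩ hJ hx0),
    hderiv]
  exact ⟨fun h j => h (j + 1) j j.lt_succ_self, fun h _ i _ => h i⟩

-- Take a zero `x` of `J` at which the order of vanishing in the direction `e` is minimal, say
-- `l + 1`; then `q` is the `l`-th derivative of `J` in that direction.
theorem exists_vanishing_on_zeros_of_fderiv_ne_zero {J : E → F} {Ω : Set E} (hΩ : IsOpen Ω)
    (hJ : DifferentiableOn ℂ J Ω) {p e : E} (hp : p ∈ Ω) (hJp : J p = 0)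
    (hne : ¬ ∀ᶠ s in 𝓝 (0 : ℂ), J (p + s • e) = 0) :
    ∃ q : E → F, DifferentiableOn ℂ q Ω ∧ (∀ y ∈ Ω, J y = 0 → q y = 0) ∧
      ∃ x ∈ Ω, J x = 0 ∧ fderiv ℂ q x e ≠ 0 ∧ ∀ᶠ s in 𝓝[≠] (0 : ℂ), J (x + s • e) ≠ 0 := by
  have : CompleteSpace F := FiniteDimensional.complete ℂ F
  have hex : ∃ j, ∃ x ∈ Ω, J x = 0 ∧ iterDirDeriv e j J x ≠ 0 := by
    rw [eventually_comp_line_eq_zero_iff hΩ hJ hp] at hne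
    push Not at hne
    exact hne.imp fun j hj => ⟨p, hp, hJp, hj⟩
  obtain ⟨x, hx, hJx, hxne⟩ := Nat.find_spec hex
  obtain ⟨l, hl⟩ : ∃ l, Nat.find hex = l + 1 :=
    Nat.exists_eq_succ_of_ne_zero fun h => by rw [h] at hxne; exact hxne hJx
  refine ⟨iterDirDeriv e l J, differentiableOn_iterDirDeriv hΩ hJ e l, fun y hy hJy => ?_,
    x, hx, hJx, ?_, ?_⟩
  · by_contra hy'
    exact Nat.find_min hex (show l < Nat.find hex by omega) ⟨y, hy, hJy, hy'⟩
  · simpa only [hl, iterDirDeriv_succ] using hxne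
  · refine (analyticAt_comp_line hΩ hJ
      (by simpa using hx)).eventually_eq_zero_or_eventually_ne_zero.resolve_left fun h => ?_
    exact hxne ((eventually_comp_line_eq_zero_iff hΩ hJ hx).1 h _)

end ZeroSets

section ZeroBranches

-- Hurwitz: otherwise `1 / h (·, t)` would violate the maximum principle for `t` near `t₀`.
theorem eventually_exists_zero_of_sphere_ne_zero {T : Type*} [TopologicalSpace T] {h : ℂ → T → ℂ}
    {c : ℂ} {δ : ℝ} {t₀ : T} (hδ : 0 < δ)
    (hcont : ∀ s ∈ closedBall c δ, ContinuousAt (fun q : ℂ × T => h q.1 q.2) (s, t₀))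
    (hdiff : ∀ᶠ t in 𝓝 t₀, DiffContOnCl ℂ (fun s => h s t) (ball c δ)) (h0 : h c t₀ = 0)
    (hne : ∀ s ∈ sphere c δ, h s t₀ ≠ 0) :
    ∀ᶠ t in 𝓝 t₀, ∃ s ∈ closedBall c δ, h s t = 0 := by
  have hslice : ContinuousOn (fun s => ‖h s t₀‖) (sphere c δ) := fun s hs =>
    ((hcont s (sphere_subset_closedBall hs)).comp_of_eq (g := fun q : ℂ × T => h q.1 q.2)
      (f := fun s => (s, t₀)) (by fun_prop) rfl).norm.continuousWithinAt
  obtain ⟨m, hm, hmle⟩ : ∃ m > 0, ∀ s ∈ sphere c δ, m ≤ ‖h s t₀‖ := by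
    obtain ⟨s₀, hs₀, hmin⟩ := (isCompact_sphere c δ).exists_isMinOn
      (NormedSpace.sphere_nonempty.2 hδ.le) hslice
    exact ⟨_, norm_pos_iff.2 (hne s₀ hs₀), hmin⟩
  have hsphere : ∀ᶠ t in 𝓝 t₀, ∀ s ∈ sphere c δ, m / 2 < ‖h s t‖ := by
    refine (isCompact_sphere c δ).eventually_forall_of_forall_eventually fun s hs => ?_
    exact (continuous_swap.tendsto (t₀, s)).eventually
      ((hcont s (sphere_subset_closedBall hs)).norm.eventually_const_lt
        ((half_lt_self hm).trans_le (hmle s hs)))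
  have hcenter : ∀ᶠ t in 𝓝 t₀, ‖h c t‖ < m / 2 :=
    ((hcont c (mem_closedBall_self hδ.le)).comp_of_eq (g := fun q : ℂ × T => h q.1 q.2)
      (f := fun t => (c, t)) (by fun_prop) rfl).norm.eventually_lt_const (by simpa [h0] using hm)
  filter_upwards [hdiff, hsphere, hcenter] with t htd hts htc
  by_contra! hcon
  have hball : closure (ball c δ) = closedBall c δ := closure_ball c hδ.ne'
  have hinv := Complex.norm_le_of_forall_mem_frontier_norm_le isBounded_ball
    (htd.inv fun s hs => hcon s (hball ▸ hs)) (C := (m / 2)⁻¹) (fun s hs => by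
      rw [frontier_ball c hδ.ne'] at hs
      rw [Pi.inv_apply, norm_inv]
      exact inv_anti₀ (half_pos hm) (hts s hs).le) (subset_closure (mem_ball_self hδ))
  rw [Pi.inv_apply, norm_inv, inv_le_inv₀
    (norm_pos_iff.2 (hcon c (mem_closedBall_self hδ.le))) (half_pos hm)] at hinv
  exact hinv.not_gt htc

variable {E F G : Type*} [NormedAddCommGroup E] [NormedSpace ℂ E]
  [NormedAddCommGroup F] [NormedSpace ℂ F] [NormedAddCommGroup G] [NormedSpace ℂ G]

theorem exists_norm_coeff_le_of_hasStrictFDerivAt {q : E → G} {q' : E →L[ℂ] G} {x e₁ : E}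
    (hq : HasStrictFDerivAt q q' x) (he₁ : q' e₁ ≠ 0) (e₂ : E) :
    ∃ K : ℝ, ∃ N ∈ 𝓝 x, ∀ y ∈ N, ∀ y' ∈ N, q y = q y' →
      ∀ a b : ℂ, y - y' = a • e₁ + b • e₂ → ‖a‖ ≤ K * ‖b‖ := by
  have hα : 0 < ‖q' e₁‖ := norm_pos_iff.2 he₁
  set c : ℝ := ‖q' e₁‖ / (2 * (‖e₁‖ + 1)) with hc
  have hc0 : 0 < c := by positivity
  have hce : c * ‖e₁‖ ≤ ‖q' e₁‖ / 2 := by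
    rw [hc, div_mul_eq_mul_div, div_le_div_iff₀ (by positivity) two_pos]
    nlinarith [norm_nonneg e₁]
  have hbound := (hasStrictFDerivAt_iff_isLittleO.1 hq).bound hc0
  rw [nhds_prod_eq, Filter.eventually_prod_self_iff'] at hbound
  obtain ⟨N, hN, hbound⟩ := hbound
  refine ⟨(‖q' e₂‖ + c * ‖e₂‖) / (‖q' e₁‖ / 2), N, hN, fun y hy y' hy' hqy a b hab => ?_⟩
  have hlin : ‖a • q' e₁ + b • q' e₂‖ ≤ c * (‖a‖ * ‖e₁‖ + ‖b‖ * ‖e₂‖) := by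
    have h := hbound y hy y' hy'
    simp only [hqy, sub_self, zero_sub, norm_neg, hab, map_add, map_smul] at h
    refine h.trans (mul_le_mul_of_nonneg_left ?_ hc0.le)
    simpa only [norm_smul] using norm_add_le (a • e₁) (b • e₂)
  have htri : ‖a‖ * ‖q' e₁‖ ≤ ‖a • q' e₁ + b • q' e₂‖ + ‖b‖ * ‖q' e₂‖ := by
    simpa only [add_sub_cancel_right, norm_smul] using
      norm_sub_le (a • q' e₁ + b • q' e₂) (b • q' e₂)
  rw [div_mul_eq_mul_div, le_div_iff₀ (half_pos hα)]
  nlinarith [mul_le_mul_of_nonneg_left hce (norm_nonneg a)]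

theorem eventually_exists_zero_on_line {J : E → ℂ} {Ω : Set E} (hΩ : IsOpen Ω)
    (hJ : DifferentiableOn ℂ J Ω) {x e₁ : E} (e₂ : E) {δ : ℝ} (hδ : 0 < δ)
    (hmem : ∀ s t : ℂ, ‖s‖ ≤ δ → ‖t‖ ≤ δ → x + s • e₁ + t • e₂ ∈ Ω) (hJx : J x = 0)
    (hne : ∀ s : ℂ, ‖s‖ = δ → J (x + s • e₁) ≠ 0) :
    ∀ᶠ t in 𝓝 (0 : ℂ), ∃ s : ℂ, ‖s‖ ≤ δ ∧ J (x + s • e₁ + t • e₂) = 0 := by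
  have hJd : ∀ s t : ℂ, ‖s‖ ≤ δ → ‖t‖ ≤ δ → DifferentiableAt ℂ J (x + s • e₁ + t • e₂) :=
    fun s t hs ht => hJ.differentiableAt (hΩ.mem_nhds (hmem s t hs ht))
  have hzero := eventually_exists_zero_of_sphere_ne_zero
    (h := fun s t : ℂ => J (x + s • e₁ + t • e₂)) (c := 0) (t₀ := 0) hδ
    (fun s hs => (hJd s 0 (by simpa using hs) (by simpa using hδ.le)).continuousAt.comp
      (f := fun q : ℂ × ℂ => x + q.1 • e₁ + q.2 • e₂) (by fun_prop))
    (by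
      filter_upwards [closedBall_mem_nhds (0 : ℂ) hδ] with t ht
      refine DifferentiableOn.diffContOnCl fun s hs => ?_
      rw [closure_ball _ hδ.ne'] at hs
      exact ((hJd s t (by simpa using hs) (by simpa using ht)).comp s
        (f := fun s : ℂ => x + s • e₁ + t • e₂) (by fun_prop)).differentiableWithinAt)
    (by simpa using hJx) (fun s hs => by simpa using hne s (by simpa using hs))
  simpa only [mem_closedBall_zero_iff] using hzero

theorem exists_lipschitzOnWith_zero_branch {J : E → ℂ} {q : E → G} {q' : E →L[ℂ] G} {Ω : Set E}
    (hΩ : IsOpen Ω) (hJ : DifferentiableOn ℂ J Ω) (hJq : ∀ y ∈ Ω, J y = 0 → q y = 0)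
    {x e₁ : E} (hx : x ∈ Ω) (hJx : J x = 0) (hq : HasStrictFDerivAt q q' x) (he₁ : q' e₁ ≠ 0)
    (hiso : ∀ᶠ s in 𝓝[≠] (0 : ℂ), J (x + s • e₁) ≠ 0) (e₂ : E) :
    ∃ (σ : ℂ → ℂ) (K : NNReal), ∃ B ∈ 𝓝 (0 : ℂ), LipschitzOnWith K σ B ∧
      ∀ t ∈ B, x + σ t • e₁ + t • e₂ ∈ Ω ∧ J (x + σ t • e₁ + t • e₂) = 0 := by
  obtain ⟨K, N, hN, hNK⟩ := exists_norm_coeff_le_of_hasStrictFDerivAt hq he₁ e₂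
  have hcont : ContinuousAt (fun s : ℂ × ℂ => x + s.1 • e₁ + s.2 • e₂) (0, 0) := by fun_prop
  obtain ⟨δ₁, hδ₁, hmem⟩ := Metric.nhds_basis_closedBall.mem_iff.1 (hcont.preimage_mem_nhds
    (show N ∩ Ω ∈ 𝓝 _ by simpa using inter_mem hN (hΩ.mem_nhds hx)))
  rw [eventually_nhdsWithin_iff, Metric.nhds_basis_closedBall.eventually_iff] at hiso
  obtain ⟨δ₂, hδ₂, hiso⟩ := hiso
  have hδ : 0 < min δ₁ δ₂ := lt_min hδ₁ hδ₂
  have hmem' : ∀ s t : ℂ, ‖s‖ ≤ min δ₁ δ₂ → ‖t‖ ≤ min δ₁ δ₂ →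
      x + s • e₁ + t • e₂ ∈ N ∩ Ω := fun s t hs ht =>
    hmem (show (s, t) ∈ closedBall (0, 0) δ₁ by simpa [Prod.dist_eq] using
      ⟨hs.trans (min_le_left _ _), ht.trans (min_le_left _ _)⟩)
  have hbranch := eventually_exists_zero_on_line hΩ hJ e₂ hδ (fun s t hs ht => (hmem' s t hs ht).2)
    hJx fun s hs => hiso (by simp [hs])
      (norm_pos_iff.1 (hs ▸ hδ))
  choose! σ hσ using
    fun (t : ℂ) (ht : ∃ s : ℂ, ‖s‖ ≤ min δ₁ δ₂ ∧ J (x + s • e₁ + t • e₂) = 0) => ht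
  refine ⟨σ, K.toNNReal, _, hbranch.and (closedBall_mem_nhds (0 : ℂ) hδ), ?_, fun t ht =>
    ⟨(hmem' _ _ (hσ t ht.1).1 (by simpa using ht.2)).2, (hσ t ht.1).2⟩⟩
  refine LipschitzOnWith.of_dist_le_mul fun t ht t' ht' => ?_
  have hm := hmem' _ _ (hσ t ht.1).1 (by simpa using ht.2)
  have hm' := hmem' _ _ (hσ t' ht'.1).1 (by simpa using ht'.2)
  rw [dist_eq_norm, dist_eq_norm]
  refine (hNK _ hm.1 _ hm'.1 ?_ (σ t - σ t') (t - t') (by module)).trans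
    (mul_le_mul_of_nonneg_right (Real.le_coe_toNNReal K) (norm_nonneg _))
  simp only [hJq _ hm.2 (hσ t ht.1).2, hJq _ hm'.2 (hσ t' ht'.1).2]

theorem hasDerivAt_zero_comp_of_isBigO {f : E → F} {γ : ℂ → E} {t₀ : ℂ}
    (hf : HasFDerivAt f (0 : E →L[ℂ] F) (γ t₀))
    (hγ : (fun t => γ t - γ t₀) =O[𝓝 t₀] fun t => t - t₀) : HasDerivAt (f ∘ γ) 0 t₀ := by
  have hlim : Tendsto γ (𝓝 t₀) (𝓝 (γ t₀)) := by
    rw [← tendsto_sub_nhds_zero_iff]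
    exact hγ.trans_tendsto (tendsto_sub_nhds_zero_iff.2 tendsto_id)
  rw [hasDerivAt_iff_isLittleO]
  simpa [Function.comp_def] using
    ((hasFDerivAt_iff_isLittleO.1 hf).comp_tendsto hlim).trans_isBigO hγ

variable [FiniteDimensional ℂ E]

-- If `e₁, e₂` were independent, the zeros of `J` would contain a Lipschitz curve
-- `t ↦ x + σ t • e₁ + t • e₂`, along which `f` has derivative `0` and yet is injective.
theorem not_linearIndependent_of_fderiv_eq_zero_on_zeros {f : E → F} {J : E → ℂ} {Ω : Set E}
    (hΩ : IsOpen Ω) (hf : DifferentiableOn ℂ f Ω) (hinj : InjOn f Ω)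
    (hJ : DifferentiableOn ℂ J Ω) (hJf : ∀ x ∈ Ω, J x = 0 → fderiv ℂ f x = 0) {p e₁ : E}
    (hp : p ∈ Ω) (hJp : J p = 0) (hne : ¬ ∀ᶠ s in 𝓝 (0 : ℂ), J (p + s • e₁) = 0) (e₂ : E) :
    ¬ LinearIndependent ℂ ![e₁, e₂] := by
  intro hli
  obtain ⟨q, hq, hJq, x, hx, hJx, hqx, hiso⟩ :=
    exists_vanishing_on_zeros_of_fderiv_ne_zero hΩ hJ hp hJp hne
  obtain ⟨σ, K, B, hB, hσ, hzero⟩ := exists_lipschitzOnWith_zero_branch hΩ hJ hJq hx hJx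
    (hasStrictFDerivAt_of_differentiableOn hΩ hq hx) hqx hiso e₂
  set γ : ℂ → E := fun t => x + σ t • e₁ + t • e₂
  have hγsub : ∀ t t', γ t - γ t' = (σ t - σ t') • e₁ + (t - t') • e₂ := fun t t' => by
    simp only [γ]
    module
  have hderiv : ∀ t ∈ interior B, HasDerivAt (f ∘ γ) 0 t := fun t ht => by
    obtain ⟨hmem, hJ0⟩ := hzero t (interior_subset ht)
    refine hasDerivAt_zero_comp_of_isBigO
      (hJf _ hmem hJ0 ▸ (hf.differentiableAt (hΩ.mem_nhds hmem)).hasFDerivAt) ?_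
    refine Asymptotics.IsBigO.of_bound (K * ‖e₁‖ + ‖e₂‖) ?_
    filter_upwards [mem_interior_iff_mem_nhds.1 ht] with t' ht'
    have hlip := hσ.dist_le_mul t' ht' t (interior_subset ht)
    rw [dist_eq_norm, dist_eq_norm] at hlip
    rw [hγsub, add_mul, mul_right_comm, mul_comm ‖e₂‖]
    refine (norm_add_le _ _).trans (add_le_add ?_ (norm_smul_le _ _))
    exact (norm_smul_le _ _).trans (mul_le_mul_of_nonneg_right hlip (norm_nonneg _))
  have hinjγ : InjOn (f ∘ γ) (interior B) := fun t ht t' ht' h => by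
    have hγ := hinj (hzero t (interior_subset ht)).1 (hzero t' (interior_subset ht')).1 h
    have h0 := (LinearIndependent.pair_iff.1 hli _ _ ((hγsub t t').symm.trans (sub_eq_zero.2 hγ))).2
    exact sub_eq_zero.1 h0
  refine not_eventually_fderiv_eq_zero_of_injOn (interior_mem_nhds.2 hB)
    (fun t ht => (hderiv t ht).differentiableAt.differentiableWithinAt) hinjγ ?_
  filter_upwards [interior_mem_nhds.2 hB] with t ht
  ext
  simpa using (hderiv t ht).deriv

end ZeroBranches

section Osgood

variable {E F : Type*} [NormedAddCommGroup E] [NormedSpace ℂ E] [FiniteDimensional ℂ E]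
  [NormedAddCommGroup F] [NormedSpace ℂ F] [FiniteDimensional ℂ F] {f : E → F} {Ω : Set E} {p : E}

theorem fderiv_ne_zero_of_injOn_of_finrank_eq_one (hE : Module.finrank ℂ E = 1)
    (hF : Module.finrank ℂ F = 1) (hΩ : IsOpen Ω) (hf : DifferentiableOn ℂ f Ω)
    (hinj : InjOn f Ω) (hp : p ∈ Ω) : fderiv ℂ f p ≠ 0 := by
  intro h
  let e : ℂ ≃L[ℂ] E := .ofFinrankEq (by rw [hE, Module.finrank_self])
  let c : F ≃L[ℂ] ℂ := .ofFinrankEq (by rw [hF, Module.finrank_self])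
  have hderiv : ∀ s ∈ e ⁻¹' Ω, HasDerivAt (fun s => c (f (e s))) (c (fderiv ℂ f (e s) (e 1))) s :=
    fun s hs => c.hasFDerivAt.comp_hasDerivAt s
      ((hf.differentiableAt (hΩ.mem_nhds hs)).hasFDerivAt.comp_hasDerivAt s
        e.hasFDerivAt.hasDerivAt)
  have hz : e.symm p ∈ e ⁻¹' Ω := by simpa using hp
  refine deriv_ne_zero_of_injOn (hΩ.preimage e.continuous)
    (fun s hs => (hderiv s hs).differentiableAt.differentiableWithinAt)
    (fun s hs t ht hst => e.injective (hinj hs ht (c.injective hst))) hz ?_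
  rw [(hderiv _ hz).deriv]
  simp [h]

theorem injective_fderiv_of_injOn_of_forall_ne_zero (hEF : Module.finrank ℂ E = Module.finrank ℂ F)
    (hΩ : IsOpen Ω) (hf : DifferentiableOn ℂ f Ω) (hinj : InjOn f Ω)
    (hrank : ∀ x ∈ Ω, fderiv ℂ f x ≠ 0 → Function.Injective (fderiv ℂ f x)) (hp : p ∈ Ω) :
    Function.Injective (fderiv ℂ f p) := by
  rcases subsingleton_or_nontrivial E with hE | hE
  · exact Function.injective_of_subsingleton _
  by_cases h1 : Module.finrank ℂ E = 1
  · exact hrank p hp (fderiv_ne_zero_of_injOn_of_finrank_eq_one h1 (hEF ▸ h1) hΩ hf hinj hp)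
  by_contra hpinj
  let bE := Module.finBasis ℂ E
  let bF := (Module.finBasis ℂ F).reindex (finCongr hEF.symm)
  have hzero : ∀ x ∈ Ω, jacobianDet bE bF f x = 0 → fderiv ℂ f x = 0 := fun x hx hJx => by
    by_contra hne
    exact (jacobianDet_ne_zero_iff bE bF).2 (hrank x hx hne) hJx
  have hJp : jacobianDet bE bF f p = 0 := by
    by_contra hJp
    exact hpinj ((jacobianDet_ne_zero_iff bE bF).1 hJp)
  have hne : ¬ ∀ᶠ x in 𝓝 p, jacobianDet bE bF f x = 0 := fun h =>
    not_eventually_fderiv_eq_zero_of_injOn (hΩ.mem_nhds hp) hf hinj <| by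
      filter_upwards [h, hΩ.mem_nhds hp] with x hx hxΩ using hzero x hxΩ hx
  have hJ := differentiableOn_jacobianDet bE bF hΩ hf
  obtain ⟨e₁, he₁⟩ := exists_line_not_eventually_eq_zero (hΩ.mem_nhds hp) hJ hne
  have he₁0 : e₁ ≠ 0 := by
    rintro rfl
    simp [hJp] at he₁
  obtain ⟨e₂, he₂⟩ := exists_linearIndependent_pair_of_one_lt_finrank
    (lt_of_le_of_ne Module.finrank_pos (Ne.symm h1)) he₁0
  exact not_linearIndependent_of_fderiv_eq_zero_on_zeros hΩ hf hinj hJ hzero hp hJp he₁ e₂ he₂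

theorem injective_fderiv_of_injOn (hEF : Module.finrank ℂ E = Module.finrank ℂ F)
    (hΩ : IsOpen Ω) (hf : DifferentiableOn ℂ f Ω) (hinj : InjOn f Ω) (hp : p ∈ Ω) :
    Function.Injective (fderiv ℂ f p) := by
  induction hn : Module.finrank ℂ E generalizing E F with
  | zero =>
    have := Module.finrank_zero_iff.1 hn
    exact Function.injective_of_subsingleton _
  | succ n ih =>
    refine injective_fderiv_of_injOn_of_forall_ne_zero hEF hΩ hf hinj (fun x hx hne => ?_) hp
    obtain ⟨u, hu⟩ : ∃ u, fderiv ℂ f x u ≠ 0 := by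
      by_contra! h
      exact hne (ContinuousLinearMap.ext h)
    obtain ⟨ℓ, -, hℓ⟩ := exists_dual_vector ℂ (fderiv ℂ f x u) (norm_ne_zero_iff.2 hu)
    have hℓu : ℓ (fderiv ℂ f x u) ≠ 0 := by simpa [hℓ] using hu
    have hcomp : ℓ.comp (fderiv ℂ f x) ≠ 0 := fun h => hℓu (DFunLike.congr_fun h u)
    obtain ⟨k, W, hW, h0, hk, hkinj, hker⟩ := exists_injOn_ker_slice hΩ hf hinj hx ℓ hcomp
    have hfinE : Module.finrank ℂ (ℓ.comp (fderiv ℂ f x)).ker + 1 = Module.finrank ℂ E :=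
      Module.Dual.finrank_ker_add_one_of_ne_zero fun h => hℓu (DFunLike.congr_fun h u)
    have hfinF : Module.finrank ℂ ℓ.ker + 1 = Module.finrank ℂ F :=
      Module.Dual.finrank_ker_add_one_of_ne_zero fun h => hℓu (DFunLike.congr_fun h _)
    have hinjk := ih (by omega) hW hk hkinj h0 (by omega)
    rw [injective_iff_map_eq_zero]
    intro v hv
    have hvker : v ∈ (ℓ.comp (fderiv ℂ f x)).ker := by simp [hv]
    exact congrArg Subtype.val
      ((injective_iff_map_eq_zero _).1 hinjk ⟨v, hvker⟩ (hker ⟨v, hvker⟩ hv))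

theorem exists_hasStrictFDerivAt_equiv_of_injOn (hEF : Module.finrank ℂ E = Module.finrank ℂ F)
    (hΩ : IsOpen Ω) (hf : DifferentiableOn ℂ f Ω) (hinj : InjOn f Ω) (hp : p ∈ Ω) :
    ∃ A : E ≃L[ℂ] F, HasStrictFDerivAt f (A : E →L[ℂ] F) p :=
  ⟨(LinearEquiv.ofInjectiveOfFinrankEq (fderiv ℂ f p : E →ₗ[ℂ] F)
    (injective_fderiv_of_injOn hEF hΩ hf hinj hp) hEF).toContinuousLinearEquiv,
    hasStrictFDerivAt_of_differentiableOn hΩ hf hp⟩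

theorem image_mem_nhds_of_injOn (hEF : Module.finrank ℂ E = Module.finrank ℂ F) (hΩ : IsOpen Ω)
    (hf : DifferentiableOn ℂ f Ω) (hinj : InjOn f Ω) (hp : p ∈ Ω) {S : Set E} (hS : S ∈ 𝓝 p) :
    f '' S ∈ 𝓝 (f p) := by
  have : CompleteSpace E := FiniteDimensional.complete ℂ E
  obtain ⟨A, hA⟩ := exists_hasStrictFDerivAt_equiv_of_injOn hEF hΩ hf hinj hp
  rw [← hA.map_nhds_eq_of_equiv]
  exact image_mem_map hS

theorem differentiableOn_invFunOn_of_injOn [Nonempty E]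
    (hEF : Module.finrank ℂ E = Module.finrank ℂ F) (hΩ : IsOpen Ω)
    (hf : DifferentiableOn ℂ f Ω) (hinj : InjOn f Ω) :
    DifferentiableOn ℂ (Function.invFunOn f Ω) (f '' Ω) := by
  have hleft := hinj.leftInvOn_invFunOn
  rintro _ ⟨x, hx, rfl⟩
  have hcont : ContinuousAt (Function.invFunOn f Ω) (f x) := by
    intro N hN
    rw [hleft hx] at hN
    rw [Filter.mem_map]
    refine mem_of_superset (image_mem_nhds_of_injOn hEF hΩ hf hinj hx
      (inter_mem hN (hΩ.mem_nhds hx))) ?_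
    rintro _ ⟨y, hy, rfl⟩
    rw [mem_preimage, hleft hy.2]
    exact hy.1
  obtain ⟨A, hA⟩ := exists_hasStrictFDerivAt_equiv_of_injOn hEF hΩ hf hinj hx
  refine (HasFDerivAt.of_local_left_inverse hcont ((hleft hx).symm ▸ hA.hasFDerivAt)
    ?_).differentiableAt.differentiableWithinAt
  filter_upwards [image_mem_nhds_of_injOn hEF hΩ hf hinj hx (hΩ.mem_nhds hx)]
  rintro _ ⟨y, hy, rfl⟩
  rw [hleft hy]

end Osgood

section ViscositySubharmonic

/-- `u` is subharmonic at `z` in the viscosity sense, tested against the strictly superharmonic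
functions `Re k - ε ‖· - z‖ ^ 2` with `k` holomorphic: none of them touches `u` from above
at `z`. -/
def ViscSubharmonicAt (u : ℂ → ℝ) (z : ℂ) : Prop :=
  ∀ k : ℂ → ℂ, AnalyticAt ℂ k z → ∀ ε > 0,
    ¬ IsLocalMax (fun ζ => u ζ - (k ζ).re + ε * ‖ζ - z‖ ^ 2) z

namespace ViscSubharmonicAt

variable {u v : ℂ → ℝ} {z : ℂ}

theorem of_eventually_le (hv : ViscSubharmonicAt v z) (hle : ∀ᶠ ζ in 𝓝 z, v ζ ≤ u ζ)
    (heq : v z = u z) : ViscSubharmonicAt u z := fun k hk ε hε hmax => by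
  refine hv k hk ε hε ?_
  filter_upwards [hle, hmax] with ζ hζ hζmax
  linarith

theorem const_mul (hu : ViscSubharmonicAt u z) {M : ℝ} (hM : 0 < M) :
    ViscSubharmonicAt (fun ζ => M * u ζ) z := fun k hk ε hε hmax => by
  refine hu (fun ζ => (M⁻¹ : ℝ) * k ζ) (analyticAt_const.mul hk) (M⁻¹ * ε) (by positivity) ?_
  filter_upwards [hmax] with ζ hζ
  have h := mul_le_mul_of_nonneg_left hζ (inv_pos.2 hM).le
  simp only [mul_add, mul_sub, inv_mul_cancel_left₀ hM.ne'] at h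
  simpa only [Complex.re_ofReal_mul, mul_assoc] using h

theorem add_re (hu : ViscSubharmonicAt u z) {k₀ : ℂ → ℂ} (hk₀ : AnalyticAt ℂ k₀ z) :
    ViscSubharmonicAt (fun ζ => u ζ + (k₀ ζ).re) z := fun k hk ε hε hmax => by
  refine hu (fun ζ => k ζ - k₀ ζ) (hk.sub hk₀) ε hε ?_
  filter_upwards [hmax] with ζ hζ
  simp only [Complex.sub_re] at hζ ⊢
  linarith

end ViscSubharmonicAt

theorem exists_analyticAt_re_eventuallyEq_log_norm {q : ℂ → ℂ} {z : ℂ} (hq : AnalyticAt ℂ q z)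
    (hqz : q z ≠ 0) : ∃ k : ℂ → ℂ, AnalyticAt ℂ k z ∧ ∀ᶠ ζ in 𝓝 z, (k ζ).re = Real.log ‖q ζ‖ := by
  refine ⟨fun ζ => Complex.log (q ζ / q z) + Complex.log (q z),
    ((hq.div_const).clog (by simp [hqz])).add analyticAt_const, ?_⟩
  filter_upwards [hq.continuousAt.eventually_ne hqz] with ζ hζ
  rw [Complex.add_re, Complex.log_re, Complex.log_re, norm_div,
    Real.log_div (norm_ne_zero_iff.2 hζ) (norm_ne_zero_iff.2 hqz), sub_add_cancel]

namespace ViscSubharmonicAt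

variable {u : ℂ → ℝ} {z : ℂ}

theorem add_log_norm_scalar (hu : ViscSubharmonicAt u z) {q : ℂ → ℂ} (hq : AnalyticAt ℂ q z)
    (hqz : q z ≠ 0) : ViscSubharmonicAt (fun ζ => u ζ + Real.log ‖q ζ‖) z := by
  obtain ⟨k, hk, heq⟩ := exists_analyticAt_re_eventuallyEq_log_norm hq hqz
  exact (hu.add_re hk).of_eventually_le (heq.mono fun ζ hζ => by rw [hζ])
    (by rw [heq.self_of_nhds])

theorem sub_log_norm_scalar (hu : ViscSubharmonicAt u z) {q : ℂ → ℂ} (hq : AnalyticAt ℂ q z)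
    (hqz : q z ≠ 0) : ViscSubharmonicAt (fun ζ => u ζ - Real.log ‖q ζ‖) z := by
  simpa only [Pi.inv_apply, norm_inv, Real.log_inv, sub_eq_add_neg] using
    hu.add_log_norm_scalar (hq.inv hqz) (inv_ne_zero hqz)

-- A norming functional `ℓ` of `G z` gives a scalar minorant `log ‖ℓ ∘ G‖` touching at `z`.
theorem add_log_norm {E : Type*} [NormedAddCommGroup E] [NormedSpace ℂ E]
    (hu : ViscSubharmonicAt u z) {G : ℂ → E} (hG : AnalyticAt ℂ G z) (hGz : G z ≠ 0) :
    ViscSubharmonicAt (fun ζ => u ζ + Real.log ‖G ζ‖) z := by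
  obtain ⟨ℓ, hℓ, hℓz⟩ := exists_dual_vector ℂ (G z) (norm_ne_zero_iff.2 hGz)
  have hℓG : AnalyticAt ℂ (fun ζ => ℓ (G ζ)) z := ℓ.analyticAt _ |>.comp hG
  have hne : ℓ (G z) ≠ 0 := by simpa [hℓz] using hGz
  refine (hu.add_log_norm_scalar hℓG hne).of_eventually_le ?_ (by simp [hℓz])
  filter_upwards [hℓG.continuousAt.eventually_ne hne] with ζ hζ
  have hle : ‖ℓ (G ζ)‖ ≤ ‖G ζ‖ := by simpa [hℓ] using ℓ.le_opNorm (G ζ)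
  gcongr

-- At an interior maximum `z` of `u + ε ‖·‖ ^ 2`, the identity
-- `‖ζ‖ ^ 2 = ‖ζ - z‖ ^ 2 + 2 Re (conj z * ζ) - ‖z‖ ^ 2` produces a forbidden test function.
theorem not_isLocalMax_add_norm_sq (hu : ViscSubharmonicAt u z) {ε : ℝ}
    (hε : 0 < ε) : ¬ IsLocalMax (fun ζ => u ζ + ε * ‖ζ‖ ^ 2) z := fun hmax => by
  refine hu (fun ζ => -(2 * ε * (starRingEnd ℂ z * ζ))) (by fun_prop) ε hε ?_
  have hid : ∀ ζ : ℂ, u ζ - (-(2 * ε * (starRingEnd ℂ z * ζ))).re + ε * ‖ζ - z‖ ^ 2 =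
      u ζ + ε * ‖ζ‖ ^ 2 + ε * ‖z‖ ^ 2 := fun ζ => by
    simp only [Complex.sq_norm, Complex.normSq_apply, Complex.neg_re, Complex.mul_re,
      Complex.conj_re, Complex.conj_im, Complex.ofReal_re, Complex.ofReal_im, Complex.re_ofNat,
      Complex.im_ofNat, Complex.mul_im, Complex.sub_re, Complex.sub_im]
    ring
  filter_upwards [hmax] with ζ hζ
  simp only [hid]
  linarith

end ViscSubharmonicAt

theorem exists_forall_le_of_upperSemicontinuousOn {ι X : Type*} [Finite ι] [TopologicalSpace X]
    {K : ι → Set X} (hK : ∀ i, IsCompact (K i)) {u : ι → X → ℝ}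
    (husc : ∀ i, UpperSemicontinuousOn (u i) (K i)) (hne : ∃ i, (K i).Nonempty) :
    ∃ i, ∃ z ∈ K i, ∀ j, ∀ w ∈ K j, u j w ≤ u i z := by
  have : Nonempty {i // (K i).Nonempty} := nonempty_subtype.2 hne
  choose z hzK hz using fun i : {i // (K i).Nonempty} => (husc i).exists_isMaxOn i.2 (hK i)
  obtain ⟨i, hi⟩ := Finite.exists_max fun i : {i // (K i).Nonempty} => u i (z i)
  exact ⟨i, z i, hzK i, fun j w hw => (hz ⟨j, w, hw⟩ hw).trans (hi ⟨j, w, hw⟩)⟩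

-- The maximum principle for the upper envelope of finitely many locally defined functions: a
-- maximum of the envelope plus `ε ‖·‖ ^ 2` can only occur where the bound `C` is known.
theorem le_of_forall_le_or_viscSubharmonicAt_or_lt {ι : Type*} [Finite ι] {K : ι → Set ℂ}
    (hK : ∀ i, IsCompact (K i)) {u : ι → ℂ → ℝ} (husc : ∀ i, UpperSemicontinuousOn (u i) (K i))
    {C : ℝ} (h : ∀ i, ∀ z ∈ K i, u i z ≤ C ∨ (K i ∈ 𝓝 z ∧ ViscSubharmonicAt (u i) z) ∨
      ∃ j, z ∈ K j ∧ u i z < u j z)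
    {i₀ : ι} {z₀ : ℂ} (hz₀ : z₀ ∈ K i₀) : u i₀ z₀ ≤ C := by
  by_contra! hlt
  obtain ⟨R, hR, hKR⟩ := (isCompact_iUnion hK).isBounded.exists_pos_norm_le
  set ε := (u i₀ z₀ - C) / (2 * R ^ 2)
  have hε : 0 < ε := div_pos (sub_pos.2 hlt) (by positivity)
  have hεR : ε * R ^ 2 = (u i₀ z₀ - C) / 2 := by
    simp only [ε]
    field_simp
  obtain ⟨i, z, hzK, hz⟩ := exists_forall_le_of_upperSemicontinuousOn hK
    (fun i => (husc i).add (by fun_prop : Continuous fun ζ : ℂ =>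
      ε * ‖ζ‖ ^ 2).continuousOn.upperSemicontinuousOn) ⟨i₀, z₀, hz₀⟩
  rcases h i z hzK with hC | ⟨hnhds, hvisc⟩ | ⟨j, hzj, hj⟩
  · have hzmax := hz i₀ z₀ hz₀
    have hzR : ε * ‖z‖ ^ 2 ≤ ε * R ^ 2 := by
      gcongr
      exact hKR z (mem_iUnion_of_mem i hzK)
    have : 0 ≤ ε * ‖z₀‖ ^ 2 := by positivity
    linarith
  · exact hvisc.not_isLocalMax_add_norm_sq hε (mem_of_superset hnhds (hz i))
  · have := hz j z hzj
    linarith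

theorem le_of_viscSubharmonicAt_of_crossing {K : Set ℂ} (hK : IsCompact K) {d u₁ u₂ : ℂ → ℝ}
    {s t C : ℝ} (hst : s < t) (hd : ContinuousOn d K)
    (husc₁ : UpperSemicontinuousOn u₁ (K ∩ d ⁻¹' Ici s))
    (husc₂ : UpperSemicontinuousOn u₂ (K ∩ d ⁻¹' Iic t))
    (hv₁ : ∀ z ∈ interior K, s < d z → ViscSubharmonicAt u₁ z)
    (hv₂ : ∀ z ∈ interior K, d z < t → ViscSubharmonicAt u₂ z)
    (hs : ∀ z ∈ K, d z = s → u₁ z < u₂ z) (ht : ∀ z ∈ K, d z = t → u₂ z < u₁ z)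
    (hfr₁ : ∀ z ∈ frontier K, s ≤ d z → u₁ z ≤ C) (hfr₂ : ∀ z ∈ frontier K, d z ≤ t → u₂ z ≤ C)
    {z : ℂ} (hz : z ∈ K) (hzs : s ≤ d z) : u₁ z ≤ C := by
  have hint : ∀ z ∈ interior K, ∀ J ∈ 𝓝 (d z), K ∩ d ⁻¹' J ∈ 𝓝 z := fun z hz J hJ =>
    have hzK := mem_interior_iff_mem_nhds.1 hz
    inter_mem hzK ((hd.continuousAt hzK).preimage_mem_nhds hJ)
  have hcompact : ∀ J : Set ℝ, IsClosed J → IsCompact (K ∩ d ⁻¹' J) := fun J hJ =>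
    hK.of_isClosed_subset (hd.preimage_isClosed_of_isClosed hK.isClosed hJ) inter_subset_left
  have hfrontier : ∀ z ∈ K, z ∉ interior K → z ∈ frontier K := fun z hz hzi =>
    hK.isClosed.frontier_eq ▸ ⟨hz, hzi⟩
  refine le_of_forall_le_or_viscSubharmonicAt_or_lt (i₀ := true) (u := fun i => cond i u₁ u₂)
    (K := fun i => cond i (K ∩ d ⁻¹' Ici s) (K ∩ d ⁻¹' Iic t))
    (Bool.forall_bool.2 ⟨hcompact _ isClosed_Iic, hcompact _ isClosed_Ici⟩)
    (Bool.forall_bool.2 ⟨husc₂, husc₁⟩) (Bool.forall_bool.2 ⟨?_, ?_⟩) ⟨hz, hzs⟩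
  · rintro z ⟨hzK, hzt : d z ≤ t⟩
    by_cases hzi : z ∈ interior K
    · rcases hzt.eq_or_lt with heq | hlt
      · exact .inr (.inr ⟨true, ⟨hzK, hst.le.trans_eq heq.symm⟩, ht z hzK heq⟩)
      · exact .inr (.inl ⟨hint z hzi _ (Iic_mem_nhds hlt), hv₂ z hzi hlt⟩)
    · exact .inl (hfr₂ z (hfrontier z hzK hzi) hzt)
  · rintro z ⟨hzK, hzs : s ≤ d z⟩
    by_cases hzi : z ∈ interior K
    · rcases hzs.eq_or_lt with heq | hlt
      · exact .inr (.inr ⟨false, ⟨hzK, heq.symm.trans_le hst.le⟩, hs z hzK heq.symm⟩)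
      · exact .inr (.inl ⟨hint z hzi _ (Ici_mem_nhds hlt), hv₁ z hzi hlt⟩)
    · exact .inl (hfr₁ z (hfrontier z hzK hzi) hzs)

end ViscositySubharmonic

section Plurisubharmonic

variable {n : ℕ} {D : Set (Cn n)}

namespace PSHOn

variable {u v : Cn n → EReal}

theorem congr (hu : PSHOn u D) (huv : EqOn u v D) : PSHOn v D := by
  refine ⟨fun x hx y hy => ?_, fun a ha b r hr hdisc g hg hle => ?_⟩
  · filter_upwards [hu.1 x hx y (by simpa only [huv hx] using hy), self_mem_nhdsWithin]
      with x' hx' hx'D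
    simpa only [← huv hx'D] using hx'
  · rw [← huv ha]
    refine hu.2 a ha b r hr hdisc g hg fun θ => ?_
    rw [huv (hdisc _ (by simp [Complex.norm_exp_ofReal_mul_I, abs_of_pos hr]))]
    exact hle θ

theorem const (c : ℝ) : PSHOn (fun _ : Cn n => (c : EReal)) D := by
  refine ⟨upperSemicontinuous_const.upperSemicontinuousOn _,
    fun a _ b r _ _ g hg hle => EReal.coe_le_coe_iff.2 ?_⟩
  have hint : ∫ _ in (0 : ℝ)..(2 * Real.pi), c ≤ ∫ θ in (0 : ℝ)..(2 * Real.pi), g θ :=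
    intervalIntegral.integral_mono_on (by positivity) (by simp) (hg.intervalIntegrable _ _)
      fun θ _ => EReal.coe_le_coe_iff.1 (hle θ)
  rw [intervalIntegral.integral_const, sub_zero, smul_eq_mul] at hint
  rwa [one_div_mul_eq_div, le_div_iff₀ (by positivity), mul_comm]

theorem sup (hu : PSHOn u D) (hv : PSHOn v D) : PSHOn (fun z => u z ⊔ v z) D :=
  ⟨hu.1.sup hv.1, fun a ha b r hr hdisc g hg hle =>
    sup_le (hu.2 a ha b r hr hdisc g hg fun θ => le_sup_left.trans (hle θ))
      (hv.2 a ha b r hr hdisc g hg fun θ => le_sup_right.trans (hle θ))⟩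

end PSHOn

theorem intervalIntegral_re_circle_eq {H : ℂ → ℂ} {r : ℝ} (hr : 0 < r)
    (hH : DifferentiableOn ℂ H (closedBall 0 r)) :
    (1 / (2 * Real.pi)) * ∫ θ in (0 : ℝ)..(2 * Real.pi),
      (H ((r : ℂ) * Complex.exp (θ * Complex.I))).re = (H 0).re := by
  have hcont : Continuous fun θ : ℝ => H (circleMap 0 r θ) :=
    hH.continuousOn.comp_continuous (continuous_circleMap 0 r)
      fun θ => circleMap_mem_closedBall 0 hr.le θ
  have havg : Real.circleAverage H 0 r = H 0 := by
    refine DiffContOnCl.circleAverage (DifferentiableOn.diffContOnCl ?_)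
    rwa [abs_of_pos hr, closure_ball _ hr.ne']
  have hre := Complex.reCLM.intervalIntegral_comp_comm
    (hcont.intervalIntegrable (μ := MeasureTheory.volume) 0 (2 * Real.pi))
  simp only [Complex.reCLM_apply, circleMap_zero] at hre
  rw [hre, ← havg, Real.circleAverage_def]
  simp only [circleMap_zero, one_div, Complex.smul_re, smul_eq_mul]

namespace PSHOn

variable {ψ : Cn n → ℝ}

theorem upperSemicontinuousOn_of_coe (hψ : PSHOn (fun z => (ψ z : EReal)) D) :
    UpperSemicontinuousOn ψ D := fun x hx y hy => by
  filter_upwards [hψ.1 x hx y (EReal.coe_lt_coe_iff.2 hy)] with x' hx'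
  exact EReal.coe_lt_coe_iff.1 hx'

theorem le_re_of_forall_sphere (hψ : PSHOn (fun z => (ψ z : EReal)) D) {x b : Cn n} {r : ℝ}
    (hr : 0 < r) (hdisc : ∀ t : ℂ, ‖t‖ ≤ r → x + t • b ∈ D) {H : ℂ → ℂ}
    (hH : DifferentiableOn ℂ H (closedBall 0 r))
    (hle : ∀ t : ℂ, ‖t‖ = r → ψ (x + t • b) ≤ (H t).re) : ψ x ≤ (H 0).re := by
  have hnorm : ∀ θ : ℝ, ‖(r : ℂ) * Complex.exp (θ * Complex.I)‖ = r := fun θ => by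
    simp [Complex.norm_exp_ofReal_mul_I, abs_of_pos hr]
  have hcont : Continuous fun θ : ℝ => (H ((r : ℂ) * Complex.exp (θ * Complex.I))).re :=
    Complex.continuous_re.comp (hH.continuousOn.comp_continuous (by fun_prop)
      fun θ => mem_closedBall_zero_iff.2 (hnorm θ).le)
  have hx : x ∈ D := by simpa using hdisc 0 (by simpa using hr.le)
  have hmean := hψ.2 x hx b r hr hdisc _ hcont
    fun θ => EReal.coe_le_coe_iff.2 (hle _ (hnorm θ))
  rwa [intervalIntegral_re_circle_eq hr hH, EReal.coe_le_coe_iff] at hmean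

theorem viscSubharmonicAt_line (hψ : PSHOn (fun z => (ψ z : EReal)) D) (hD : IsOpen D) {x : Cn n}
    (hx : x ∈ D) (b : Cn n) : ViscSubharmonicAt (fun t => ψ (x + t • b)) 0 := by
  intro k hk ε hε hmax
  have hline : Tendsto (fun t : ℂ => x + t • b) (𝓝 0) (𝓝 x) :=
    Continuous.tendsto' (by fun_prop) _ _ (by simp)
  obtain ⟨r, hr, hball⟩ := nhds_basis_closedBall.mem_iff.1
    ((hline.eventually (hD.mem_nhds hx)).and (hk.eventually_analyticAt.and hmax))
  have hsub : ψ x ≤ ((k 0 : ℂ) + (ψ x - (k 0).re - ε * r ^ 2 : ℝ)).re := by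
    refine hψ.le_re_of_forall_sphere (b := b) (H := fun t => k t + (ψ x - (k 0).re - ε * r ^ 2 : ℝ))
      hr (fun t ht => (hball (mem_closedBall_zero_iff.2 ht)).1)
      (fun t ht => ((hball ht).2.1.differentiableAt.add_const _).differentiableWithinAt)
      fun t ht => ?_
    have hle := (hball (mem_closedBall_zero_iff.2 ht.le)).2.2
    simp only [zero_smul, add_zero, sub_zero, norm_zero, ht] at hle
    simp only [Complex.add_re, Complex.ofReal_re]
    linarith
  simp only [Complex.add_re, Complex.ofReal_re] at hsub
  have : 0 < ε * r ^ 2 := by positivity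
  linarith

-- Moving along `t ↦ (x + t • g' ζ, ζ + t)` changes the penalized vector `x - g ζ` only by `o(t)`,
-- so to second order the penalty contributes the real part of a holomorphic function of `t`.
theorem not_isLocalMax_sub_penalty (hψ : PSHOn (fun z => (ψ z : EReal)) D) (hD : IsOpen D)
    {x : Cn n} (hx : x ∈ D) {g : ℂ → Cn n} {k : ℂ → ℂ} {ζ : ℂ} (hg : AnalyticAt ℂ g ζ)
    (hk : AnalyticAt ℂ k ζ) (ζ₁ : ℂ) {ε : ℝ} (hε : 0 < ε) (N : ℝ) :
    ¬ IsLocalMax (fun q : Cn n × ℂ => ψ q.1 - (k q.2).re + ε * ‖q.2 - ζ₁‖ ^ 2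
      - N * ‖q.1 - g q.2‖ ^ 2) (x, ζ) := by
  intro hmax
  set b := deriv g ζ
  set h : ℂ → Cn n := fun t => g (ζ + t) - g ζ - t • b with hh
  set H : ℂ → ℂ := fun t => k (ζ + t) - 2 * ε * innerSL ℂ (ζ - ζ₁) t
    - 2 * N * innerSL ℂ (x - g ζ) (h t) with hH
  have hshift : AnalyticAt ℂ (fun t : ℂ => ζ + t) 0 := by fun_prop
  have hgt : AnalyticAt ℂ (fun t => g (ζ + t)) 0 :=
    AnalyticAt.fun_comp (g := g) (by simpa using hg) hshift
  have hkt : AnalyticAt ℂ (fun t => k (ζ + t)) 0 :=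
    AnalyticAt.fun_comp (g := k) (by simpa using hk) hshift
  have hha : AnalyticAt ℂ h 0 :=
    (hgt.sub analyticAt_const).sub (analyticAt_id.smul analyticAt_const)
  have hHa : AnalyticAt ℂ H 0 :=
    (hkt.sub (analyticAt_const.mul ((innerSL ℂ (ζ - ζ₁)).analyticAt 0))).sub
      (analyticAt_const.mul (((innerSL ℂ (x - g ζ)).analyticAt _).comp hha))
  have hpath : Tendsto (fun t : ℂ => (x + t • b, ζ + t)) (𝓝 0) (𝓝 (x, ζ)) :=
    Continuous.tendsto' (by fun_prop) _ _ (by simp)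
  have hsmall : (fun t => N * ‖h t‖ ^ 2) =o[𝓝 0] fun t => ‖t‖ ^ 2 :=
    ((hasDerivAt_iff_isLittleO_nhds_zero.1 hg.differentiableAt.hasDerivAt).norm_norm.pow
      two_pos).const_mul_left N
  refine hψ.viscSubharmonicAt_line hD hx b H hHa (ε / 2) (half_pos hε) ?_
  filter_upwards [hpath.eventually hmax, hsmall.def (half_pos hε)] with t ht hht
  have hvec : x + t • b - g (ζ + t) = (x - g ζ) - h t := by
    simp only [hh]
    abel
  have hht' : N * ‖h t‖ ^ 2 ≤ ε / 2 * ‖t‖ ^ 2 := by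
    simpa using (le_abs_self _).trans hht
  have hHt : (H t).re = (k (ζ + t)).re - 2 * ε * (innerSL ℂ (ζ - ζ₁) t).re
      - 2 * N * (innerSL ℂ (x - g ζ) (h t)).re := by
    simp [hH]
  have hH0 : H 0 = k ζ := by simp [hH, hh]
  simp only [hvec, add_sub_right_comm ζ t ζ₁] at ht
  rw [@norm_sub_sq ℂ _ _ _ _ (x - g ζ), @norm_add_sq ℂ] at ht
  simp only [innerSL_apply_apply] at hHt
  simp only [RCLike.re_eq_complex_re] at ht
  simp only [hH0, hHt, zero_smul, add_zero, sub_zero, norm_zero]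
  linarith

end PSHOn

-- A large multiple of `d` makes `G - N d` smaller than `G c` on the compact part of `S \ O` where
-- `G c ≤ G`, because `d` is bounded below by a positive constant there.
theorem exists_isMaxOn_sub_mul {X : Type*} [TopologicalSpace X] {S O : Set X} (hS : IsCompact S)
    (hO : IsOpen O) {G d : X → ℝ} (hG : UpperSemicontinuousOn G S) (hd : ContinuousOn d S)
    (hd_nonneg : ∀ q ∈ S, 0 ≤ d q) {c : X} (hcS : c ∈ S) (hc : d c = 0)
    (hlt : ∀ q ∈ S \ O, d q = 0 → G q < G c) :
    ∃ N : ℝ, ∃ q ∈ S ∩ O, IsMaxOn (fun q => G q - N * d q) S q := by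
  have hK : IsCompact ((S ∩ G ⁻¹' Ici (G c)) \ O) := (hG.isCompact_inter_preimage_Ici hS _).diff hO
  obtain ⟨T, hT⟩ := hG.bddAbove_of_isCompact hS
  obtain ⟨δ, hδ, hδK⟩ : ∃ δ > 0, ∀ q ∈ (S ∩ G ⁻¹' Ici (G c)) \ O, δ ≤ d q :=
    hK.exists_forall_le' (hd.mono fun q hq => hq.1.1) fun q hq =>
      (hd_nonneg q hq.1.1).lt_of_ne fun h0 => (hlt q ⟨hq.1.1, hq.2⟩ h0.symm).not_ge hq.1.2
  set N := (T - G c + 1) / δ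
  have hTc : G c ≤ T := hT ⟨c, hcS, rfl⟩
  have hN : 0 ≤ N := div_nonneg (by linarith) hδ.le
  obtain ⟨q, hqS, hq⟩ := (hG.add
    (hd.const_smul (-N)).upperSemicontinuousOn).exists_isMaxOn ⟨c, hcS⟩ hS
  simp only [Pi.smul_apply, smul_eq_mul, neg_mul, ← sub_eq_add_neg] at hq
  refine ⟨N, q, ⟨hqS, by_contra fun hqO => ?_⟩, hq⟩
  have hqc : G c ≤ G q - N * d q := by simpa [hc] using hq hcS
  have hdq := hδK q ⟨⟨hqS, hqc.trans (sub_le_self _ (mul_nonneg hN (hd_nonneg q hqS)))⟩, hqO⟩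
  have hNd : T - G c + 1 ≤ N * d q := by
    rw [div_mul_eq_mul_div, le_div_iff₀ hδ]
    gcongr
  have hGT : G q ≤ T := hT ⟨q, hqS, rfl⟩
  linarith

-- Doubling of variables: `z` and `ζ` move independently and `‖z - g ζ‖ ^ 2` is penalized.
theorem PSHOn.viscSubharmonicAt_comp {ψ : Cn n → ℝ} (hψ : PSHOn (fun z => (ψ z : EReal)) D)
    (hD : IsOpen D) {g : ℂ → Cn n} {ζ₁ : ℂ} (hg : AnalyticAt ℂ g ζ₁) (hgD : g ζ₁ ∈ D) :
    ViscSubharmonicAt (fun ζ => ψ (g ζ)) ζ₁ := by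
  intro k hk ε hε hmax
  obtain ⟨η, hη, hηD⟩ := nhds_basis_closedBall.mem_iff.1 (hD.mem_nhds hgD)
  obtain ⟨δ, hδ, hδball⟩ := nhds_basis_closedBall.mem_iff.1
    (hg.eventually_analyticAt.and (hk.eventually_analyticAt.and hmax))
  set S := closedBall (g ζ₁) η ×ˢ closedBall ζ₁ δ
  set O := ball (g ζ₁) η ×ˢ ball ζ₁ δ
  have hOS : O ⊆ S := prod_mono ball_subset_closedBall ball_subset_closedBall
  have hO : IsOpen O := isOpen_ball.prod isOpen_ball
  have hgS : ContinuousOn (fun q : Cn n × ℂ => g q.2) S := fun q hq =>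
    ((hδball hq.2).1.continuousAt.comp continuousAt_snd).continuousWithinAt
  have hkS : ContinuousOn (fun q : Cn n × ℂ => k q.2) S := fun q hq =>
    ((hδball hq.2).2.1.continuousAt.comp continuousAt_snd).continuousWithinAt
  set G : Cn n × ℂ → ℝ := fun q => ψ q.1 + (-(k q.2).re + ε / 2 * ‖q.2 - ζ₁‖ ^ 2) with hG
  have hGS : UpperSemicontinuousOn G S :=
    (hψ.upperSemicontinuousOn_of_coe.comp continuousOn_fst fun q hq => hηD hq.1).add
      ((Complex.continuous_re.comp_continuousOn hkS).neg.add
        (by fun_prop)).upperSemicontinuousOn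
  obtain ⟨N, q, ⟨hqS, hqO⟩, hq⟩ := exists_isMaxOn_sub_mul (c := (g ζ₁, ζ₁))
    (d := fun q => ‖q.1 - g q.2‖ ^ 2)
    ((isCompact_closedBall _ _).prod (isCompact_closedBall _ _)) hO hGS
    ((continuousOn_fst.sub hgS).norm.pow 2) (fun q _ => by positivity)
    (hOS ⟨mem_ball_self hη, mem_ball_self hδ⟩) (by simp) fun p hp hdp => by
      obtain ⟨z, ζ⟩ := p
      obtain rfl : z = g ζ := by simpa [sub_eq_zero] using hdp
      have hne : ζ ≠ ζ₁ := fun h => hp.2 (h ▸ ⟨mem_ball_self hη, mem_ball_self hδ⟩)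
      have hpos : 0 < ε * ‖ζ - ζ₁‖ ^ 2 := by
        have := norm_pos_iff.2 (sub_ne_zero.2 hne)
        positivity
      have hle := (hδball hp.1.2).2.2
      simp only [sub_self, norm_zero] at hle
      simp only [hG, sub_self, norm_zero]
      linarith
  refine hψ.not_isLocalMax_sub_penalty hD (hηD hqS.1) (hδball hqS.2).1 (hδball hqS.2).2.1 ζ₁
    (half_pos hε) N ?_
  filter_upwards [(hq.on_subset hOS).isLocalMax (hO.mem_nhds hqO)] with p hp
  simp only [hG] at hp
  linarith

end Plurisubharmonic

section DiscEstimate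

theorem norm_one_sub_conj_mul_eq {a ζ : ℂ} (hζ : ‖ζ‖ = 1) :
    ‖1 - starRingEnd ℂ a * ζ‖ = ‖ζ - a‖ := by
  have hone : starRingEnd ℂ ζ * ζ = 1 := by simp [Complex.conj_mul', hζ]
  rw [← hone, ← sub_mul, ← map_sub, norm_mul, RCLike.norm_conj, hζ, mul_one]

theorem one_sub_conj_mul_ne_zero {a ζ : ℂ} (ha : ‖a‖ < 1) (hζ : ‖ζ‖ ≤ 1) :
    1 - starRingEnd ℂ a * ζ ≠ 0 := fun h => by
  have hnorm := congrArg norm (sub_eq_zero.1 h)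
  rw [norm_one, norm_mul, RCLike.norm_conj] at hnorm
  exact (mul_lt_one_of_nonneg_of_lt_one_left (norm_nonneg a) ha hζ).ne' hnorm

variable {E : Type*} [NormedAddCommGroup E]

/-- The function `2 M v - log |b|`, where `b ζ = (ζ - a) / (1 - conj a * ζ)` is the Blaschke factor
of the unit disc vanishing at `a`. It compares `2 M v 0` with `log ‖a‖`; its sign at `0` is found
by the maximum principle away from the pole `a`. -/
def farCompetitor (v : ℂ → ℝ) (M : ℝ) (a ζ : ℂ) : ℝ :=
  2 * M * v ζ + (Real.log ‖1 - starRingEnd ℂ a * ζ‖ - Real.log ‖ζ - a‖)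

/-- The function replacing `farCompetitor v M a` near its pole `a`. For the displacement
`d ζ = (ζ - a) • G ζ`, it exceeds `farCompetitor v M a` by `log ‖d‖ - M v - L`. -/
def nearCompetitor (v : ℂ → ℝ) (M L : ℝ) (a : ℂ) (G : ℂ → E) (ζ : ℂ) : ℝ :=
  M * v ζ + (Real.log ‖1 - starRingEnd ℂ a * ζ‖ + Real.log ‖G ζ‖ - L)

variable {v : ℂ → ℝ} {M L : ℝ} {a : ℂ} {G : ℂ → E} {ζ : ℂ}

theorem upperSemicontinuousOn_const_mul_add {X : Type*} [TopologicalSpace X] {v w : X → ℝ}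
    {s : Set X} (hv : UpperSemicontinuousOn v s) (hM : 0 ≤ M) (hw : ContinuousOn w s) :
    UpperSemicontinuousOn (fun x => M * v x + w x) s :=
  ((continuous_const_mul M).comp_upperSemicontinuousOn hv fun _ _ hxy =>
    mul_le_mul_of_nonneg_left hxy hM).add hw.upperSemicontinuousOn

theorem continuousOn_log_norm_one_sub_conj_mul (ha : ‖a‖ < 1) :
    ContinuousOn (fun ζ => Real.log ‖1 - starRingEnd ℂ a * ζ‖) (closedBall 0 1) :=
  ContinuousOn.log (by fun_prop) fun _ hζ =>
    norm_ne_zero_iff.2 (one_sub_conj_mul_ne_zero ha (mem_closedBall_zero_iff.1 hζ))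

theorem upperSemicontinuousOn_farCompetitor (hv : UpperSemicontinuousOn v (closedBall 0 1))
    (hM : 0 ≤ M) (ha : ‖a‖ < 1) :
    UpperSemicontinuousOn (farCompetitor v M a) (closedBall 0 1 \ {a}) := by
  have hlog : ContinuousOn (fun ζ => Real.log ‖ζ - a‖) (closedBall 0 1 \ {a}) :=
    ContinuousOn.log (by fun_prop) fun _ hζ => norm_ne_zero_iff.2 (sub_ne_zero.2 hζ.2)
  exact upperSemicontinuousOn_const_mul_add (hv.mono sdiff_subset) (by positivity)
    (((continuousOn_log_norm_one_sub_conj_mul ha).mono sdiff_subset).sub hlog)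

theorem upperSemicontinuousOn_nearCompetitor (hv : UpperSemicontinuousOn v (closedBall 0 1))
    (hM : 0 ≤ M) (ha : ‖a‖ < 1) (hG : ContinuousOn G (closedBall 0 1))
    (hG0 : ∀ ζ ∈ closedBall 0 1, G ζ ≠ 0) :
    UpperSemicontinuousOn (nearCompetitor v M L a G) (closedBall 0 1) :=
  upperSemicontinuousOn_const_mul_add hv hM
    (((continuousOn_log_norm_one_sub_conj_mul ha).add
      (hG.norm.log fun ζ hζ => norm_ne_zero_iff.2 (hG0 ζ hζ))).sub continuousOn_const)

theorem viscSubharmonicAt_farCompetitor (hv : ViscSubharmonicAt v ζ) (hM : 0 < M) (ha : ‖a‖ < 1)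
    (hζ : ‖ζ‖ ≤ 1) (hne : ζ ≠ a) : ViscSubharmonicAt (farCompetitor v M a) ζ := by
  have hvisc := ((hv.const_mul (M := 2 * M) (by positivity)).add_log_norm_scalar
    (q := fun ζ => 1 - starRingEnd ℂ a * ζ) (by fun_prop)
    (one_sub_conj_mul_ne_zero ha hζ)).sub_log_norm_scalar (q := fun ζ => ζ - a) (by fun_prop)
    (sub_ne_zero.2 hne)
  simp only [add_sub_assoc] at hvisc
  exact hvisc

theorem viscSubharmonicAt_nearCompetitor [NormedSpace ℂ E] (hv : ViscSubharmonicAt v ζ)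
    (hM : 0 < M) (ha : ‖a‖ < 1) (hζ : ‖ζ‖ ≤ 1) (hG : AnalyticAt ℂ G ζ) (hG0 : G ζ ≠ 0) :
    ViscSubharmonicAt (nearCompetitor v M L a G) ζ := by
  have hvisc := (((hv.const_mul hM).add_log_norm_scalar
    (q := fun ζ => 1 - starRingEnd ℂ a * ζ) (by fun_prop)
    (one_sub_conj_mul_ne_zero ha hζ)).add_log_norm hG hG0).add_re
    (analyticAt_const (v := (-L : ℂ)))
  convert hvisc using 1
  funext ξ
  simp only [nearCompetitor, Complex.neg_re, Complex.ofReal_re]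
  ring

theorem nearCompetitor_sub_farCompetitor (hne : ζ ≠ a) (hG0 : G ζ ≠ 0) :
    nearCompetitor v M L a G ζ - farCompetitor v M a ζ =
      Real.log (‖ζ - a‖ * ‖G ζ‖) - M * v ζ - L := by
  rw [nearCompetitor, farCompetitor, Real.log_mul (norm_ne_zero_iff.2 (sub_ne_zero.2 hne))
    (norm_ne_zero_iff.2 hG0)]
  ring

theorem farCompetitor_of_norm_eq_one (hζ : ‖ζ‖ = 1) : farCompetitor v M a ζ = 2 * M * v ζ := by
  rw [farCompetitor, norm_one_sub_conj_mul_eq hζ, sub_self, add_zero]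

theorem farCompetitor_lt_nearCompetitor {c : ℝ} (hne : ζ ≠ a) (hG0 : G ζ ≠ 0) (hM : 0 ≤ M)
    (hL : L < M * c) (hd : ‖ζ - a‖ * ‖G ζ‖ = 1) (hv : v ζ ≤ -c) :
    farCompetitor v M a ζ < nearCompetitor v M L a G ζ := by
  have hdiff := nearCompetitor_sub_farCompetitor (v := v) (M := M) (L := L) hne hG0
  rw [hd, Real.log_one] at hdiff
  have := mul_le_mul_of_nonneg_left hv hM
  linarith

theorem nearCompetitor_lt_farCompetitor {ρ c : ℝ} (hne : ζ ≠ a) (hG0 : G ζ ≠ 0) (hM : 0 < M)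
    (hL : Real.log ρ + M * c ≤ L) (hd : ‖ζ - a‖ * ‖G ζ‖ = ρ) (hv : -c < v ζ) :
    nearCompetitor v M L a G ζ < farCompetitor v M a ζ := by
  have hdiff := nearCompetitor_sub_farCompetitor (v := v) (M := M) (L := L) hne hG0
  rw [hd] at hdiff
  have := mul_lt_mul_of_pos_left hv hM
  linarith

theorem nearCompetitor_nonpos_of_norm_eq_one (hζ : ‖ζ‖ = 1) (hne : ζ ≠ a) (hG0 : G ζ ≠ 0)
    (hM : 0 ≤ M) (hv : v ζ ≤ 0) (hL : Real.log (‖ζ - a‖ * ‖G ζ‖) ≤ L) :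
    nearCompetitor v M L a G ζ ≤ 0 := by
  have hdiff := nearCompetitor_sub_farCompetitor (v := v) (M := M) (L := L) hne hG0
  rw [farCompetitor_of_norm_eq_one hζ] at hdiff
  have := mul_nonpos_of_nonneg_of_nonpos hM hv
  linarith

-- The far competitor is used where the displacement has norm at least `1`, the near one where it
-- has norm at most `ρ`. Each is smaller than the other one on the edge of its own region.
theorem farCompetitor_zero_nonpos [NormedSpace ℂ E] {ρ c : ℝ}
    (husc : UpperSemicontinuousOn v (closedBall 0 1)) (hv : ∀ ζ ∈ ball 0 1, ViscSubharmonicAt v ζ)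
    (hv_sphere : ∀ ζ ∈ sphere 0 1, v ζ ≤ 0) (ha : ‖a‖ < 1)
    (hG : AnalyticOnNhd ℂ G (closedBall 0 1)) (hG0 : ∀ ζ ∈ closedBall 0 1, G ζ ≠ 0)
    (hM : 0 < M) (hρ : 1 < ρ) (hMc : Real.log ρ < M * c / 2)
    (hv_one : ∀ ζ ∈ closedBall 0 1, ‖ζ - a‖ * ‖G ζ‖ = 1 → v ζ ≤ -c)
    (hv_rho : ∀ ζ ∈ closedBall 0 1, ‖ζ - a‖ * ‖G ζ‖ = ρ → -(c / 2) < v ζ)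
    (h0 : 1 ≤ ‖a‖ * ‖G 0‖) : farCompetitor v M a 0 ≤ 0 := by
  have hne : ∀ ζ, 0 < ‖ζ - a‖ * ‖G ζ‖ → ζ ≠ a := by
    rintro ζ hζ rfl
    simp at hζ
  have hsphere : ∀ ζ ∈ frontier (closedBall (0 : ℂ) 1), ζ ∈ sphere 0 1 := fun ζ hζ =>
    frontier_closedBall (0 : ℂ) one_ne_zero ▸ hζ
  have hball : ∀ ζ ∈ interior (closedBall (0 : ℂ) 1), ζ ∈ ball 0 1 := fun ζ hζ =>
    interior_closedBall (0 : ℂ) one_ne_zero ▸ hζ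
  refine le_of_viscSubharmonicAt_of_crossing (isCompact_closedBall (0 : ℂ) 1)
    (d := fun ζ => ‖ζ - a‖ * ‖G ζ‖) (s := 1) (t := ρ)
    (u₂ := nearCompetitor v M (Real.log ρ + M * (c / 2)) a G) hρ
    ((by fun_prop : Continuous fun ζ => ‖ζ - a‖).continuousOn.mul hG.continuousOn.norm)
    ((upperSemicontinuousOn_farCompetitor husc hM.le ha).mono
      fun ζ hζ => ⟨hζ.1, hne ζ (one_pos.trans_le hζ.2)⟩)
    ((upperSemicontinuousOn_nearCompetitor husc hM.le ha hG.continuousOn hG0).mono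
      inter_subset_left) ?_ ?_ ?_ ?_ ?_ ?_ (by simp) (by simpa using h0)
  · exact fun ζ hζ hd => viscSubharmonicAt_farCompetitor (hv ζ (hball ζ hζ)) hM ha
      (mem_closedBall_zero_iff.1 (interior_subset hζ)) (hne ζ (one_pos.trans hd))
  · exact fun ζ hζ _ => viscSubharmonicAt_nearCompetitor (hv ζ (hball ζ hζ)) hM ha
      (mem_closedBall_zero_iff.1 (interior_subset hζ)) (hG ζ (interior_subset hζ))
      (hG0 ζ (interior_subset hζ))
  · exact fun ζ hζ hd => farCompetitor_lt_nearCompetitor (hne ζ (hd ▸ one_pos)) (hG0 ζ hζ) hM.le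
      (by linarith) hd (hv_one ζ hζ hd)
  · exact fun ζ hζ hd => nearCompetitor_lt_farCompetitor (hne ζ (hd ▸ one_pos.trans hρ))
      (hG0 ζ hζ) hM le_rfl hd (hv_rho ζ hζ hd)
  · intro ζ hζ _
    rw [farCompetitor_of_norm_eq_one (mem_sphere_zero_iff_norm.1 (hsphere ζ hζ))]
    exact mul_nonpos_of_nonneg_of_nonpos (by positivity) (hv_sphere ζ (hsphere ζ hζ))
  · intro ζ hζ hd
    have hζ1 := mem_sphere_zero_iff_norm.1 (hsphere ζ hζ)
    have hζa : ζ ≠ a := fun h => ha.ne (h ▸ hζ1)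
    have hGζ := hG0 ζ (mem_closedBall_zero_iff.2 hζ1.le)
    refine nearCompetitor_nonpos_of_norm_eq_one hζ1 hζa hGζ hM.le (hv_sphere ζ (hsphere ζ hζ)) ?_
    have hdpos := mul_pos (norm_pos_iff.2 (sub_ne_zero.2 hζa)) (norm_pos_iff.2 hGζ)
    have hlog := Real.log_le_log hdpos hd
    linarith [Real.log_pos hρ]

theorem exp_two_mul_le_norm_of_farCompetitor_zero_nonpos (ha : a ≠ 0)
    (h : farCompetitor v M a 0 ≤ 0) : Real.exp (2 * M * v 0) ≤ ‖a‖ := by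
  simp only [farCompetitor, mul_zero, sub_zero, norm_one, Real.log_one, zero_sub, norm_neg] at h
  rw [← Real.le_log_iff_exp_le (norm_pos_iff.2 ha)]
  linarith

end DiscEstimate

section PeakFunction

variable {n : ℕ} {D : Set (Cn n)} {φ : Cn n → EReal}

/-- The real-valued function `max φ (-1)`. For a psh peak function `φ` at `∞` it is again
plurisubharmonic with the same behaviour at `∞`, and it no longer takes the value `-∞`. -/
def peakTruncation (φ : Cn n → EReal) (z : Cn n) : ℝ :=
  (φ z ⊔ ((-1 : ℝ) : EReal)).toReal

namespace IsPshPeakFnAtInfty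

theorem exists_forall_norm_le (hφ : IsPshPeakFnAtInfty D φ) (R : ℝ) :
    ∃ c : ℝ, c < 0 ∧ ∀ z ∈ D, ‖z‖ ≤ R → φ z ≤ c := by
  obtain ⟨c, hc, hle⟩ := hφ.2.2 (closedBall 0 R)ᶜ isBounded_closedBall.compl
  exact ⟨c, hc, fun z hz hzR => hle z ⟨hz, by simpa using hzR⟩⟩

theorem neg (hφ : IsPshPeakFnAtInfty D φ) {z : Cn n} (hz : z ∈ D) : φ z < 0 := by
  obtain ⟨c, hc, hle⟩ := hφ.exists_forall_norm_le ‖z‖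
  exact (hle z hz le_rfl).trans_lt (EReal.coe_neg'.2 hc)

theorem coe_peakTruncation (hφ : IsPshPeakFnAtInfty D φ) {z : Cn n} (hz : z ∈ D) :
    (peakTruncation φ z : EReal) = φ z ⊔ ((-1 : ℝ) : EReal) :=
  EReal.coe_toReal (max_lt ((hφ.neg hz).trans EReal.zero_lt_top) (EReal.coe_lt_top _)).ne
    ((EReal.bot_lt_coe _).trans_le le_sup_right).ne'

theorem pshOn_peakTruncation (hφ : IsPshPeakFnAtInfty D φ) :
    PSHOn (fun z => (peakTruncation φ z : EReal)) D :=
  (hφ.1.sup (.const (-1))).congr fun _ hz => (hφ.coe_peakTruncation hz).symm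

theorem peakTruncation_le_iff (hφ : IsPshPeakFnAtInfty D φ) {z : Cn n} (hz : z ∈ D) {y : ℝ} :
    peakTruncation φ z ≤ y ↔ φ z ≤ y ∧ -1 ≤ y := by
  rw [← EReal.coe_le_coe_iff, hφ.coe_peakTruncation hz, sup_le_iff, EReal.coe_le_coe_iff]

theorem peakTruncation_nonpos (hφ : IsPshPeakFnAtInfty D φ) {z : Cn n} (hz : z ∈ D) :
    peakTruncation φ z ≤ 0 :=
  (hφ.peakTruncation_le_iff hz).2 ⟨(hφ.neg hz).le, by norm_num⟩

theorem exists_peakTruncation_le_neg (hφ : IsPshPeakFnAtInfty D φ) (R : ℝ) :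
    ∃ c > 0, ∀ z ∈ D, ‖z‖ ≤ R → peakTruncation φ z ≤ -c := by
  obtain ⟨c, hc, hle⟩ := hφ.exists_forall_norm_le R
  refine ⟨min (-c) 1, lt_min (neg_pos.2 hc) one_pos, fun z hz hzR => ?_⟩
  refine (hφ.peakTruncation_le_iff hz).2
    ⟨(hle z hz hzR).trans (EReal.coe_le_coe_iff.2 ?_), neg_le_neg (min_le_right _ _)⟩
  exact le_neg.1 (min_le_left _ _)

theorem exists_neg_lt_peakTruncation (hφ : IsPshPeakFnAtInfty D φ) {c : ℝ} (hc : 0 < c) :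
    ∃ R, ∀ z ∈ D, R ≤ ‖z‖ → -c < peakTruncation φ z := by
  have hev : ∀ᶠ z in Bornology.cobounded (Cn n) ⊓ 𝓟 D, ((-c : ℝ) : EReal) < φ z :=
    hφ.2.1.eventually (lt_mem_nhds (EReal.coe_neg'.2 (neg_lt_zero.2 hc)))
  rw [eventually_inf_principal, ← comap_norm_atTop, eventually_comap] at hev
  obtain ⟨R, hR⟩ := eventually_atTop.1 hev
  refine ⟨R, fun z hz hzR => EReal.coe_lt_coe_iff.1 ?_⟩
  rw [hφ.coe_peakTruncation hz]
  exact (hR ‖z‖ hzR z rfl hz).trans_le le_sup_left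

theorem erexp_mul_le (hφ : IsPshPeakFnAtInfty D φ) {m : ℝ} (hm : 0 < m) {z : Cn n} (hz : z ∈ D) :
    erexp ((m : EReal) * φ z) ≤ Real.exp (m * peakTruncation φ z) := by
  have hle : φ z ≤ peakTruncation φ z := (hφ.coe_peakTruncation hz).symm ▸ le_sup_left
  have htop : φ z ≠ ⊤ := ((hφ.neg hz).trans EReal.zero_lt_top).ne
  generalize φ z = y at hle htop
  induction y with
  | bot => rw [EReal.coe_mul_bot_of_pos hm, erexp, if_pos rfl]; exact (Real.exp_pos _).le
  | top => exact absurd rfl htop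
  | coe y =>
    rw [← EReal.coe_mul, erexp, if_neg (EReal.coe_ne_bot _), if_neg (EReal.coe_ne_top _),
      EReal.toReal_coe]
    have := EReal.coe_le_coe_iff.1 hle
    gcongr

end IsPshPeakFnAtInfty

end PeakFunction

section EmbeddedDisc

theorem analyticOnNhd_dslope {F : Type*} [NormedAddCommGroup F] [NormedSpace ℂ F] [CompleteSpace F]
    {g : ℂ → F} {s : Set ℂ} {a : ℂ} (hg : AnalyticOnNhd ℂ g s) (ha : a ∈ s) :
    AnalyticOnNhd ℂ (dslope g a) s := by
  have hopen := isOpen_analyticAt ℂ g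
  have hdiff : DifferentiableOn ℂ g {ζ | AnalyticAt ℂ g ζ} := fun ζ hζ =>
    hζ.differentiableAt.differentiableWithinAt
  exact fun ζ hζ => ((Complex.differentiableOn_dslope (hopen.mem_nhds (hg a ha))).2
    hdiff).analyticAt (hopen.mem_nhds (hg ζ hζ))

theorem dslope_ne_zero_of_comp_eq_smul {E F : Type*} [NormedAddCommGroup E] [NormedSpace ℂ E]
    [NormedAddCommGroup F] [NormedSpace ℂ F] {f : E → F} {g : ℂ → E} {a ζ : ℂ} {b : F}
    (hb : b ≠ 0) (hf : DifferentiableAt ℂ f (g a)) (hg : DifferentiableAt ℂ g a)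
    (hfg : ∀ᶠ ξ in 𝓝 a, f (g ξ) = ξ • b) (hζ : f (g ζ) = ζ • b) : dslope g a ζ ≠ 0 := by
  intro h0
  rcases eq_or_ne ζ a with rfl | hne
  · rw [dslope_same] at h0
    have hcomp := hf.hasFDerivAt.comp_hasDerivAt ζ hg.hasDerivAt
    have hline : HasDerivAt (f ∘ g) b ζ :=
      HasDerivAt.congr_of_eventuallyEq (by simpa using (hasDerivAt_id ζ).smul_const b) hfg
    exact hb (by rw [hline.unique hcomp, h0, map_zero])
  · have hgζ : g ζ = g a := sub_eq_zero.1 (by rw [← sub_smul_dslope, h0, smul_zero])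
    rw [hgζ, hfg.self_of_nhds] at hζ
    exact hne (smul_left_injective ℂ hb hζ).symm

variable {n : ℕ} {D : Set (Cn n)} {ψ : Cn n → ℝ} {M c ρ : ℝ}

theorem PSHOn.exp_two_mul_le_norm_of_disc (hψ : PSHOn (fun z => (ψ z : EReal)) D) (hD : IsOpen D)
    (hψ0 : ∀ x ∈ D, ψ x ≤ 0) {g : ℂ → Cn n} {a : ℂ} (ha : ‖a‖ < 1)
    (hg : AnalyticOnNhd ℂ g (closedBall 0 1)) (hgD : MapsTo g (closedBall 0 1) D)
    (hg0 : ∀ ζ ∈ closedBall 0 1, dslope g a ζ ≠ 0) (hM : 0 < M) (hρ : 1 < ρ)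
    (hMc : Real.log ρ < M * c / 2) (hψ_one : ∀ x ∈ D, ‖x - g a‖ = 1 → ψ x ≤ -c)
    (hψ_rho : ∀ x ∈ D, ‖x - g a‖ = ρ → -(c / 2) < ψ x) (h0 : 1 ≤ ‖g 0 - g a‖) :
    Real.exp (2 * M * ψ (g 0)) ≤ ‖a‖ := by
  have hnorm : ∀ ζ, ‖ζ - a‖ * ‖dslope g a ζ‖ = ‖g ζ - g a‖ := fun ζ => by
    rw [← norm_smul, sub_smul_dslope]
  have ha0 : a ≠ 0 := by
    rintro rfl
    simp only [sub_self, norm_zero] at h0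
    linarith
  refine exp_two_mul_le_norm_of_farCompetitor_zero_nonpos (v := fun ζ => ψ (g ζ)) ha0
    (farCompetitor_zero_nonpos (hψ.upperSemicontinuousOn_of_coe.comp hg.continuousOn hgD)
      (fun ζ hζ => ?_) (fun ζ hζ => hψ0 _ (hgD (sphere_subset_closedBall hζ))) ha
      (analyticOnNhd_dslope hg (mem_closedBall_zero_iff.2 ha.le)) hg0 hM hρ hMc
      (fun ζ hζ hd => hψ_one _ (hgD hζ) (hnorm ζ ▸ hd))
      (fun ζ hζ hd => hψ_rho _ (hgD hζ) (hnorm ζ ▸ hd)) ?_)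
  · have hζ' := ball_subset_closedBall hζ
    exact hψ.viscSubharmonicAt_comp hD (hg ζ hζ') (hgD hζ')
  · rwa [← hnorm, zero_sub, norm_neg] at h0

theorem PSHOn.exp_two_mul_le_norm_of_disc_subset_image (hψ : PSHOn (fun z => (ψ z : EReal)) D)
    (hD : IsOpen D) (hψ0 : ∀ x ∈ D, ψ x ≤ 0) {f : Cn n → Cn n} (hf : DifferentiableOn ℂ f D)
    (hinj : InjOn f D) {z w b : Cn n} {a : ℂ} (hz : z ∈ D) (hw : w ∈ D) (hfz : f z = 0)
    (hfw : f w = a • b) (hb : b ≠ 0) (ha : ‖a‖ < 1)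
    (hdisc : ∀ ζ ∈ closedBall (0 : ℂ) 1, ζ • b ∈ f '' D) (hM : 0 < M) (hρ : 1 < ρ)
    (hMc : Real.log ρ < M * c / 2) (hψ_one : ∀ x ∈ D, ‖x - w‖ = 1 → ψ x ≤ -c)
    (hψ_rho : ∀ x ∈ D, ‖x - w‖ = ρ → -(c / 2) < ψ x) (h0 : 1 ≤ ‖z - w‖) :
    Real.exp (2 * M * ψ z) ≤ ‖a‖ := by
  have hline : Continuous fun ζ : ℂ => ζ • b := by fun_prop
  have hopen : IsOpen (f '' D) := isOpen_iff_mem_nhds.2 <| by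
    rintro _ ⟨x, hx, rfl⟩
    exact image_mem_nhds_of_injOn rfl hD hf hinj hx (hD.mem_nhds hx)
  have hleft := hinj.leftInvOn_invFunOn
  set h := Function.invFunOn f D
  have hg : AnalyticOnNhd ℂ (fun ζ : ℂ => h (ζ • b)) (closedBall 0 1) := fun ζ hζ => by
    simpa only [zero_add] using analyticAt_comp_line hopen
      (differentiableOn_invFunOn_of_injOn rfl hD hf hinj) (x := 0) (e := b)
      (by simpa only [zero_add] using hdisc ζ hζ)
  have hright : ∀ y ∈ f '' D, f (h y) = y := fun y hy => Function.invFunOn_eq hy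
  have hgD : MapsTo (fun ζ : ℂ => h (ζ • b)) (closedBall 0 1) D := fun ζ hζ =>
    Function.invFunOn_mem (hdisc ζ hζ)
  have ha' : a ∈ closedBall (0 : ℂ) 1 := mem_closedBall_zero_iff.2 ha.le
  have hgz : h ((0 : ℂ) • b) = z := by rw [zero_smul, ← hfz, hleft hz]
  have hgw : h (a • b) = w := by rw [← hfw, hleft hw]
  rw [← hgz] at h0 ⊢
  subst hgw
  exact hψ.exp_two_mul_le_norm_of_disc (g := fun ζ => h (ζ • b)) hD hψ0 ha hg hgD
    (fun ζ hζ => dslope_ne_zero_of_comp_eq_smul hb (hf.differentiableAt (hD.mem_nhds (hgD ha')))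
      (hg a ha').differentiableAt
      ((hopen.preimage hline).eventually_mem (hdisc a ha') |>.mono fun ξ hξ => hright _ hξ)
      (hright _ (hdisc ζ hζ))) hM hρ hMc hψ_one hψ_rho h0

theorem PSHOn.exp_two_mul_mul_le_norm (hψ : PSHOn (fun z => (ψ z : EReal)) D) (hD : IsOpen D)
    (hψ0 : ∀ x ∈ D, ψ x ≤ 0) {f : Cn n → Cn n} (hf : DifferentiableOn ℂ f D) (hinj : InjOn f D)
    {z w : Cn n} (hz : z ∈ D) (hw : w ∈ D) (hfz : f z = 0) {r : ℝ} (hr : ball 0 r ⊆ f '' D)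
    (hM : 0 < M) (hρ : 1 < ρ) (hMc : Real.log ρ < M * c / 2)
    (hψ_one : ∀ x ∈ D, ‖x - w‖ = 1 → ψ x ≤ -c)
    (hψ_rho : ∀ x ∈ D, ‖x - w‖ = ρ → -(c / 2) < ψ x) (h0 : 1 ≤ ‖z - w‖) :
    Real.exp (2 * M * ψ z) * r ≤ ‖f w‖ := by
  set e := Real.exp (2 * M * ψ z)
  have he0 : 0 < e := Real.exp_pos _
  have he1 : e ≤ 1 := Real.exp_le_one_iff.2
    (mul_nonpos_of_nonneg_of_nonpos (by positivity) (hψ0 z hz))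
  have hfw : 0 < ‖f w‖ := norm_pos_iff.2 fun h => by
    rw [hinj hz hw (hfz.trans h.symm), sub_self, norm_zero] at h0
    linarith
  by_contra! hlt
  obtain ⟨s, hs, hsr⟩ := exists_between ((div_lt_iff₀' he0).2 hlt)
  have hws : ‖f w‖ < s := (le_div_self hfw.le he0 he1).trans_lt hs
  have hs0 : 0 < s := hfw.trans hws
  have hnorm : ‖((s / ‖f w‖ : ℝ) : ℂ) • f w‖ = s := by
    rw [norm_smul, Complex.norm_real, Real.norm_of_nonneg (by positivity),
      div_mul_cancel₀ _ hfw.ne']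
  have hae : e ≤ ‖((‖f w‖ / s : ℝ) : ℂ)‖ := by
    refine hψ.exp_two_mul_le_norm_of_disc_subset_image hD hψ0 hf hinj hz hw hfz
      (b := ((s / ‖f w‖ : ℝ) : ℂ) • f w) ?_ (norm_pos_iff.1 (hnorm.symm ▸ hs0)) ?_
      (fun ζ hζ => hr ?_) hM hρ hMc hψ_one hψ_rho h0
    · rw [smul_smul, ← Complex.ofReal_mul, div_mul_div_cancel₀ hs0.ne', div_self hfw.ne',
        Complex.ofReal_one, one_smul]
    · rwa [Complex.norm_real, Real.norm_of_nonneg (by positivity), div_lt_one hs0]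
    · rw [mem_ball_zero_iff, norm_smul, hnorm]
      exact (mul_le_of_le_one_left hs0.le (mem_closedBall_zero_iff.1 hζ)).trans_lt hsr
  rw [Complex.norm_real, Real.norm_of_nonneg (by positivity), le_div_iff₀' hs0] at hae
  exact ((div_lt_iff₀ he0).1 hs).not_ge hae

end EmbeddedDisc

section Squeezing

variable {n : ℕ} {D : Set (Cn n)} {φ : Cn n → EReal}

theorem IsPshPeakFnAtInfty.exists_exp_mul_le_norm (hφ : IsPshPeakFnAtInfty D φ) (hD : IsOpen D)
    (R : ℝ) : ∃ m > 0, ∀ f : Cn n → Cn n, DifferentiableOn ℂ f D → InjOn f D →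
      ∀ z ∈ D, R + 1 ≤ ‖z‖ → f z = 0 → ∀ r : ℝ, ball 0 r ⊆ f '' D → ∀ w ∈ D, ‖w‖ ≤ R →
        Real.exp (m * peakTruncation φ z) * r ≤ ‖f w‖ := by
  obtain ⟨c, hc, hnear⟩ := hφ.exists_peakTruncation_le_neg (R + 1)
  obtain ⟨S, hfar⟩ := hφ.exists_neg_lt_peakTruncation (half_pos hc)
  set ρ := |S| + |R| + 2
  have hρ : 1 < ρ := by linarith [abs_nonneg S, abs_nonneg R]
  have hM : 0 < 2 * (Real.log ρ + 1) / c := by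
    have := Real.log_pos hρ
    positivity
  refine ⟨2 * (2 * (Real.log ρ + 1) / c), by positivity,
    fun f hf hinj z hz hzR hfz r hr w hw hwR => ?_⟩
  refine hφ.pshOn_peakTruncation.exp_two_mul_mul_le_norm hD (fun x => hφ.peakTruncation_nonpos)
    hf hinj hz hw hfz hr hM hρ ?_ (fun x hx hxw => hnear x hx ?_) (fun x hx hxw => hfar x hx ?_) ?_
  · rw [div_mul_cancel₀ _ hc.ne']
    linarith
  · linarith [norm_le_norm_add_norm_sub' x w]
  · linarith [norm_sub_le x w, le_abs_self S, le_abs_self R]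
  · linarith [norm_sub_norm_le z w]

theorem le_of_ball_subset_of_subset_closedBall {E : Type*} [NormedAddCommGroup E] [NormedSpace ℝ E]
    [Nontrivial E] {r s : ℝ} (hs : 0 ≤ s) (h : ball (0 : E) r ⊆ closedBall 0 s) : r ≤ s := by
  by_contra! hsr
  obtain ⟨t, hst, htr⟩ := exists_between hsr
  obtain ⟨x, hx⟩ := exists_norm_eq E (hs.trans hst.le)
  have hxs := mem_closedBall_zero_iff.1 (h (mem_ball_zero_iff.2 (hx.trans_lt htr)))
  linarith

theorem mul_squeezing_le_squeezing [Nontrivial (Cn n)] {D' : Set (Cn n)} {z : Cn n} {e : ℝ}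
    (he : 0 < e) (hD' : D' ⊆ D)
    (h : ∀ f : Cn n → Cn n, DifferentiableOn ℂ f D → InjOn f D → f z = 0 →
      ∀ r : ℝ, ball 0 r ⊆ f '' D → ball 0 (e * r) ⊆ f '' D') :
    e * squeezing D z ≤ squeezing D' z := by
  have hnonneg : 0 ≤ squeezing D' z := Real.sSup_nonneg fun r hr => hr.1.le
  rw [← le_div_iff₀' he]
  refine Real.sSup_le ?_ (by positivity)
  rintro r ⟨hr, f, hf, hinj, hmaps, hfz, hball⟩
  rw [le_div_iff₀' he]
  refine le_csSup ⟨1, ?_⟩ ⟨by positivity, f, hf.mono hD', hinj.mono hD', hmaps.mono_left hD', hfz,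
    h f hf hinj hfz r hball⟩
  rintro s ⟨-, f', -, -, hmaps', -, hball'⟩
  exact le_of_ball_subset_of_subset_closedBall zero_le_one
    (hball'.trans (hmaps'.image_subset.trans ball_subset_closedBall))

end Squeezing

theorem squeezing_localization_at_infty_general {n : ℕ} (D : Set (Cn n)) (hD : IsOpen D)
    (φ : Cn n → EReal) (hφ : IsPshPeakFnAtInfty D φ) :
    ∀ U ∈ Bornology.cobounded (Cn n), ∃ V ∈ Bornology.cobounded (Cn n), V ⊆ U ∧
      ∃ m : ℝ, 0 < m ∧ ∀ z ∈ D ∩ V,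
        squeezing (D ∩ U) z ≥ erexp ((m : EReal) * φ z) * squeezing D z := by
  intro U hU
  obtain ⟨R, hR0, hR⟩ := (Bornology.isCobounded_def.2 hU).compl.exists_pos_norm_le
  obtain ⟨m, hm, hest⟩ := hφ.exists_exp_mul_le_norm hD R
  refine ⟨U ∩ (closedBall 0 (R + 1))ᶜ, inter_mem hU isBounded_closedBall.compl,
    inter_subset_left, m, hm, fun z ⟨hz, _, hzR⟩ => ?_⟩
  have hzR : R + 1 < ‖z‖ := by simpa using hzR
  have : Nontrivial (Cn n) := nontrivial_of_ne z 0 (norm_pos_iff.1 (by linarith))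
  have hσ : 0 ≤ squeezing D z := Real.sSup_nonneg fun r hr => hr.1.le
  set e := Real.exp (m * peakTruncation φ z)
  have he1 : e ≤ 1 := Real.exp_le_one_iff.2
    (mul_nonpos_of_nonneg_of_nonpos hm.le (hφ.peakTruncation_nonpos hz))
  refine (mul_le_mul_of_nonneg_right (hφ.erexp_mul_le hm hz) hσ).trans
    (mul_squeezing_le_squeezing (Real.exp_pos _) inter_subset_left
      fun f hf hinj hfz r hr y hy => ?_)
  have hyr : ‖y‖ < e * r := mem_ball_zero_iff.1 hy
  have hr0 := pos_of_mul_pos_right ((norm_nonneg y).trans_lt hyr) (Real.exp_pos _).le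
  obtain ⟨w, hw, rfl⟩ :=
    hr (mem_ball_zero_iff.2 (hyr.trans_le (mul_le_of_le_one_left hr0.le he1)))
  refine ⟨w, ⟨hw, by_contra fun hwU => ?_⟩, rfl⟩
  exact hyr.not_ge (hest f hf hinj z hz hzR.le hfz r hr w hw (hR w hwU))

/-- Quantitative localization of the squeezing function at `∞` for an
unbounded domain with a psh peak function at `∞`. -/
theorem squeezing_localization_at_infty {n : ℕ} (D : Set (Cn n)) (hD : IsOpen D)
    (hDconn : IsConnected D) (hDunb : ¬ Bornology.IsBounded D)
    (φ : Cn n → EReal) (hφ : IsPshPeakFnAtInfty D φ) :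
    ∀ U ∈ Bornology.cobounded (Cn n), ∃ V ∈ Bornology.cobounded (Cn n), V ⊆ U ∧
      ∃ m : ℝ, 0 < m ∧ ∀ z ∈ D ∩ V,
        squeezing (D ∩ U) z ≥ erexp ((m : EReal) * φ z) * squeezing D z :=
  squeezing_localization_at_infty_general D hD φ hφ
end
end

section
/- Let D be an unbounded domain in ℂⁿ for which p = ∞ is a psh peak point. Then for every r > 0 there exists a constant c > 0 such that S_D(z;X) ≥ c|X| (and hence also A_D(z;X) ≥ c|X| and K_D(z;X) ≥ c|X|) for all z ∈ D with |z| < r and all X ∈ ℂⁿ. -/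
open Set Metric Filter Topology
open scoped Classical

noncomputable section

/-- The Kobayashi metric of `D`:
`K_D(z;X) = inf {|α| : ∃ f : 𝔻 → D holomorphic, f 0 = z, α • f' 0 = X}`. -/
def kobayashi {n : ℕ} (D : Set (Cn n)) (z X : Cn n) : ℝ :=
  sInf {c : ℝ | ∃ α : ℂ, c = ‖α‖ ∧ ∃ f : ℂ → Cn n,
    DifferentiableOn ℂ f (ball (0:ℂ) 1) ∧ MapsTo f (ball (0:ℂ) 1) D ∧
    f 0 = z ∧ α • deriv f 0 = X}

/-- The pluricomplex Green function of `D` with pole at `z`: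
`g_D(z,w) = sup {u(w) : u psh on D, u < 0, u ≤ log‖·-z‖ + C near z for some C}`. -/
def greenFn {n : ℕ} (D : Set (Cn n)) (z w : Cn n) : EReal :=
  sSup {t : EReal | ∃ u : Cn n → EReal, PSHOn u D ∧ (∀ x ∈ D, u x < 0) ∧
    (∃ C : ℝ, ∀ᶠ x in 𝓝[D] z, u x ≤ ((Real.log ‖x - z‖ + C : ℝ) : EReal)) ∧ t = u w}

/-- The Azukawa metric of `D`:
`A_D(z;X) = limsup_{λ→0, λ≠0} exp(g_D(z, z+λX)) / |λ|`. -/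
def azukawa {n : ℕ} (D : Set (Cn n)) (z X : Cn n) : ℝ :=
  Filter.limsup (fun lam : ℂ => erexp (greenFn D z (z + lam • X)) / ‖lam‖) (𝓝[≠] (0:ℂ))

/-- Logarithm with values in `EReal`, so that `elog 0 = -∞`. -/
def elog (x : ℝ) : EReal := if x ≤ 0 then ⊥ else ((Real.log x : ℝ) : EReal)

/-- The Levi form of a real-valued `C²` function `v` at `z` in direction `X`:
`L_v(z;X) = Σ_{j,k} ∂²v/∂z_j∂z̄_k(z) X_j X̄_k`, expressed through the real second
derivative via `Σ_{j,k} ∂²v/∂z_j∂z̄_k(z) X_j X̄_k = (D²v(z)(X,X) + D²v(z)(iX,iX))/4`. -/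
def leviForm {n : ℕ} (v : Cn n → ℝ) (z X : Cn n) : ℝ :=
  (1/4) * (iteratedFDeriv ℝ 2 v z ![X, X] +
    iteratedFDeriv ℝ 2 v z ![Complex.I • X, Complex.I • X])

/-- The Sibony metric of `D`: `S_D(z;X) = sup_v (L_v(z;X))^{1/2}`, the supremum over all
`v : D → [0,1)` with `v(z) = 0`, `log v` psh on `D`, and `v` of class `C²` near `z`. -/
def sibony {n : ℕ} (D : Set (Cn n)) (z X : Cn n) : ℝ :=
  sSup {s : ℝ | ∃ v : Cn n → ℝ, (∀ w ∈ D, 0 ≤ v w ∧ v w < 1) ∧ v z = 0 ∧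
    PSHOn (fun w => elog (v w)) D ∧ (∃ W ∈ 𝓝 z, ContDiffOn ℝ 2 v W) ∧
    s = Real.sqrt (leviForm v z X)}

/-!
The peak function `φ` of `∞` is uniformly negative on bounded sets and close to `0` far away, so for
a large `S` a multiple `ψ` of `φ` satisfies `ψ ≤ -2 log S` on `‖w - z‖ < 2` and `ψ ≥ -log S` on
`‖w - z‖ > S - 1`, uniformly in `z` with `‖z‖ < r`. Hence `log (S⁻²‖w - z‖)` dominates `ψ` for
`1 ≤ ‖w - z‖ < 2` and is dominated by it for `S - 1 < ‖w - z‖ ≤ S`, and the two functions glue,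
through their maximum, to a negative plurisubharmonic `U` on `D` with logarithmic pole at `z`. Then
`exp (2U)` competes in the Sibony metric, `U` competes in the Green function, and the Schwarz lemma
for `U ∘ f` controls the discs `f` in the Kobayashi metric.

Gluing needs plurisubharmonicity to be a local condition and the Schwarz lemma needs a maximum
principle for `U ∘ f`. Both come from testing `U` with strictly superharmonic functions on complex
lines. To pass from lines to a disc `f`, one maximizes `U (f t + e) - H t + δ‖t‖² - A‖e‖²` over the
translates `f + e`; moving `e` along with `t` straightens the disc to second order, which
produces a test function touching `U` from above on a complex line.
-/

open InnerProductSpace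
open scoped Real

/-! ### Circle averages and entire functions -/

theorem exists_continuous_ge_eq_at_ends {a b : ℝ} (hab : a < b) {g : ℝ → ℝ} (hg : Continuous g)
    {δ : ℝ} (hδ : 0 < δ) :
    ∃ G : ℝ → ℝ, Continuous G ∧ G a = G b ∧ (∀ θ ∈ Icc a b, g θ ≤ G θ) ∧
      ∫ θ in a..b, G θ ≤ (∫ θ in a..b, g θ) + δ := by
  have hp : 0 < b - a := sub_pos.2 hab
  set m := max (g a) (g b)
  have ha : 0 ≤ m - g a := sub_nonneg.2 (le_max_left _ _)
  have hb : 0 ≤ m - g b := sub_nonneg.2 (le_max_right _ _)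
  obtain ⟨N, hN⟩ := exists_nat_gt ((b - a) * (m - g a + (m - g b)) / δ)
  have hN₀ : 0 < N := Nat.cast_pos.1 (lt_of_le_of_lt (by positivity) hN)
  refine ⟨fun θ ↦ g θ + ((m - g a) * ((b - θ) / (b - a)) ^ N +
    (m - g b) * ((θ - a) / (b - a)) ^ N), by fun_prop, ?_, fun θ hθ ↦ ?_, ?_⟩
  · simp [hp.ne', hN₀.ne']
  · have h₁ : 0 ≤ (b - θ) / (b - a) := div_nonneg (sub_nonneg.2 hθ.2) hp.le
    have h₂ : 0 ≤ (θ - a) / (b - a) := div_nonneg (sub_nonneg.2 hθ.1) hp.le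
    exact le_add_of_nonneg_right (by positivity)
  · have h₁ : ∫ θ in a..b, ((b - θ) / (b - a)) ^ N = (b - a) / (N + 1) := by
      rw [intervalIntegral.integral_comp_sub_left (fun x ↦ (x / (b - a)) ^ N),
        intervalIntegral.integral_comp_div (fun x ↦ x ^ N) hp.ne']
      simp [hp.ne', div_eq_mul_inv]
    have h₂ : ∫ θ in a..b, ((θ - a) / (b - a)) ^ N = (b - a) / (N + 1) := by
      rw [intervalIntegral.integral_comp_sub_right (fun x ↦ (x / (b - a)) ^ N),
        intervalIntegral.integral_comp_div (fun x ↦ x ^ N) hp.ne']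
      simp [hp.ne', div_eq_mul_inv]
    rw [intervalIntegral.integral_add (hg.intervalIntegrable _ _)
      (Continuous.intervalIntegrable (by fun_prop) _ _), intervalIntegral.integral_add
      (Continuous.intervalIntegrable (by fun_prop) _ _)
      (Continuous.intervalIntegrable (by fun_prop) _ _), intervalIntegral.integral_const_mul,
      intervalIntegral.integral_const_mul, h₁, h₂, ← add_mul, add_le_add_iff_left, ← mul_div_assoc,
      div_le_iff₀ (by positivity)]
    rw [div_lt_iff₀ hδ] at hN
    linarith

theorem exists_re_mul_eq_re_of_mem_span_fourier {P : C(AddCircle (2 * π), ℂ)}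
    (hP : P ∈ Submodule.span ℂ (range (@fourier (2 * π)))) (c : ℂ) :
    ∃ q : ℂ → ℂ, Differentiable ℂ q ∧ ∀ θ : ℝ, (c * P θ).re = (q (circleMap 0 1 θ)).re := by
  induction hP using Submodule.span_induction generalizing c with
  | mem _ h =>
    obtain ⟨m, rfl⟩ := h
    have hm (θ : ℝ) : fourier m (θ : AddCircle (2 * π)) = circleMap 0 1 θ ^ m := by
      simp only [fourier_coe_apply, circleMap_zero, Complex.ofReal_one, one_mul,
        ← Complex.exp_int_mul]
      push_cast
      field_simp
    obtain ⟨k, rfl | rfl⟩ := m.eq_nat_or_neg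
    · exact ⟨fun t ↦ c * t ^ k, by fun_prop, fun θ ↦ by rw [hm, zpow_natCast]⟩
    · refine ⟨fun t ↦ starRingEnd ℂ c * t ^ k, by fun_prop, fun θ ↦ ?_⟩
      have hinv : (circleMap 0 1 θ)⁻¹ = starRingEnd ℂ (circleMap 0 1 θ) :=
        Complex.inv_eq_conj (by simp)
      rw [hm, zpow_neg, zpow_natCast, ← inv_pow, hinv, ← Complex.conj_re]
      simp
  | zero => exact ⟨0, differentiable_const 0, by simp⟩
  | add _ _ _ _ h₁ h₂ =>
    obtain ⟨q₁, hq₁, h₁⟩ := h₁ c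
    obtain ⟨q₂, hq₂, h₂⟩ := h₂ c
    exact ⟨q₁ + q₂, hq₁.add hq₂, fun θ ↦ by simp [mul_add, ← h₁ θ, ← h₂ θ]⟩
  | smul a _ _ h =>
    obtain ⟨q, hq, h⟩ := h (c * a)
    exact ⟨q, hq, fun θ ↦ by simp [← h θ, mul_assoc]⟩

theorem exists_entire_abs_sub_re_lt {g : ℝ → ℝ} (hg : Continuous g) (hper : g 0 = g (2 * π))
    {δ : ℝ} (hδ : 0 < δ) :
    ∃ q : ℂ → ℂ, Differentiable ℂ q ∧
      ∀ θ ∈ Icc 0 (2 * π), |g θ - (q (circleMap 0 1 θ)).re| < δ := by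
  have : Fact (0 < 2 * π) := ⟨Real.two_pi_pos⟩
  let G : C(AddCircle (2 * π), ℂ) := ⟨AddCircle.liftIco (2 * π) 0 fun θ ↦ (g θ : ℂ),
    AddCircle.liftIco_zero_continuous (by simp [hper]) (by fun_prop)⟩
  have hG : ∀ θ ∈ Icc 0 (2 * π), G θ = g θ := by
    intro θ hθ
    rcases hθ.2.eq_or_lt with rfl | h
    · rw [AddCircle.coe_period, ← hper]
      exact AddCircle.liftIco_zero_coe_apply (f := fun θ ↦ (g θ : ℂ))
        (left_mem_Ico.2 Real.two_pi_pos)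
    · exact AddCircle.liftIco_zero_coe_apply (f := fun θ ↦ (g θ : ℂ)) ⟨hθ.1, h⟩
  have hdense : G ∈ closure (Submodule.span ℂ (range (@fourier (2 * π))) : Set _) := by
    rw [← Submodule.topologicalClosure_coe, span_fourier_closure_eq_top]
    trivial
  obtain ⟨P, hP, hGP⟩ := Metric.mem_closure_iff.1 hdense δ hδ
  obtain ⟨q, hq, hPq⟩ := exists_re_mul_eq_re_of_mem_span_fourier hP 1
  refine ⟨q, hq, fun θ hθ ↦ ?_⟩
  rw [← hPq, one_mul, ← Complex.ofReal_re (g θ), ← hG θ hθ, ← Complex.sub_re]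
  calc |(G θ - P θ).re| ≤ ‖G θ - P θ‖ := Complex.abs_re_le_norm _
    _ = dist (G θ) (P θ) := (dist_eq_norm _ _).symm
    _ ≤ dist G P := ContinuousMap.dist_apply_le_dist _
    _ < δ := hGP

theorem mean_re_circleMap_eq {q : ℂ → ℂ} {r : ℝ} (hq : AnalyticOnNhd ℂ q (closedBall 0 |r|)) :
    1 / (2 * π) * ∫ θ in (0 : ℝ)..(2 * π), (q (circleMap 0 r θ)).re = (q 0).re := by
  have hharm : HarmonicOnNhd (fun t ↦ (q t).re) (closedBall 0 |r|) :=
    fun t ht ↦ (hq t ht).harmonicAt_re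
  rw [← hharm.circleAverage_eq, Real.circleAverage_def, one_div, smul_eq_mul]

theorem exists_entire_re_ge_on_circle {g : ℝ → ℝ} (hg : Continuous g) {δ : ℝ} (hδ : 0 < δ) :
    ∃ q : ℂ → ℂ, Differentiable ℂ q ∧
      (∀ θ ∈ Icc 0 (2 * π), g θ ≤ (q (circleMap 0 1 θ)).re) ∧
      (q 0).re ≤ 1 / (2 * π) * (∫ θ in (0 : ℝ)..(2 * π), g θ) + δ := by
  obtain ⟨G, hG, hper, hgG, hint⟩ :=
    exists_continuous_ge_eq_at_ends Real.two_pi_pos hg (show 0 < π * δ by positivity)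
  obtain ⟨q, hq, hGq⟩ := exists_entire_abs_sub_re_lt hG hper (show 0 < δ / 4 by positivity)
  refine ⟨fun t ↦ q t + (δ / 4 : ℝ), by fun_prop, fun θ hθ ↦ ?_, ?_⟩
  · have := (abs_lt.1 (hGq θ hθ)).2
    have := hgG θ hθ
    rw [Complex.add_re, Complex.ofReal_re]
    linarith
  · have hmean := mean_re_circleMap_eq (r := 1) fun t _ ↦ hq.analyticAt t
    have hcont : Continuous fun θ ↦ (q (circleMap 0 1 θ)).re :=
      Complex.continuous_re.comp (hq.continuous.comp (continuous_circleMap 0 1))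
    have hle : ∫ θ in (0 : ℝ)..(2 * π), (q (circleMap 0 1 θ)).re ≤
        ∫ θ in (0 : ℝ)..(2 * π), (G θ + δ / 4) := by
      refine intervalIntegral.integral_mono_on Real.two_pi_pos.le
        (hcont.intervalIntegrable _ _)
        (Continuous.intervalIntegrable (by fun_prop) _ _) fun θ hθ ↦ ?_
      linarith [(abs_lt.1 (hGq θ hθ)).1]
    rw [intervalIntegral.integral_add (hG.intervalIntegrable _ _)
      intervalIntegrable_const, intervalIntegral.integral_const, smul_eq_mul, sub_zero] at hle
    calc (q 0).re + ((δ / 4 : ℝ) : ℂ).re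
        ≤ 1 / (2 * π) * ((∫ θ in (0 : ℝ)..(2 * π), g θ) + π * δ + 2 * π * (δ / 4)) + δ / 4 := by
          rw [← hmean, Complex.ofReal_re]
          gcongr
          linarith
      _ = 1 / (2 * π) * (∫ θ in (0 : ℝ)..(2 * π), g θ) + δ := by
          field_simp
          ring

/-! ### Viscosity plurisubharmonicity and the maximum principle -/

theorem tendsto_add_smul_nhds {E : Type*} [NormedAddCommGroup E] [NormedSpace ℂ E] (a b : E) :
    Tendsto (fun s : ℂ ↦ a + s • b) (𝓝 0) (𝓝 a) :=
  Continuous.tendsto' (by fun_prop) _ _ (by simp)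

theorem upperSemicontinuousOn_add_coe {α : Type*} [TopologicalSpace α] {S : Set α} {u : α → EReal}
    (hu : UpperSemicontinuousOn u S) {h : α → ℝ} (hh : ContinuousOn h S) :
    UpperSemicontinuousOn (fun x ↦ u x + (h x : EReal)) S :=
  hu.add' (continuous_coe_real_ereal.comp_continuousOn hh).upperSemicontinuousOn
    fun _ _ ↦ EReal.continuousAt_add (by simp) (by simp)

theorem exists_isMaxOn_add_coe {α : Type*} [TopologicalSpace α] {S : Set α} (hS : IsCompact S)
    {u : α → EReal} (hu : UpperSemicontinuousOn u S) (htop : ∀ x ∈ S, u x < ⊤)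
    {h : α → ℝ} (hh : ContinuousOn h S) {x₀ : α} (hx₀ : x₀ ∈ S) {m : ℝ}
    (hm : ((m - h x₀ : ℝ) : EReal) < u x₀) :
    ∃ x ∈ S, ∃ M : ℝ, m < M ∧ u x = ((M - h x : ℝ) : EReal) ∧
      ∀ y ∈ S, u y ≤ ((M - h y : ℝ) : EReal) := by
  obtain ⟨x, hx, hmax⟩ := (upperSemicontinuousOn_add_coe hu hh).exists_isMaxOn ⟨x₀, hx₀⟩ hS
  have hmx : (m : EReal) < u x + h x := by
    refine lt_of_lt_of_le ?_ (hmax hx₀)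
    rw [EReal.coe_sub] at hm
    exact (EReal.sub_lt_iff (by simp) (by simp)).1 hm
  have hbot : u x ≠ ⊥ := fun hb ↦ by simp [hb] at hmx
  lift u x to ℝ using ⟨(htop x hx).ne, hbot⟩ with y hy
  refine ⟨x, hx, y + h x, by exact_mod_cast hmx, by simp [← hy], fun w hw ↦ ?_⟩
  rw [EReal.coe_sub, EReal.le_sub_iff_add_le (by simp) (by simp), EReal.coe_add, hy]
  exact hmax hw

theorem exists_forall_le_coe_sub {α : Type*} [TopologicalSpace α] {S : Set α} (hS : IsCompact S)
    {u : α → EReal} (hu : UpperSemicontinuousOn u S) (htop : ∀ x ∈ S, u x < ⊤)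
    {h : α → ℝ} (hh : ContinuousOn h S) :
    ∃ B : ℝ, ∀ x ∈ S, u x ≤ ((B - h x : ℝ) : EReal) := by
  by_cases hne : ∃ x₀ ∈ S, ((0 - h x₀ : ℝ) : EReal) < u x₀
  · obtain ⟨x₀, hx₀, h₀⟩ := hne
    obtain ⟨_, _, M, _, _, hM⟩ := exists_isMaxOn_add_coe hS hu htop hh hx₀ h₀
    exact ⟨M, hM⟩
  · push Not at hne
    exact ⟨0, hne⟩

/-- Plurisubharmonicity of `u` at `a` in the viscosity sense: on no complex line through `a` does a
strictly superharmonic function, taken in the form `Re q - κ|s|²` with `q` holomorphic, touch `u`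
from above at `a`. -/
structure ViscosityPSHAt {E : Type*} [NormedAddCommGroup E] [NormedSpace ℂ E] (u : E → EReal)
    (a : E) : Prop where
  upperSemicontinuousAt : UpperSemicontinuousAt u a
  lt_top : u a < ⊤
  not_touching : ∀ (b : E) (q : ℂ → ℂ), AnalyticAt ℂ q 0 → u a = ((q 0).re : EReal) → ∀ κ > 0,
    ¬ ∀ᶠ s : ℂ in 𝓝 0, u (a + s • b) ≤ (((q s).re - κ * ‖s‖ ^ 2 : ℝ) : EReal)

theorem exists_analyticAt_re_eq_add {H : ℂ → ℝ} {t : ℂ} (hH : HarmonicAt H t) :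
    ∃ Q : ℂ → ℂ, AnalyticAt ℂ Q 0 ∧ ∀ᶠ s in 𝓝 0, H (t + s) = (Q s).re := by
  obtain ⟨ε, hε, hball⟩ := Metric.eventually_nhds_iff_ball.1 hH.eventually
  obtain ⟨F, hF, hre⟩ := HarmonicOnNhd.exists_analyticOnNhd_ball_re_eq hball
  refine ⟨fun s ↦ F (t + s), (hF t (mem_ball_self hε)).fun_comp_of_eq (by fun_prop) (add_zero t),
    ?_⟩
  filter_upwards [ball_mem_nhds 0 hε] with s hs
  exact (hre (by simpa using hs)).symm

theorem exists_analyticAt_taylor_remainder {E : Type*} [NormedAddCommGroup E] [NormedSpace ℂ E]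
    {f : ℂ → E} {t : ℂ} (hf : AnalyticAt ℂ f t) :
    ∃ R : ℂ → E, AnalyticAt ℂ R 0 ∧ R 0 = 0 ∧ (∀ s, f (t + s) - R s = f t + s • deriv f t) ∧
      ∀ (A : ℝ) {δ : ℝ}, 0 < δ → ∀ᶠ s in 𝓝 0, A * ‖R s‖ ^ 2 ≤ δ * ‖s‖ ^ 2 := by
  refine ⟨fun s ↦ f (t + s) - f t - s • deriv f t, ?_, by simp, fun s ↦ by simp only; abel,
    fun A δ hδ ↦ ?_⟩
  · exact ((hf.fun_comp_of_eq (by fun_prop) (add_zero t)).sub analyticAt_const).sub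
      (analyticAt_id.smul analyticAt_const)
  · have hc : 0 < √(δ / (|A| + 1)) := Real.sqrt_pos.2 (by positivity)
    filter_upwards [(hasDerivAt_iff_isLittleO_nhds_zero.1
      hf.differentiableAt.hasDerivAt).bound hc] with s hs
    calc A * ‖f (t + s) - f t - s • deriv f t‖ ^ 2
        ≤ (|A| + 1) * (√(δ / (|A| + 1)) * ‖s‖) ^ 2 := by
          gcongr
          linarith [le_abs_self A]
      _ = δ * ‖s‖ ^ 2 := by
          rw [mul_pow, Real.sq_sqrt (by positivity)]
          field_simp

section MaximumPrinciple

theorem exists_interior_penalized_max {E : Type*} [NormedAddCommGroup E]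
    [ProperSpace E] {K : Set ℂ} (hK : IsCompact K) {κ : ℝ}
    (hκ : 0 < κ) {F : ℂ × E → EReal} (hF : UpperSemicontinuousOn F (K ×ˢ closedBall 0 κ))
    (htop : ∀ p ∈ K ×ˢ closedBall 0 κ, F p < ⊤) {H : ℂ → ℝ} (hH : ContinuousOn H K) {d : ℝ}
    (hd : 0 < d) (hle : ∀ t ∈ frontier K, ∀ e ∈ closedBall 0 κ, F (t, e) ≤ ((H t + d : ℝ) : EReal))
    {t₀ : ℂ} (ht₀ : t₀ ∈ K) (hlt : ((H t₀ + 2 * d : ℝ) : EReal) < F (t₀, 0)) :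
    ∃ A δ M : ℝ, 0 < δ ∧ ∃ t ∈ interior K, ∃ e ∈ ball 0 κ,
      F (t, e) = ((M - (-H t + δ * ‖t‖ ^ 2 - A * ‖e‖ ^ 2) : ℝ) : EReal) ∧
      ∀ p ∈ K ×ˢ closedBall 0 κ,
        F p ≤ ((M - (-H p.1 + δ * ‖p.1‖ ^ 2 - A * ‖p.2‖ ^ 2) : ℝ) : EReal) := by
  obtain ⟨δ, hδ, hδK⟩ : ∃ δ > 0, ∀ t ∈ K, δ * ‖t‖ ^ 2 ≤ d := by
    obtain ⟨C, hC⟩ := hK.isBounded.exists_norm_le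
    refine ⟨d / (C ^ 2 + 1), by positivity, fun t ht ↦ ?_⟩
    rw [div_mul_eq_mul_div, div_le_iff₀ (by positivity)]
    gcongr
    linarith [pow_le_pow_left₀ (norm_nonneg t) (hC t ht) 2]
  have hS := hK.prod (isCompact_closedBall (0 : E) κ)
  have hHS : ContinuousOn (fun p : ℂ × E ↦ -H p.1) (K ×ˢ closedBall 0 κ) :=
    (hH.comp continuousOn_fst fun p hp ↦ hp.1).neg
  obtain ⟨B, hB⟩ := exists_forall_le_coe_sub hS hF htop hHS
  -- `A ‖e‖²` keeps the maximum off the sphere `‖e‖ = κ`; `δ` is small enough to keep it off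
  -- `frontier K`.
  set A := |B| / κ ^ 2
  obtain ⟨⟨t, e⟩, hte, M, hM, hFM, hmax⟩ := exists_isMaxOn_add_coe hS hF htop
    (h := fun p ↦ -H p.1 + δ * ‖p.1‖ ^ 2 - A * ‖p.2‖ ^ 2)
    ((hHS.add (by fun_prop)).sub (by fun_prop)) (x₀ := (t₀, 0)) ⟨ht₀, mem_closedBall_self hκ.le⟩
    (m := 2 * d) (lt_of_le_of_lt (EReal.coe_le_coe_iff.2 (by
      simp only [norm_zero]
      linarith [show 0 ≤ δ * ‖t₀‖ ^ 2 by positivity])) hlt)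
  have hδt := hδK t hte.1
  have htK : t ∉ frontier K := fun ht ↦ by
    have hFte := hle t ht e hte.2
    rw [hFM, EReal.coe_le_coe_iff] at hFte
    linarith [show 0 ≤ A * ‖e‖ ^ 2 by positivity]
  have heκ : ‖e‖ ≠ κ := fun he ↦ by
    have hFte := hB _ hte
    have hAe : A * ‖e‖ ^ 2 = |B| := by rw [he]; exact div_mul_cancel₀ _ (by positivity)
    rw [hFM, EReal.coe_le_coe_iff] at hFte
    linarith [le_abs_self B]
  exact ⟨A, δ, M, hδ, t, self_sdiff_frontier K ▸ ⟨hte.1, htK⟩, e,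
    mem_ball_zero_iff.2 (lt_of_le_of_ne (mem_closedBall_zero_iff.1 hte.2) heκ), hFM, hmax⟩

variable {E : Type*} [NormedAddCommGroup E] [InnerProductSpace ℂ E] {u : E → EReal}

theorem ViscosityPSHAt.not_eventually_le_penalized {f : ℂ → E} {t : ℂ} {e : E}
    (hu : ViscosityPSHAt u (f t + e)) (hf : AnalyticAt ℂ f t) {H : ℂ → ℝ} (hH : HarmonicAt H t)
    {A δ : ℝ} (hδ : 0 < δ) {M : ℝ}
    (hM : u (f t + e) = ((M - (-H t + δ * ‖t‖ ^ 2 - A * ‖e‖ ^ 2) : ℝ) : EReal)) :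
    ¬ ∀ᶠ p : ℂ × E in 𝓝 (t, e),
      u (f p.1 + p.2) ≤ ((M - (-H p.1 + δ * ‖p.1‖ ^ 2 - A * ‖p.2‖ ^ 2) : ℝ) : EReal) := by
  intro hmax
  obtain ⟨R, hR, hR₀, hfR, hRsq⟩ := exists_analyticAt_taylor_remainder hf
  obtain ⟨Q, hQ, hHQ⟩ := exists_analyticAt_re_eq_add hH
  let q : ℂ → ℂ := fun s ↦ (M - δ * ‖t‖ ^ 2 + A * ‖e‖ ^ 2 : ℝ) + (Q s -
    ((2 * A : ℝ) * inner ℂ e (R s) + (2 * δ : ℝ) * (starRingEnd ℂ t * s)))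
  have hq : AnalyticAt ℂ q 0 := analyticAt_const.add
    (hQ.sub ((analyticAt_const.mul (((innerSL ℂ e).analyticAt _).comp hR)).add (by fun_prop)))
  have hqre (s : ℂ) : (q s).re = M - δ * ‖t‖ ^ 2 + A * ‖e‖ ^ 2 + ((Q s).re -
      (2 * A * (inner ℂ e (R s)).re + 2 * δ * (starRingEnd ℂ t * s).re)) := by
    simp only [q, Complex.add_re, Complex.sub_re, Complex.re_ofReal_mul, Complex.ofReal_re]
  -- Moving `e` to `e - R s` straightens the disc to the complex line in the direction `f' t`.
  have hpath : Tendsto (fun s ↦ (t + s, e - R s)) (𝓝 0) (𝓝 (t, e)) := by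
    have hadd : Tendsto (fun s ↦ t + s) (𝓝 0) (𝓝 t) :=
      Continuous.tendsto' (by fun_prop) _ _ (add_zero t)
    simpa [hR₀] using hadd.prodMk_nhds (tendsto_const_nhds.sub hR.continuousAt.tendsto)
  refine hu.not_touching (deriv f t) q hq ?_ (δ / 2) (half_pos hδ) ?_
  · have hHt : H t = (Q 0).re := by simpa using hHQ.self_of_nhds
    rw [hM, hqre, hR₀, ← hHt, inner_zero_right, mul_zero, Complex.zero_re]
    congr 1
    ring
  filter_upwards [hpath.eventually hmax, hHQ, hRsq A (half_pos hδ)] with s hs hHs hRs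
  have hline : f (t + s) + (e - R s) = f t + e + s • deriv f t := by
    rw [add_sub_left_comm, hfR, add_right_comm, add_comm e, add_right_comm]
  have he : ‖e - R s‖ ^ 2 = ‖e‖ ^ 2 - 2 * (inner ℂ e (R s)).re + ‖R s‖ ^ 2 :=
    norm_sub_sq (𝕜 := ℂ) _ _
  have ht : ‖t + s‖ ^ 2 = ‖t‖ ^ 2 + 2 * (starRingEnd ℂ t * s).re + ‖s‖ ^ 2 := by
    rw [norm_add_sq (𝕜 := ℂ), RCLike.inner_apply', RCLike.re_eq_complex_re]
  rw [← hline]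
  refine hs.trans (EReal.coe_le_coe_iff.2 ?_)
  rw [hqre, he, ht, hHs]
  linarith

theorem exists_tube_viscosityPSHAt {K : Set ℂ} (hK : IsCompact K) {f : ℂ → E}
    (hf : AnalyticOnNhd ℂ f K) (hu : ∀ t ∈ K, ∀ᶠ w in 𝓝 (f t), ViscosityPSHAt u w)
    {H : ℂ → ℝ} (hH : HarmonicOnNhd H K) (hle : ∀ t ∈ frontier K, u (f t) ≤ H t)
    {d : ℝ} (hd : 0 < d) :
    ∃ κ > 0, ∀ e ∈ closedBall (0 : E) κ, (∀ t ∈ K, ViscosityPSHAt u (f t + e)) ∧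
      ∀ t ∈ frontier K, u (f t + e) ≤ ((H t + d : ℝ) : EReal) := by
  have htendsto {t : ℂ} (ht : t ∈ K) :
      Tendsto (fun p : E × ℂ ↦ f p.2 + p.1) (𝓝 (0, t)) (𝓝 (f t)) := by
    have hcont := (hf t ht).continuousAt.tendsto.comp (tendsto_snd (f := 𝓝 (0 : E)))
    simpa [nhds_prod_eq] using hcont.add (tendsto_fst (f := 𝓝 (0 : E)))
  have htube := hK.eventually_forall_of_forall_eventually (x₀ := (0 : E))
    (P := fun e t ↦ ViscosityPSHAt u (f t + e)) fun t ht ↦ (htendsto ht).eventually (hu t ht)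
  have hfrontier := (hK.of_isClosed_subset isClosed_frontier hK.isClosed.frontier_subset
    ).eventually_forall_of_forall_eventually (x₀ := (0 : E))
    (P := fun e t ↦ u (f t + e) ≤ ((H t + d : ℝ) : EReal)) fun t ht ↦ by
      have htK := hK.isClosed.frontier_subset ht
      have hlt : u (f t) < ((H t + d / 2 : ℝ) : EReal) :=
        (hle t ht).trans_lt (EReal.coe_lt_coe_iff.2 (by linarith))
      have hHt : ∀ᶠ p : E × ℂ in 𝓝 (0, t), H t - d / 2 < H p.2 := by
        rw [nhds_prod_eq]
        exact tendsto_snd.eventually ((hH t htK).1.continuousAt.eventually_const_lt (by linarith))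
      filter_upwards [(htendsto htK).eventually
        ((hu t htK).self_of_nhds.upperSemicontinuousAt _ hlt), hHt] with p hp hHp
      exact hp.le.trans (EReal.coe_le_coe_iff.2 (by linarith))
  obtain ⟨κ, hκ, hball⟩ := Metric.nhds_basis_closedBall.eventually_iff.1 (htube.and hfrontier)
  exact ⟨κ, hκ, fun e he ↦ hball he⟩

theorem le_of_le_on_frontier [ProperSpace E] {K : Set ℂ} (hK : IsCompact K) {f : ℂ → E}
    (hf : AnalyticOnNhd ℂ f K) (hu : ∀ t ∈ K, ∀ᶠ w in 𝓝 (f t), ViscosityPSHAt u w)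
    {H : ℂ → ℝ} (hH : HarmonicOnNhd H K) (hle : ∀ t ∈ frontier K, u (f t) ≤ H t) :
    ∀ t ∈ K, u (f t) ≤ H t := by
  by_contra! ⟨t₀, ht₀, hlt⟩
  obtain ⟨y, hHy, hyu⟩ := EReal.lt_iff_exists_real_btwn.1 hlt
  have hd : 0 < (y - H t₀) / 2 := half_pos (sub_pos.2 (EReal.coe_lt_coe_iff.1 hHy))
  obtain ⟨κ, hκ, htube⟩ := exists_tube_viscosityPSHAt hK hf hu hH hle hd
  have husc : UpperSemicontinuousOn (fun p : ℂ × E ↦ u (f p.1 + p.2)) (K ×ˢ closedBall 0 κ) :=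
    fun p hp ↦ UpperSemicontinuousAt.upperSemicontinuousWithinAt _ <|
      UpperSemicontinuousAt.comp (g := fun p : ℂ × E ↦ f p.1 + p.2)
        ((htube p.2 hp.2).1 p.1 hp.1).upperSemicontinuousAt
        (((hf p.1 hp.1).continuousAt.comp continuousAt_fst).add continuousAt_snd)
  obtain ⟨A, δ, M, hδ, t, ht, e, he, hM, hmax⟩ := exists_interior_penalized_max hK hκ husc
    (fun p hp ↦ ((htube p.2 hp.2).1 p.1 hp.1).lt_top) hH.continuousOn hd
    (fun t ht e he ↦ (htube e he).2 t ht) ht₀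
    (by rwa [mul_div_cancel₀ _ two_ne_zero, add_sub_cancel, add_zero])
  have htK := interior_subset ht
  refine ((htube e (ball_subset_closedBall he)).1 t htK).not_eventually_le_penalized
    (hf t htK) (hH t htK) hδ hM ?_
  filter_upwards [prod_mem_nhds (mem_interior_iff_mem_nhds.1 ht) (isOpen_ball.mem_nhds he)]
    with p hp using hmax p ⟨hp.1, ball_subset_closedBall hp.2⟩

end MaximumPrinciple

theorem PSHOn.viscosityPSHAt {n : ℕ} {u : Cn n → EReal} {D : Set (Cn n)} (hu : PSHOn u D)
    (hD : IsOpen D) {a : Cn n} (ha : a ∈ D) (htop : u a < ⊤) : ViscosityPSHAt u a := by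
  refine ⟨fun y hy ↦ hD.nhdsWithin_eq ha ▸ hu.1 a ha y hy, htop, fun b q hq hua κ hκ htouch ↦ ?_⟩
  obtain ⟨r, hr, hball⟩ := Metric.nhds_basis_closedBall.eventually_iff.1
    (((tendsto_add_smul_nhds a b).eventually (hD.mem_nhds ha)).and
      (hq.eventually_analyticAt.and htouch))
  have hcircle (θ : ℝ) : circleMap 0 r θ ∈ closedBall 0 r := circleMap_mem_closedBall 0 hr.le θ
  have hcont : Continuous fun θ ↦ (q (circleMap 0 r θ)).re :=
    Complex.continuous_re.comp (continuous_iff_continuousAt.2 fun θ ↦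
      (hball (hcircle θ)).2.1.continuousAt.comp (continuous_circleMap 0 r).continuousAt)
  have hmean := mean_re_circleMap_eq (q := q) (r := r)
    fun t ht ↦ (hball (by rwa [abs_of_pos hr] at ht)).2.1
  have hle := hu.2 a ha b r hr (fun t ht ↦ (hball (by simpa using ht)).1)
    (fun θ ↦ (q (circleMap 0 r θ)).re - κ * r ^ 2) (by fun_prop) fun θ ↦ by
      simpa [← circleMap_zero, abs_of_pos hr] using (hball (hcircle θ)).2.2
  rw [hua, EReal.coe_le_coe_iff, intervalIntegral.integral_sub (hcont.intervalIntegrable _ _)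
    intervalIntegrable_const, mul_sub, hmean, intervalIntegral.integral_const, smul_eq_mul,
    sub_zero, ← mul_assoc, one_div_mul_cancel Real.two_pi_pos.ne', one_mul] at hle
  linarith [show 0 < κ * r ^ 2 by positivity]

theorem pshOn_of_viscosityPSHAt {n : ℕ} {u : Cn n → EReal} {D : Set (Cn n)} (hD : IsOpen D)
    (hu : ∀ a ∈ D, ViscosityPSHAt u a) : PSHOn u D := by
  refine ⟨fun a ha ↦ (hu a ha).upperSemicontinuousAt.upperSemicontinuousWithinAt D,
    fun a _ b r hr hmem g hg hle ↦ ?_⟩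
  by_contra! hlt
  obtain ⟨y, hy, hyu⟩ := EReal.lt_iff_exists_real_btwn.1 hlt
  obtain ⟨q, hq, hgq, hq₀⟩ := exists_entire_re_ge_on_circle hg
    (sub_pos.2 (EReal.coe_lt_coe_iff.1 hy))
  have hH : HarmonicOnNhd (fun t : ℂ ↦ (q (t / r)).re) (closedBall 0 r) := fun t _ ↦
    ((hq.analyticAt _).fun_comp (by fun_prop)).harmonicAt_re
  have hmax := le_of_le_on_frontier (u := u) (f := fun t ↦ a + t • b)
    (isCompact_closedBall 0 r) (fun t _ ↦ by fun_prop) (fun t ht ↦ (hD.eventually_mem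
      (hmem t (by simpa using ht))).mono hu) hH (fun t ht ↦ ?_) 0 (mem_closedBall_self hr.le)
  · refine hyu.not_ge ?_
    simp only [zero_smul, add_zero, zero_div] at hmax
    exact hmax.trans (EReal.coe_le_coe_iff.2 (by linarith))
  · rw [frontier_closedBall 0 hr.ne', ← abs_of_pos hr, ← image_circleMap_Ioc] at ht
    obtain ⟨θ, hθ, rfl⟩ := ht
    have hdiv : circleMap 0 r θ / r = circleMap 0 1 θ := by
      simp [circleMap, hr.ne']
    simp only [hdiv]
    have := hgq θ (Ioc_subset_Icc_self hθ)
    rw [circleMap_zero]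
    exact (hle θ).trans (EReal.coe_le_coe_iff.2 this)

/-! ### Operations on viscosity plurisubharmonic functions -/

theorem elog_eq_log_ofReal (x : ℝ) : elog x = ENNReal.log (ENNReal.ofReal x) :=
  (ENNReal.log_ofReal x).symm

theorem continuous_elog : Continuous elog := by
  simp only [funext elog_eq_log_ofReal]
  exact ENNReal.continuous_log.comp ENNReal.continuous_ofReal

theorem elog_lt_top (x : ℝ) : elog x < ⊤ := by
  rw [elog_eq_log_ofReal, ENNReal.log_lt_top_iff]
  exact ENNReal.ofReal_lt_top

theorem elog_of_pos {x : ℝ} (hx : 0 < x) : elog x = Real.log x := if_neg hx.not_ge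

theorem elog_lt_zero {x : ℝ} (hx : x < 1) : elog x < 0 := by
  rw [elog_eq_log_ofReal, ENNReal.log_lt_zero_iff]
  exact ENNReal.ofReal_lt_one.2 hx

theorem elog_le_elog {x y : ℝ} (hxy : x ≤ y) : elog x ≤ elog y := by
  simp only [elog_eq_log_ofReal]
  exact ENNReal.log_le_log (ENNReal.ofReal_le_ofReal hxy)

theorem elog_le_coe_iff {x y : ℝ} : elog x ≤ (y : EReal) ↔ x ≤ Real.exp y := by
  rw [← Real.log_exp y, ← elog_of_pos (Real.exp_pos y), Real.log_exp, elog_eq_log_ofReal,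
    elog_eq_log_ofReal, ENNReal.log_le_log_iff, ENNReal.ofReal_le_ofReal_iff (Real.exp_pos y).le]

theorem elog_le_log_iff {x y : ℝ} (hy : 0 < y) : elog x ≤ ((Real.log y : ℝ) : EReal) ↔ x ≤ y := by
  rw [elog_le_coe_iff, Real.exp_log hy]

theorem erexp_eq_toReal_exp (x : EReal) : erexp x = (EReal.exp x).toReal := by
  induction x <;> simp [erexp, Real.exp_nonneg]

theorem erexp_nonneg (x : EReal) : 0 ≤ erexp x :=
  erexp_eq_toReal_exp x ▸ ENNReal.toReal_nonneg

theorem erexp_lt_one {x : EReal} (hx : x < 0) : erexp x < 1 := by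
  rw [erexp_eq_toReal_exp]
  exact ENNReal.toReal_lt_of_lt_ofReal (by simpa using hx)

theorem erexp_le_erexp {x y : EReal} (hxy : x ≤ y) (hy : y < ⊤) : erexp x ≤ erexp y := by
  simp only [erexp_eq_toReal_exp]
  exact ENNReal.toReal_mono (EReal.exp_lt_top_iff.2 hy).ne (EReal.exp_monotone hxy)

theorem elog_erexp {x : EReal} (hx : x < ⊤) : elog (erexp x) = x := by
  rw [elog_eq_log_ofReal, erexp_eq_toReal_exp,
    ENNReal.ofReal_toReal (EReal.exp_lt_top_iff.2 hx).ne, EReal.log_exp]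

theorem erexp_coe (x : ℝ) : erexp x = Real.exp x := by
  simp [erexp]

theorem erexp_elog {x : ℝ} (hx : 0 ≤ x) : erexp (elog x) = x := by
  rw [elog_eq_log_ofReal, erexp_eq_toReal_exp, ENNReal.exp_log, ENNReal.toReal_ofReal hx]

theorem erexp_coe_mul (c : ℝ) (x : EReal) : erexp (c * x) = erexp x ^ c := by
  rw [erexp_eq_toReal_exp, erexp_eq_toReal_exp, mul_comm, EReal.exp_mul, ENNReal.toReal_rpow]

namespace ViscosityPSHAt

variable {E : Type*} [NormedAddCommGroup E] [NormedSpace ℂ E] {u v : E → EReal} {a : E}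

theorem congr (hu : ViscosityPSHAt u a) (huv : u =ᶠ[𝓝 a] v) : ViscosityPSHAt v a := by
  refine ⟨?_, huv.self_of_nhds ▸ hu.lt_top, fun b q hq hva κ hκ htouch ↦ ?_⟩
  · have husc := hu.upperSemicontinuousAt
    rw [← upperSemicontinuousWithinAt_univ_iff] at husc ⊢
    exact husc.congr_of_eventuallyEq (mem_univ a) (by rwa [nhdsWithin_univ])
  · refine hu.not_touching b q hq (huv.self_of_nhds.trans hva) κ hκ ?_
    filter_upwards [(tendsto_add_smul_nhds a b).eventually huv, htouch]
      with s hs hle using hs.trans_le hle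

theorem sup (hu : ViscosityPSHAt u a) (hv : ViscosityPSHAt v a) :
    ViscosityPSHAt (fun x ↦ u x ⊔ v x) a := by
  refine ⟨hu.upperSemicontinuousAt.sup hv.upperSemicontinuousAt, max_lt hu.lt_top hv.lt_top,
    fun b q hq ha κ hκ htouch ↦ ?_⟩
  rcases max_choice (u a) (v a) with h | h
  · exact hu.not_touching b q hq (h.symm.trans ha) κ hκ
      (htouch.mono fun s hs ↦ (le_max_left _ _).trans hs)
  · exact hv.not_touching b q hq (h.symm.trans ha) κ hκ
      (htouch.mono fun s hs ↦ (le_max_right _ _).trans hs)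

theorem const_mul (hu : ViscosityPSHAt u a) {c : ℝ} (hc : 0 < c) :
    ViscosityPSHAt (fun x ↦ (c : EReal) * u x) a := by
  have hc₀ : (0 : EReal) < c := EReal.coe_pos.2 hc
  have hlt (x : E) (y : EReal) : (c : EReal) * u x < y ↔ u x < y / c := by
    rw [EReal.lt_div_iff hc₀ (EReal.coe_ne_top c), mul_comm]
  have hle (x : E) (y : ℝ) : (c : EReal) * u x ≤ y ↔ u x ≤ ((y / c : ℝ) : EReal) := by
    rw [EReal.coe_div, EReal.le_div_iff_mul_le hc₀ (EReal.coe_ne_top c), mul_comm]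
  refine ⟨fun y hy ↦ ?_, (hlt a ⊤).2 ?_, fun b q hq ha κ hκ htouch ↦ ?_⟩
  · simp only [hlt] at hy ⊢
    exact hu.upperSemicontinuousAt _ hy
  · rw [EReal.top_div_of_pos_ne_top hc₀ (EReal.coe_ne_top c)]
    exact hu.lt_top
  · have hdiv (s : ℂ) : (q s / c).re = (q s).re / c := by rw [Complex.div_ofReal_re]
    refine hu.not_touching b (fun s ↦ q s / c) (hq.div_const) ?_ (κ / c) (by positivity)
      (htouch.mono fun s hs ↦ ?_)
    · rw [hdiv, EReal.coe_div, ← ha, ← EReal.mul_div,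
        EReal.mul_div_cancel (EReal.coe_ne_bot c) (EReal.coe_ne_top c) hc₀.ne']
    · rw [hle] at hs
      refine hs.trans_eq ?_
      rw [hdiv]
      congr 1
      ring

end ViscosityPSHAt

theorem viscosityPSHAt_elog_norm {E F : Type*} [NormedAddCommGroup E] [NormedSpace ℂ E]
    [NormedAddCommGroup F] [NormedSpace ℂ F] {g : E → F} {a : E} (hg : AnalyticAt ℂ g a) :
    ViscosityPSHAt (fun w ↦ elog ‖g w‖) a := by
  refine ⟨(continuous_elog.continuousAt.comp hg.continuousAt.norm).upperSemicontinuousAt,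
    elog_lt_top _, fun b q hq ha κ hκ htouch ↦ ?_⟩
  have hga : ‖g a‖ = Real.exp (q 0).re := by
    rw [← erexp_elog (norm_nonneg (g a)), ha, erexp_coe]
  obtain ⟨ℓ, hℓ, hℓa⟩ := exists_dual_vector'' ℂ (g a)
  set f : ℂ → ℂ := fun s ↦ ℓ (g (a + s • b)) * Complex.exp (-q s)
  have hf : AnalyticAt ℂ f 0 := ((ℓ.analyticAt _).comp (hg.fun_comp_of_eq (by fun_prop)
    (by simp))).mul hq.neg.cexp
  have hf₀ : ‖f 0‖ = 1 := by
    simp [f, hℓa, hga, Complex.norm_exp, ← Real.exp_add]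
  have hfle : ∀ᶠ s in 𝓝 0, ‖f s‖ ≤ Real.exp (-(κ * ‖s‖ ^ 2)) := by
    filter_upwards [htouch] with s hs
    calc ‖f s‖ ≤ ‖g (a + s • b)‖ * Real.exp (-(q s).re) := by
          rw [norm_mul, Complex.norm_exp, Complex.neg_re]
          gcongr
          exact (ℓ.le_of_opNorm_le hℓ _).trans_eq (one_mul _)
      _ ≤ Real.exp ((q s).re - κ * ‖s‖ ^ 2) * Real.exp (-(q s).re) := by
          gcongr
          exact elog_le_coe_iff.1 hs
      _ = Real.exp (-(κ * ‖s‖ ^ 2)) := by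
          rw [← Real.exp_add]
          congr 1
          ring
  have hmax : IsLocalMax (norm ∘ f) 0 := by
    filter_upwards [hfle] with s hs
    rw [Function.comp, Function.comp, hf₀]
    exact hs.trans (Real.exp_le_one_iff.2 (neg_nonpos.2 (by positivity)))
  have hconst := Complex.norm_eventually_eq_of_isLocalMax
    (hf.eventually_analyticAt.mono fun _ h ↦ h.differentiableAt) hmax
  obtain ⟨s, ⟨hs, hsle⟩, hs₀⟩ := (((hconst.and hfle).filter_mono nhdsWithin_le_nhds).and
    (self_mem_nhdsWithin (s := {0}ᶜ))).exists
  rw [hs, hf₀, Real.one_le_exp_iff] at hsle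
  have : 0 < ‖s‖ := norm_pos_iff.2 hs₀
  linarith [show 0 < κ * ‖s‖ ^ 2 by positivity]

/-! ### The Schwarz lemma -/

theorem eventually_const_mul_log_add_le {m m' : ℝ} (hm : m' < m) (C : ℝ) {r : ℝ} (hr : r ≠ 0) :
    ∀ᶠ t : ℂ in 𝓝[≠] 0, m * Real.log ‖t‖ + C ≤ m' * Real.log (‖t‖ / r) := by
  have hlog : Tendsto (fun t : ℂ ↦ Real.log ‖t‖) (𝓝[≠] 0) atBot :=
    Real.tendsto_log_nhdsGT_zero.comp tendsto_norm_nhdsNE_zero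
  filter_upwards [hlog.eventually_le_atBot (-(C + m' * Real.log r) / (m - m')),
    self_mem_nhdsWithin] with t ht ht₀
  rw [le_div_iff₀ (sub_pos.2 hm)] at ht
  rw [Real.log_div (norm_ne_zero_iff.2 ht₀) hr]
  linarith

theorem frontier_closedBall_diff_ball_subset {E : Type*} [SeminormedAddCommGroup E] (ρ r : ℝ) :
    frontier (closedBall (0 : E) r \ ball 0 ρ) ⊆ {t | ‖t‖ = r ∨ ‖t‖ = ρ} := by
  intro t ht
  obtain ⟨htr, htρ⟩ := (isClosed_closedBall.sdiff isOpen_ball).frontier_subset ht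
  rw [mem_closedBall_zero_iff] at htr
  rw [mem_ball_zero_iff, not_lt] at htρ
  rw [mem_ofPred_eq]
  by_contra! ⟨hr, hρ⟩
  refine ht.2 (mem_interior.2 ⟨{s | ‖s‖ < r} ∩ {s | ρ < ‖s‖}, fun s hs ↦ ?_,
    (isOpen_lt continuous_norm continuous_const).inter (isOpen_lt continuous_const continuous_norm),
    htr.lt_of_ne hr, htρ.lt_of_ne' hρ⟩)
  exact ⟨mem_closedBall_zero_iff.2 hs.1.le, fun h ↦ hs.2.not_gt (mem_ball_zero_iff.1 h)⟩

section Schwarz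

variable {E : Type*} [NormedAddCommGroup E] [InnerProductSpace ℂ E] [ProperSpace E]
  {u : E → EReal} {f : ℂ → E} {m C : ℝ}

theorem le_const_mul_log_norm_div_of_lt {r : ℝ} (hr : 0 < r)
    (hf : AnalyticOnNhd ℂ f (closedBall 0 r))
    (hu : ∀ t ∈ closedBall 0 r, ∀ᶠ w in 𝓝 (f t), ViscosityPSHAt u w)
    (hle : ∀ t ∈ closedBall 0 r, u (f t) ≤ 0)
    (hpole : ∀ᶠ t in 𝓝[≠] 0, u (f t) ≤ ((m * Real.log ‖t‖ + C : ℝ) : EReal)) {m' : ℝ}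
    (hm : m' < m) {t : ℂ} (ht : t ∈ closedBall 0 r) (ht₀ : t ≠ 0) :
    u (f t) ≤ ((m' * Real.log (‖t‖ / r) : ℝ) : EReal) := by
  have hnear := hpole.and (eventually_const_mul_log_add_le hm C hr.ne')
  rw [eventually_nhdsWithin_iff] at hnear
  obtain ⟨ρ, hρ, hball⟩ := Metric.nhds_basis_closedBall.eventually_iff.1 hnear
  set K := closedBall (0 : ℂ) r \ ball 0 (min ρ ‖t‖)
  have hmin : 0 < min ρ ‖t‖ := lt_min hρ (norm_pos_iff.2 ht₀)
  have hK₀ (s : ℂ) (hs : s ∈ K) : s ≠ 0 := by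
    rintro rfl
    exact hs.2 (mem_ball_self hmin)
  have hH : HarmonicOnNhd (fun s ↦ m' * Real.log (‖s‖ / r)) K := fun s hs ↦ by
    have hlog : HarmonicAt (fun s : ℂ ↦ Real.log ‖s / r‖) s :=
      AnalyticAt.harmonicAt_log_norm (by fun_prop)
        (div_ne_zero (hK₀ s hs) (Complex.ofReal_ne_zero.2 hr.ne'))
    simp only [norm_div, Complex.norm_real, Real.norm_of_nonneg hr.le] at hlog
    exact hlog.const_smul
  refine le_of_le_on_frontier ((isCompact_closedBall 0 r).diff isOpen_ball)
    (hf.mono sdiff_subset) (fun s hs ↦ hu s hs.1) hH (fun s hs ↦ ?_) t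
    ⟨ht, fun h ↦ (mem_ball_zero_iff.1 h).not_ge (min_le_right _ _)⟩
  have hsK := ((isClosed_closedBall.sdiff isOpen_ball).frontier_subset hs)
  rcases frontier_closedBall_diff_ball_subset _ _ hs with hsr | hsρ
  · simpa [hsr, hr.ne'] using hle s hsK.1
  · obtain ⟨hus, hms⟩ := hball (mem_closedBall_zero_iff.2 (hsρ.trans_le (min_le_left _ _)))
      (hK₀ s hsK)
    exact hus.trans (EReal.coe_le_coe_iff.2 hms)

theorem le_const_mul_log_norm_div {R : ℝ} (hf : AnalyticOnNhd ℂ f (ball 0 R))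
    (hu : ∀ t ∈ ball 0 R, ∀ᶠ w in 𝓝 (f t), ViscosityPSHAt u w)
    (hle : ∀ t ∈ ball 0 R, u (f t) ≤ 0) (hm : 0 < m)
    (hpole : ∀ᶠ t in 𝓝[≠] 0, u (f t) ≤ ((m * Real.log ‖t‖ + C : ℝ) : EReal)) {t : ℂ}
    (ht : t ∈ ball 0 R) (ht₀ : t ≠ 0) :
    u (f t) ≤ ((m * Real.log (‖t‖ / R) : ℝ) : EReal) := by
  have htR := mem_ball_zero_iff.1 ht
  have hR : 0 < R := (norm_nonneg t).trans_lt htR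
  have hlim : Tendsto (fun r ↦ m * (r / R) * Real.log (‖t‖ / r)) (𝓝[<] R)
      (𝓝 (m * Real.log (‖t‖ / R))) := by
    have hcont : ContinuousAt (fun r ↦ m * (r / R) * Real.log (‖t‖ / r)) R := by
      have hdiv : ContinuousAt (fun r ↦ ‖t‖ / r) R := continuousAt_const.div continuousAt_id hR.ne'
      have hlog := hdiv.log (div_pos (norm_pos_iff.2 ht₀) hR).ne'
      fun_prop
    simpa [hR.ne'] using hcont.tendsto.mono_left nhdsWithin_le_nhds
  refine ge_of_tendsto ((continuous_coe_real_ereal.tendsto _).comp hlim) ?_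
  filter_upwards [Ioo_mem_nhdsLT htR] with r hr
  have hr₀ : 0 < r := (norm_nonneg t).trans_lt hr.1
  have hsub : closedBall (0 : ℂ) r ⊆ ball 0 R := closedBall_subset_ball hr.2
  exact le_const_mul_log_norm_div_of_lt hr₀ (hf.mono hsub) (fun s hs ↦ hu s (hsub hs))
    (fun s hs ↦ hle s (hsub hs)) hpole (mul_lt_of_lt_one_right hm ((div_lt_one hR).2 hr.2))
    (mem_closedBall_zero_iff.2 hr.1.le) ht₀

end Schwarz

/-! ### Gluing -/

/-- The function equal to `u` where `ρ ≤ s`, to `v` where `t ≤ ρ`, and to `u ⊔ v` in between; it is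
used to glue plurisubharmonic functions along the level sets of `ρ`. -/
def glueAlong {E : Type*} (ρ : E → ℝ) (s t : ℝ) (u v : E → EReal) (w : E) : EReal :=
  if ρ w ≤ s then u w else if t ≤ ρ w then v w else u w ⊔ v w

section Gluing

variable {E : Type*} {ρ : E → ℝ} {s t : ℝ} {u v : E → EReal}

theorem glueAlong_of_le {w : E} (hw : ρ w ≤ s) : glueAlong ρ s t u v w = u w := if_pos hw

theorem glueAlong_lt (hst : s < t) {y : EReal} {w : E} (hu : ρ w < t → u w < y)
    (hv : s < ρ w → v w < y) : glueAlong ρ s t u v w < y := by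
  unfold glueAlong
  split_ifs with hs ht
  · exact hu (hs.trans_lt hst)
  · exact hv (not_le.1 hs)
  · exact max_lt (hu (not_le.1 ht)) (hv (not_le.1 hs))

theorem viscosityPSHAt_glueAlong [NormedAddCommGroup E] [NormedSpace ℂ E] {a : E}
    (hρ : ContinuousAt ρ a) (hu : ViscosityPSHAt u a) (hv : ViscosityPSHAt v a) {s' t' : ℝ}
    (hss' : s < s') (hs't : s' ≤ t) (hst' : s ≤ t') (ht't : t' < t)
    (hvu : ∀ᶠ w in 𝓝 a, s < ρ w → ρ w < s' → v w ≤ u w)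
    (huv : ∀ᶠ w in 𝓝 a, t' < ρ w → ρ w < t → u w ≤ v w) :
    ViscosityPSHAt (glueAlong ρ s t u v) a := by
  rcases lt_or_ge (ρ a) s' with hs' | hs'
  · refine hu.congr ?_
    filter_upwards [hvu, hρ.eventually_lt_const hs'] with w hw hws'
    unfold glueAlong
    split_ifs with hs ht
    · rfl
    · exact absurd hws' (hs't.trans ht).not_gt
    · exact (max_eq_left (hw (not_le.1 hs) hws')).symm
  rcases lt_or_ge t' (ρ a) with ht' | ht'
  · refine hv.congr ?_
    filter_upwards [huv, hρ.eventually_const_lt ht'] with w hw hwt'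
    unfold glueAlong
    split_ifs with hs ht
    · exact absurd hwt' (hs.trans hst').not_gt
    · rfl
    · exact (max_eq_right (hw hwt' (not_le.1 ht))).symm
  · refine (hu.sup hv).congr ?_
    filter_upwards [hρ.eventually_const_lt (hss'.trans_le hs'),
      hρ.eventually_lt_const (ht'.trans_lt ht't)] with w hs ht
    exact ((if_neg hs.not_ge).trans (if_neg ht.not_ge)).symm

end Gluing

/-- A negative plurisubharmonic function on `D` which equals `log (c‖w - z‖)` near `z`. Its
existence bounds the Sibony, Azukawa and Kobayashi metrics of `D` at `z` from below by `c‖X‖`. -/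
structure IsLogBarrier {E : Type*} [NormedAddCommGroup E] [NormedSpace ℂ E] (D : Set E) (z : E)
    (c : ℝ) (U : E → EReal) : Prop where
  pos : 0 < c
  viscosityPSHAt : ∀ a ∈ D, ViscosityPSHAt U a
  lt_zero : ∀ a ∈ D, U a < 0
  eventuallyEq : U =ᶠ[𝓝 z] fun w ↦ elog (c * ‖w - z‖)

theorem exists_isLogBarrier_of_le {E : Type*} [NormedAddCommGroup E] [NormedSpace ℂ E] {D : Set E}
    (hD : IsOpen D) {ψ : E → EReal} (hψ : ∀ a ∈ D, ViscosityPSHAt ψ a) (hneg : ∀ a ∈ D, ψ a < 0)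
    {S : ℝ} (hS : 3 ≤ S) {z : E}
    (hnear : ∀ w ∈ D, ‖w - z‖ < 2 → ψ w ≤ ((-2 * Real.log S : ℝ) : EReal))
    (hfar : ∀ w ∈ D, S - 1 < ‖w - z‖ → ((-Real.log S : ℝ) : EReal) ≤ ψ w) :
    ∃ U, IsLogBarrier D z (S ^ 2)⁻¹ U := by
  have : 0 < S := by linarith
  have hlogS : Real.log (S ^ 2)⁻¹ = -2 * Real.log S := by
    rw [Real.log_inv, Real.log_pow, Nat.cast_two, neg_mul]
  have hle {w : E} (hw : ‖w - z‖ ≤ S) : (S ^ 2)⁻¹ * ‖w - z‖ ≤ S⁻¹ := by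
    calc (S ^ 2)⁻¹ * ‖w - z‖ ≤ (S ^ 2)⁻¹ * S := by gcongr
      _ = S⁻¹ := by field_simp
  refine ⟨glueAlong (fun w ↦ ‖w - z‖) 1 S (fun w ↦ elog ((S ^ 2)⁻¹ * ‖w - z‖)) ψ,
    by positivity, fun a ha ↦ ?_, fun a ha ↦ ?_, ?_⟩
  · have hlog : ViscosityPSHAt (fun w ↦ elog ((S ^ 2)⁻¹ * ‖w - z‖)) a := by
      have := viscosityPSHAt_elog_norm (g := fun w ↦ (((S ^ 2)⁻¹ : ℝ) : ℂ) • (w - z)) (a := a)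
        (by fun_prop)
      simpa only [norm_smul, Complex.norm_real, Real.norm_of_nonneg (inv_nonneg.2 (sq_nonneg S))]
        using this
    refine viscosityPSHAt_glueAlong (by fun_prop) hlog (hψ a ha) one_lt_two (by linarith)
      (t' := S - 1) (by linarith) (by linarith) ?_ ?_
    · filter_upwards [hD.mem_nhds ha] with w hw hw₁ hw₂
      refine (hnear w hw hw₂).trans ?_
      rw [← hlogS, ← elog_of_pos (by positivity)]
      exact elog_le_elog (le_mul_of_one_le_right (by positivity) hw₁.le)
    · filter_upwards [hD.mem_nhds ha] with w hw hw₁ hw₂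
      refine le_trans ?_ (hfar w hw hw₁)
      rw [← Real.log_inv, ← elog_of_pos (by positivity)]
      exact elog_le_elog (hle hw₂.le)
  · exact glueAlong_lt (by linarith) (fun h ↦ elog_lt_zero ((hle h.le).trans_lt
      (inv_lt_one_of_one_lt₀ (by linarith)))) fun _ ↦ hneg a ha
  · filter_upwards [closedBall_mem_nhds z one_pos] with w hw using
      glueAlong_of_le (mem_closedBall_iff_norm.1 hw)

namespace IsPshPeakFnAtInfty

variable {n : ℕ} {D : Set (Cn n)} {φ : Cn n → EReal}

theorem exists_neg_forall_le (hφ : IsPshPeakFnAtInfty D φ) (R : ℝ) :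
    ∃ m : ℝ, m < 0 ∧ ∀ w ∈ D, ‖w‖ ≤ R → φ w ≤ (m : EReal) := by
  obtain ⟨m, hm, hle⟩ := hφ.2.2 (closedBall 0 R)ᶜ
    (Bornology.isBounded_def.1 isBounded_closedBall)
  exact ⟨m, hm, fun w hw hwR ↦ hle w ⟨hw, not_not_intro (mem_closedBall_zero_iff.2 hwR)⟩⟩

theorem lt_zero (hφ : IsPshPeakFnAtInfty D φ) {w : Cn n} (hw : w ∈ D) : φ w < 0 := by
  obtain ⟨m, hm, hle⟩ := hφ.exists_neg_forall_le ‖w‖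
  exact (hle w hw le_rfl).trans_lt (EReal.coe_neg'.2 hm)

theorem exists_forall_norm_gt_le (hφ : IsPshPeakFnAtInfty D φ) {m : ℝ} (hm : m < 0) :
    ∃ R : ℝ, ∀ w ∈ D, R < ‖w‖ → (m : EReal) ≤ φ w := by
  have hev := eventually_inf_principal.1
    (hφ.2.1.eventually_const_le (u := (m : EReal)) (EReal.coe_neg'.2 hm))
  obtain ⟨R, -, hR⟩ := (hasBasis_cobounded_norm.eventually_iff).1 hev
  exact ⟨R, fun w hw hwR ↦ hR hwR.le hw⟩

theorem exists_isLogBarrier (hφ : IsPshPeakFnAtInfty D φ) (hD : IsOpen D) (r : ℝ) :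
    ∃ c > 0, ∀ z, ‖z‖ < r → ∃ U, IsLogBarrier D z c U := by
  obtain ⟨m, hm, hnear⟩ := hφ.exists_neg_forall_le (r + 2)
  obtain ⟨R, hfar⟩ := hφ.exists_forall_norm_gt_le (m := m / 2) (by linarith)
  set S := max 3 (R + 1 + r)
  have hS : 3 ≤ S := le_max_left _ _
  have hlogS : 0 < Real.log S := Real.log_pos (by linarith)
  set Λ := 2 * Real.log S / -m
  have hΛ : 0 < Λ := div_pos (by positivity) (neg_pos.2 hm)
  have hΛm : Λ * m = -2 * Real.log S := by
    have := hm.ne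
    simp only [Λ]
    field_simp
  have hΛ₀ : (0 : EReal) ≤ (Λ : EReal) := EReal.coe_nonneg.2 hΛ.le
  refine ⟨(S ^ 2)⁻¹, by positivity, fun z hz ↦ exists_isLogBarrier_of_le hD
    (ψ := fun w ↦ Λ * φ w) (fun a ha ↦ ?_) (fun a ha ↦ ?_) hS (fun w hw hwz ↦ ?_) fun w hw hwz ↦ ?_⟩
  · exact (hφ.1.viscosityPSHAt hD ha ((hφ.lt_zero ha).trans EReal.zero_lt_top)).const_mul hΛ
  · exact EReal.mul_neg_iff.2 (.inl ⟨EReal.coe_pos.2 hΛ, hφ.lt_zero ha⟩)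
  · rw [← hΛm, EReal.coe_mul]
    refine mul_le_mul_of_nonneg_left (hnear w hw ?_) hΛ₀
    linarith [norm_le_norm_add_norm_sub' w z]
  · rw [show -Real.log S = Λ * (m / 2) by linarith, EReal.coe_mul]
    refine mul_le_mul_of_nonneg_left (hfar w hw ?_) hΛ₀
    linarith [norm_sub_le w z, le_max_right 3 (R + 1 + r)]

end IsPshPeakFnAtInfty

/-! ### The Levi form at a minimum -/

section SecondOrder

variable {E : Type*} [NormedAddCommGroup E] [NormedSpace ℝ E] {v : E → ℝ} {z : E}

theorem tendsto_div_sq_iteratedFDeriv_two (hv : ContDiffAt ℝ 2 v z) (hvz : v z = 0)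
    (hv' : fderiv ℝ v z = 0) (Y : E) :
    Tendsto (fun t : ℝ ↦ v (z + t • Y) / t ^ 2) (𝓝[≠] 0)
      (𝓝 (iteratedFDeriv ℝ 2 v z ![Y, Y] / 2)) := by
  have hline (t : ℝ) : HasDerivAt (fun t : ℝ ↦ z + t • Y) Y t := by
    simpa using ((hasDerivAt_id t).smul_const Y).const_add z
  have hcont : Tendsto (fun t : ℝ ↦ z + t • Y) (𝓝 0) (𝓝 z) :=
    Continuous.tendsto' (by fun_prop) _ _ (by simp)
  have hderiv : ∀ᶠ t : ℝ in 𝓝 0, HasDerivAt (fun t ↦ v (z + t • Y)) (fderiv ℝ v (z + t • Y) Y) t :=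
    (hcont.eventually (hv.eventually (by simp))).mono fun t ht ↦
      (ht.differentiableAt two_ne_zero).hasFDerivAt.comp_hasDerivAt t (hline t)
  have hslope : Tendsto (fun t : ℝ ↦ fderiv ℝ v (z + t • Y) Y / (2 * t)) (𝓝[≠] 0)
      (𝓝 (iteratedFDeriv ℝ 2 v z ![Y, Y] / 2)) := by
    have hdiff : HasFDerivAt (fderiv ℝ v) (fderiv ℝ (fderiv ℝ v) z) z :=
      ((hv.fderiv_right le_rfl).differentiableAt one_ne_zero).hasFDerivAt
    have happly := (ContinuousLinearMap.apply ℝ ℝ Y).hasFDerivAt.comp z hdiff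
    have hslope := (happly.hasLineDerivAt Y).tendsto_slope_zero
    simp only [Function.comp_apply, ContinuousLinearMap.comp_apply, ContinuousLinearMap.apply_apply,
      hv', zero_apply, sub_zero, smul_eq_mul] at hslope
    rw [iteratedFDeriv_two_apply]
    refine (hslope.div_const 2).congr fun t ↦ ?_
    field_simp
  refine HasDerivAt.lhopital_zero_nhdsNE (hderiv.filter_mono nhdsWithin_le_nhds)
    (.of_forall fun t ↦ by simpa using hasDerivAt_pow 2 t)
    (eventually_mem_nhdsWithin.mono fun t ht ↦ mul_ne_zero two_ne_zero ht) ?_ ?_ hslope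
  · have := (hv.continuousAt.tendsto.comp hcont).mono_left (nhdsWithin_le_nhds (s := {0}ᶜ))
    rwa [hvz] at this
  · exact (Continuous.tendsto' (by fun_prop) _ _ (by simp)).mono_left nhdsWithin_le_nhds

theorem exists_eventually_le_mul_norm_sub_sq (hv : ContDiffAt ℝ 2 v z) (hvz : v z = 0)
    (hv' : fderiv ℝ v z = 0) : ∃ C > 0, ∀ᶠ w in 𝓝 z, v w ≤ C * ‖w - z‖ ^ 2 := by
  obtain ⟨C, hC, hbound⟩ :=
    ((hv.fderiv_right le_rfl).differentiableAt one_ne_zero).isBigO_sub.exists_pos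
  refine ⟨C, hC, ?_⟩
  simp only [hv', sub_zero] at hbound
  obtain ⟨ε, hε, hball⟩ := Metric.nhds_basis_closedBall.eventually_iff.1
    (hbound.bound.and (hv.eventually (by simp)))
  filter_upwards [closedBall_mem_nhds z hε] with w hw
  have hsub := closedBall_subset_closedBall (x := z) (mem_closedBall_iff_norm.1 hw)
  have hvw := (convex_closedBall z ‖w - z‖).norm_image_sub_le_of_norm_fderiv_le
    (fun x hx ↦ (hball (hsub hx)).2.differentiableAt two_ne_zero)
    (fun x hx ↦ (hball (hsub hx)).1.trans
      (mul_le_mul_of_nonneg_left (mem_closedBall_iff_norm.1 hx) hC.le))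
    (mem_closedBall_self (norm_nonneg _)) (mem_closedBall_iff_norm.2 le_rfl)
  rw [hvz, sub_zero, mul_assoc, ← sq] at hvw
  exact (Real.le_norm_self _).trans hvw

end SecondOrder

section LeviForm

variable {n : ℕ} {v : Cn n → ℝ} {z X : Cn n} {K : ℝ}

theorem tendsto_leviForm (hv : ContDiffAt ℝ 2 v z) (hvz : v z = 0) (hmin : IsLocalMin v z) :
    Tendsto (fun t : ℝ ↦
      (v (z + (t : ℂ) • X) + v (z + (t * Complex.I : ℂ) • X)) / (2 * t ^ 2)) (𝓝[≠] 0)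
      (𝓝 (leviForm v z X)) := by
  have hlim := ((tendsto_div_sq_iteratedFDeriv_two hv hvz hmin.fderiv_eq_zero X).add
    (tendsto_div_sq_iteratedFDeriv_two hv hvz hmin.fderiv_eq_zero (Complex.I • X))).div_const 2
  convert hlim using 2 with t
  · rw [mul_smul, Complex.coe_smul, Complex.coe_smul, ← add_div, div_div, mul_comm (t ^ 2)]
  · rw [leviForm]
    ring

theorem tendsto_ofReal_mul_nhds_zero (a : ℂ) :
    Tendsto (fun t : ℝ ↦ (t * a : ℂ)) (𝓝[≠] 0) (𝓝 0) :=
  (Continuous.tendsto' (by fun_prop) _ _ (by simp)).mono_left nhdsWithin_le_nhds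

theorem leviForm_le (hv : ContDiffAt ℝ 2 v z) (hvz : v z = 0) (hmin : IsLocalMin v z)
    (hle : ∀ᶠ l : ℂ in 𝓝 0, v (z + l • X) ≤ K * ‖l‖ ^ 2) : leviForm v z X ≤ K := by
  refine le_of_tendsto (tendsto_leviForm hv hvz hmin) ?_
  filter_upwards [(tendsto_ofReal_mul_nhds_zero 1).eventually hle,
    (tendsto_ofReal_mul_nhds_zero Complex.I).eventually hle, self_mem_nhdsWithin] with t h₁ hI ht
  have : 0 < t ^ 2 := sq_pos_of_ne_zero ht
  simp only [mul_one, norm_mul, Complex.norm_real, Complex.norm_I, Real.norm_eq_abs, sq_abs]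
    at h₁ hI
  rw [div_le_iff₀ (by positivity)]
  linarith

theorem leviForm_eq (hv : ContDiffAt ℝ 2 v z) (hvz : v z = 0) (hmin : IsLocalMin v z)
    (heq : ∀ᶠ l : ℂ in 𝓝 0, v (z + l • X) = K * ‖l‖ ^ 2) : leviForm v z X = K := by
  refine tendsto_nhds_unique (tendsto_leviForm hv hvz hmin) (tendsto_const_nhds.congr' ?_)
  filter_upwards [(tendsto_ofReal_mul_nhds_zero 1).eventually heq,
    (tendsto_ofReal_mul_nhds_zero Complex.I).eventually heq, self_mem_nhdsWithin] with t h₁ hI ht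
  have : t ≠ 0 := ht
  simp only [mul_one, norm_mul, Complex.norm_real, Complex.norm_I, Real.norm_eq_abs, sq_abs]
    at h₁ hI
  rw [h₁, hI]
  field_simp
  ring

end LeviForm

/-! ### Bounds for the invariant metrics -/

section MetricBounds

theorem exists_ball_add_smul_mem {E : Type*} [NormedAddCommGroup E] [NormedSpace ℂ E] {D : Set E}
    (hD : IsOpen D) {z : E} (hz : z ∈ D) (X : E) :
    ∃ κ > 0, ∀ l ∈ ball (0 : ℂ) κ, z + l • X ∈ D :=
  Metric.nhds_basis_ball.eventually_iff.1
    ((tendsto_add_smul_nhds z X).eventually (hD.mem_nhds hz))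

variable {n : ℕ} {D : Set (Cn n)} {z X : Cn n} {κ c : ℝ} {U : Cn n → EReal}

theorem apply_add_smul_le_mul_norm_sq (hD : IsOpen D) (hX : ∀ l ∈ ball (0 : ℂ) κ, z + l • X ∈ D)
    {v : Cn n → ℝ} (hv : ContDiffAt ℝ 2 v z) (hvz : v z = 0) (hmin : IsLocalMin v z)
    (hlt : ∀ w ∈ D, v w < 1) (hpsh : PSHOn (fun w ↦ elog (v w)) D) {l : ℂ}
    (hl : l ∈ ball (0 : ℂ) κ) : v (z + l • X) ≤ (κ ^ 2)⁻¹ * ‖l‖ ^ 2 := by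
  rcases eq_or_ne l 0 with rfl | hl₀
  · simp [hvz]
  have hκ : 0 < κ := (norm_nonneg l).trans_lt (mem_ball_zero_iff.1 hl)
  have : 0 < ‖l‖ := norm_pos_iff.2 hl₀
  have hlogsq (x : ℝ) : 2 * Real.log x = Real.log (x ^ 2) := by simp [Real.log_pow]
  obtain ⟨C, hC, hle⟩ := exists_eventually_le_mul_norm_sub_sq hv hvz hmin.fderiv_eq_zero
  have hschwarz := le_const_mul_log_norm_div (f := fun l : ℂ ↦ z + l • X) (m := 2)
    (C := Real.log (C * ‖X‖ ^ 2 + 1)) (u := fun w ↦ elog (v w)) (R := κ) (fun t _ ↦ by fun_prop)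
    (fun t ht ↦ (hD.eventually_mem (hX t ht)).mono fun w hw ↦
      hpsh.viscosityPSHAt hD hw (elog_lt_top _))
    (fun t ht ↦ (elog_lt_zero (hlt _ (hX t ht))).le) two_pos ?_ hl hl₀
  · rw [hlogsq, elog_le_log_iff (by positivity), div_pow] at hschwarz
    rwa [inv_mul_eq_div]
  · filter_upwards [((tendsto_add_smul_nhds z X).eventually hle).filter_mono nhdsWithin_le_nhds,
      self_mem_nhdsWithin] with t ht ht₀
    have ht' : 0 < ‖t‖ := norm_pos_iff.2 ht₀
    rw [hlogsq, ← Real.log_mul (by positivity) (by positivity), elog_le_log_iff (by positivity)]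
    rw [add_sub_cancel_left, norm_smul] at ht
    linarith [show 0 ≤ ‖t‖ ^ 2 by positivity]

theorem bddAbove_sqrt_leviForm (hD : IsOpen D) (hz : z ∈ D) (X : Cn n) :
    BddAbove {s : ℝ | ∃ v : Cn n → ℝ, (∀ w ∈ D, 0 ≤ v w ∧ v w < 1) ∧ v z = 0 ∧
      PSHOn (fun w ↦ elog (v w)) D ∧ (∃ W ∈ 𝓝 z, ContDiffOn ℝ 2 v W) ∧
      s = √(leviForm v z X)} := by
  obtain ⟨κ, hκ, hX⟩ := exists_ball_add_smul_mem hD hz X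
  refine ⟨√(κ ^ 2)⁻¹, ?_⟩
  rintro _ ⟨v, hv, hvz, hpsh, ⟨W, hW, hvW⟩, rfl⟩
  have hv₂ := hvW.contDiffAt hW
  have hmin : IsLocalMin v z := (hD.eventually_mem hz).mono fun w hw ↦ hvz.trans_le (hv w hw).1
  refine Real.sqrt_le_sqrt (leviForm_le hv₂ hvz hmin ?_)
  filter_upwards [ball_mem_nhds 0 hκ] with l hl using
    apply_add_smul_le_mul_norm_sq hD hX hv₂ hvz hmin (fun w hw ↦ (hv w hw).2) hpsh hl

theorem greenFn_add_smul_le (hD : IsOpen D) (hX : ∀ l ∈ ball (0 : ℂ) κ, z + l • X ∈ D)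
    (hX₀ : X ≠ 0) {l : ℂ} (hl : l ∈ ball (0 : ℂ) κ) (hl₀ : l ≠ 0) :
    greenFn D z (z + l • X) ≤ ((Real.log (‖l‖ / κ) : ℝ) : EReal) := by
  have hz : z ∈ D := by
    simpa using hX 0 (mem_ball_self ((norm_nonneg l).trans_lt (mem_ball_zero_iff.1 hl)))
  refine sSup_le ?_
  rintro _ ⟨u, hu, hneg, ⟨C, hC⟩, rfl⟩
  rw [hD.nhdsWithin_eq hz] at hC
  have hschwarz := le_const_mul_log_norm_div (f := fun l : ℂ ↦ z + l • X) (m := 1)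
    (C := Real.log ‖X‖ + C) (u := u) (R := κ) (fun t _ ↦ by fun_prop)
    (fun t ht ↦ (hD.eventually_mem (hX t ht)).mono fun w hw ↦
      hu.viscosityPSHAt hD hw ((hneg w hw).trans EReal.zero_lt_top))
    (fun t ht ↦ (hneg _ (hX t ht)).le) one_pos ?_ hl hl₀
  · rwa [one_mul] at hschwarz
  · filter_upwards [((tendsto_add_smul_nhds z X).eventually hC).filter_mono nhdsWithin_le_nhds,
      self_mem_nhdsWithin] with t ht ht₀
    rwa [add_sub_cancel_left, norm_smul, Real.log_mul (norm_ne_zero_iff.2 ht₀)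
      (norm_ne_zero_iff.2 hX₀), add_assoc, ← one_mul (Real.log ‖t‖)] at ht

theorem azukawa_nonneg (D : Set (Cn n)) (z X : Cn n) : 0 ≤ azukawa D z X := by
  rw [azukawa, limsup_eq]
  refine Real.sInf_nonneg fun a ha ↦ ?_
  obtain ⟨l, hl⟩ := (show ∀ᶠ l : ℂ in 𝓝[≠] 0, _ from ha).exists
  exact (div_nonneg (erexp_nonneg _) (norm_nonneg l)).trans hl

namespace IsLogBarrier

theorem pshOn (hU : IsLogBarrier D z c U) (hD : IsOpen D) : PSHOn U D :=
  pshOn_of_viscosityPSHAt hD hU.viscosityPSHAt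

theorem eventually_le_log_add (hU : IsLogBarrier D z c U) :
    ∀ᶠ w in 𝓝 z, U w ≤ ((Real.log ‖w - z‖ + Real.log c : ℝ) : EReal) := by
  have hc := hU.pos
  filter_upwards [hU.eventuallyEq] with w hw
  rw [hw]
  rcases (norm_nonneg (w - z)).eq_or_lt with h₀ | hpos
  · rw [← h₀, mul_zero, elog, if_pos le_rfl]
    exact bot_le
  · rw [← Real.log_mul hpos.ne' hc.ne', elog_le_log_iff (by positivity), mul_comm]

theorem le_greenFn (hU : IsLogBarrier D z c U) (hD : IsOpen D) (w : Cn n) :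
    U w ≤ greenFn D z w :=
  le_sSup ⟨U, hU.pshOn hD, hU.lt_zero, ⟨Real.log c,
    (hU.eventually_le_log_add).filter_mono nhdsWithin_le_nhds⟩, rfl⟩

theorem erexp_two_mul_eventuallyEq (hU : IsLogBarrier D z c U) :
    (fun w ↦ erexp ((2 : ℝ) * U w)) =ᶠ[𝓝 z] fun w ↦ c ^ 2 * ‖w - z‖ ^ 2 := by
  have hc := hU.pos
  filter_upwards [hU.eventuallyEq] with w hw
  rw [hw, erexp_coe_mul, erexp_elog (by positivity), Real.rpow_two, mul_pow]

theorem const_mul_norm_le_sibony (hU : IsLogBarrier D z c U) (hD : IsOpen D) (hz : z ∈ D)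
    (X : Cn n) : c * ‖X‖ ≤ sibony D z X := by
  have hc := hU.pos
  set v : Cn n → ℝ := fun w ↦ erexp ((2 : ℝ) * U w)
  have hveq : v =ᶠ[𝓝 z] fun w ↦ c ^ 2 * ‖w - z‖ ^ 2 := hU.erexp_two_mul_eventuallyEq
  have hvz : v z = 0 := by simp [hveq.self_of_nhds]
  have hmin : IsLocalMin v z := .of_forall fun w ↦ hvz.trans_le (erexp_nonneg _)
  have hsmooth : ContDiff ℝ 2 fun w : Cn n ↦ c ^ 2 * ‖w - z‖ ^ 2 :=
    contDiff_const.mul ((contDiff_norm_sq ℂ).comp (contDiff_id.sub contDiff_const))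
  have hvisc (w : Cn n) (hw : w ∈ D) : ViscosityPSHAt (fun w ↦ ((2 : ℝ) : EReal) * U w) w :=
    (hU.viscosityPSHAt w hw).const_mul two_pos
  have hpsh : PSHOn (fun w ↦ elog (v w)) D := pshOn_of_viscosityPSHAt hD fun w hw ↦
    (hvisc w hw).congr ((hD.eventually_mem hw).mono fun x hx ↦
      (elog_erexp (hvisc x hx).lt_top).symm)
  have hlt (w : Cn n) (hw : w ∈ D) : v w < 1 :=
    erexp_lt_one (EReal.mul_neg_iff.2 (.inl ⟨EReal.coe_pos.2 two_pos, hU.lt_zero w hw⟩))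
  have hlevi : leviForm v z X = (c * ‖X‖) ^ 2 := by
    refine leviForm_eq (hsmooth.contDiffAt.congr_of_eventuallyEq hveq) hvz hmin ?_
    filter_upwards [(tendsto_add_smul_nhds z X).eventually hveq] with l hl
    rw [hl, add_sub_cancel_left, norm_smul]
    ring
  exact le_csSup (bddAbove_sqrt_leviForm hD hz X) ⟨v, fun w hw ↦ ⟨erexp_nonneg _, hlt w hw⟩, hvz,
    hpsh, ⟨_, hveq, hsmooth.contDiffOn.congr fun w hw ↦ hw⟩, by
      rw [hlevi, Real.sqrt_sq (by positivity)]⟩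

theorem const_mul_norm_le_azukawa (hU : IsLogBarrier D z c U) (hD : IsOpen D) (hz : z ∈ D)
    (X : Cn n) : c * ‖X‖ ≤ azukawa D z X := by
  have hc := hU.pos
  rcases eq_or_ne X 0 with rfl | hX₀
  · simpa using azukawa_nonneg D z 0
  obtain ⟨κ, hκ, hX⟩ := exists_ball_add_smul_mem hD hz X
  have hgreen : ∀ᶠ l : ℂ in 𝓝[≠] 0,
      greenFn D z (z + l • X) ≤ ((Real.log (‖l‖ / κ) : ℝ) : EReal) := by
    filter_upwards [mem_nhdsWithin_of_mem_nhds (ball_mem_nhds 0 hκ), self_mem_nhdsWithin]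
      with l hl hl₀ using greenFn_add_smul_le hD hX hX₀ hl hl₀
  refine le_limsup_of_frequently_le (Eventually.frequently ?_) ⟨κ⁻¹, ?_⟩
  · filter_upwards [hgreen, self_mem_nhdsWithin,
      ((tendsto_add_smul_nhds z X).eventually hU.eventuallyEq).filter_mono nhdsWithin_le_nhds]
      with l hl hl₀ hUl
    rw [le_div_iff₀ (norm_pos_iff.2 hl₀)]
    calc c * ‖X‖ * ‖l‖ = erexp (U (z + l • X)) := by
          rw [hUl, erexp_elog (by positivity), add_sub_cancel_left, norm_smul]
          ring
      _ ≤ erexp (greenFn D z (z + l • X)) :=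
          erexp_le_erexp (hU.le_greenFn hD _) (hl.trans_lt (EReal.coe_lt_top _))
  · rw [eventually_map]
    filter_upwards [hgreen, self_mem_nhdsWithin] with l hl hl₀
    have hl' : 0 < ‖l‖ := norm_pos_iff.2 hl₀
    have hle := erexp_le_erexp hl (EReal.coe_lt_top _)
    rw [erexp_coe, Real.exp_log (by positivity)] at hle
    rwa [div_le_iff₀ hl', inv_mul_eq_div]

theorem const_mul_norm_deriv_le_one (hU : IsLogBarrier D z c U) (hD : IsOpen D)
    {f : ℂ → Cn n} (hf : DifferentiableOn ℂ f (ball 0 1)) (hfD : MapsTo f (ball 0 1) D)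
    (hfz : f 0 = z) : c * ‖deriv f 0‖ ≤ 1 := by
  have hc := hU.pos
  have hf₀ : DifferentiableAt ℂ f 0 := hf.differentiableAt (ball_mem_nhds 0 one_pos)
  have hUf : ∀ᶠ t in 𝓝 0, U (f t) = elog (c * ‖f t - z‖) :=
    hf₀.continuousAt.eventually (by rw [hfz]; exact hU.eventuallyEq)
  obtain ⟨K, hK, hbound⟩ := hf₀.isBigO_sub.exists_pos
  simp only [hfz, sub_zero] at hbound
  have hpole : ∀ᶠ t in 𝓝[≠] 0,
      U (f t) ≤ ((1 * Real.log ‖t‖ + Real.log (c * K) : ℝ) : EReal) := by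
    filter_upwards [(hUf.and hbound.bound).filter_mono nhdsWithin_le_nhds, self_mem_nhdsWithin]
      with t ⟨ht, hKt⟩ ht₀
    have ht' : 0 < ‖t‖ := norm_pos_iff.2 ht₀
    rw [ht, one_mul, ← Real.log_mul ht'.ne' (by positivity), elog_le_log_iff (by positivity)]
    linarith [mul_le_mul_of_nonneg_left hKt hc.le]
  have hlip : ∀ᶠ t in 𝓝 0, ‖f t - f 0‖ ≤ c⁻¹ * ‖t - 0‖ := by
    filter_upwards [hUf, ball_mem_nhds 0 one_pos] with t ht htb
    rcases eq_or_ne t 0 with rfl | ht₀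
    · simp
    have hschwarz := le_const_mul_log_norm_div (hf.analyticOnNhd isOpen_ball)
      (fun s hs ↦ (hD.eventually_mem (hfD hs)).mono hU.viscosityPSHAt)
      (fun s hs ↦ (hU.lt_zero _ (hfD hs)).le) one_pos hpole htb ht₀
    rw [ht, one_mul, div_one, elog_le_log_iff (norm_pos_iff.2 ht₀)] at hschwarz
    rwa [hfz, sub_zero, ← div_eq_inv_mul, le_div_iff₀' hc]
  exact (le_inv_mul_iff₀ hc).1 ((hf₀.hasDerivAt.le_of_lip' (by positivity) hlip).trans_eq
    (mul_one _).symm)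

theorem const_mul_norm_le_kobayashi (hU : IsLogBarrier D z c U) (hD : IsOpen D) (hz : z ∈ D)
    (X : Cn n) : c * ‖X‖ ≤ kobayashi D z X := by
  refine le_csInf ?_ ?_
  · obtain ⟨κ, hκ, hX⟩ := exists_ball_add_smul_mem hD hz X
    have hderiv : HasDerivAt (fun t : ℂ ↦ z + (κ * t) • X) ((κ : ℂ) • X) 0 := by
      simpa using (((hasDerivAt_id (0 : ℂ)).const_mul (κ : ℂ)).smul_const X).const_add z
    refine ⟨_, (κ : ℂ)⁻¹, rfl, fun t ↦ z + (κ * t) • X, by fun_prop, fun t ht ↦ hX _ ?_, by simp,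
      ?_⟩
    · rw [mem_ball_zero_iff, norm_mul, Complex.norm_real, Real.norm_of_nonneg hκ.le]
      exact mul_lt_of_lt_one_right hκ (mem_ball_zero_iff.1 ht)
    · rw [hderiv.deriv, inv_smul_smul₀ (Complex.ofReal_ne_zero.2 hκ.ne')]
  · rintro _ ⟨α, rfl, f, hf, hfD, hfz, rfl⟩
    calc c * ‖α • deriv f 0‖ = ‖α‖ * (c * ‖deriv f 0‖) := by rw [norm_smul, mul_left_comm]
      _ ≤ ‖α‖ := mul_le_of_le_one_right (norm_nonneg α)
          (hU.const_mul_norm_deriv_le_one hD hf hfD hfz)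

end IsLogBarrier

end MetricBounds

theorem metrics_lower_bound_at_infty_peak_general {n : ℕ} {D : Set (Cn n)} (hD : IsOpen D)
    {φ : Cn n → EReal} (hφ : IsPshPeakFnAtInfty D φ) (r : ℝ) :
    ∃ c : ℝ, 0 < c ∧ ∀ z ∈ D, ‖z‖ < r → ∀ X : Cn n,
      c * ‖X‖ ≤ sibony D z X ∧ c * ‖X‖ ≤ azukawa D z X ∧ c * ‖X‖ ≤ kobayashi D z X := by
  obtain ⟨c, hc, hbarrier⟩ := hφ.exists_isLogBarrier hD r
  refine ⟨c, hc, fun z hz hzr X ↦ ?_⟩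
  obtain ⟨U, hU⟩ := hbarrier z hzr
  exact ⟨hU.const_mul_norm_le_sibony hD hz X, hU.const_mul_norm_le_azukawa hD hz X,
    hU.const_mul_norm_le_kobayashi hD hz X⟩

/-- If `∞` is a psh peak point of an unbounded domain `D`, then every
bounded subset of `D` is uniformly hyperbolic for the Sibony (hence Azukawa and
Kobayashi) metric. -/
theorem metrics_lower_bound_at_infty_peak {n : ℕ} (D : Set (Cn n)) (hD : IsOpen D)
    (hDconn : IsConnected D) (hDunb : ¬ Bornology.IsBounded D)
    (hφ : ∃ φ : Cn n → EReal, IsPshPeakFnAtInfty D φ) :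
    ∀ r : ℝ, 0 < r → ∃ c : ℝ, 0 < c ∧ ∀ z ∈ D, ‖z‖ < r → ∀ X : Cn n,
      c * ‖X‖ ≤ sibony D z X ∧ c * ‖X‖ ≤ azukawa D z X ∧ c * ‖X‖ ≤ kobayashi D z X := by
  obtain ⟨φ, hφ⟩ := hφ
  exact fun r _ ↦ metrics_lower_bound_at_infty_peak_general hD hφ r
end
end
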